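/- arXiv:1310.7767 — 2 statements merged into one kernel-verified Lean document; each statement's English description precedes it below -/
import Mathlib

section
/- The set of eigenvalues of the imaginary cubic oscillator is infinite. Moreover, there exist N ∈ ℕ and a sequence (λ_n)_{n ≥ N} of eigenvalues such that λ_n − ((2n+1)·π/(√3·K))^{6/5} → 0 as n → ∞, where K = 2·∫₀¹ √(1 − t³) dt. -/
open MeasureTheory Filter

/-- `lam` is an eigenvalue of the imaginary cubic oscillator `H = p² + i x³`. -/
def IsEigenvalueICO (lam : ℂ) : Prop :=
  ∃ ψ : ℝ → ℂ, ψ ≠ 0 ∧ ContDiff ℝ 2 ψ ∧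
    Integrable (fun x : ℝ => ‖ψ x‖ ^ 2) ∧
    ∀ x : ℝ, -(deriv (deriv ψ) x) + Complex.I * (x : ℂ) ^ 3 * ψ x = lam * ψ x

/-- The turning-point constant `K = 2∫₀¹ √(1-t³) dt`. -/
noncomputable def Kconst : ℝ := 2 * ∫ t in (0:ℝ)..1, Real.sqrt (1 - t ^ 3)

/-!
With `ψ x = y (i x)` the eigenvalue equation becomes `y'' = (s³ + λ) y`, whose solutions are entire.
Rotating `s` by a fifth root of unity preserves the family of equations `y'' = (s³ + μ) y`, each of
which has a solution asymptotic to `s ^ (-3/4) exp (-(2/5) s ^ (5/2))` on the positive real axis and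
in the sector around it. Rotations of such solutions are recessive in the directions
`exp (±2πi / 5)`; if one solution is recessive in both, then it is square integrable on the
imaginary axis, so `λ` is an eigenvalue. For `λ ≥ 0` the two recessive solutions are reflections of
each other in the real axis, and they are proportional as soon as one real number `q λ` vanishes.

A Liouville–Green estimate that is uniform in `λ` down to `s = 0` shows that, up to a positive
factor, `q λ = -cos (√3 / 2 * K * λ ^ (5/6)) + O(λ ^ (-1/4))`. In the phase variable
`θ = √3 / 2 * K * λ ^ (5/6)` the function `q` therefore changes sign within `θ ^ (-1/4)` of each
large zero of the cosine, which moves the energy `λ` only by `O(θ ^ (-1/20))`.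
-/

namespace CubicOscillator

open Complex Topology ComplexConjugate

/-! ### Entire solutions of `y'' = (s³ + μ) y` -/

/-- `y` is an entire solution of the rotated eigenvalue equation `y'' = (s³ + μ) y`. -/
structure IsSolution (μ : ℂ) (y : ℂ → ℂ) : Prop where
  differentiable : Differentiable ℂ y
  hasDerivAt_deriv (s : ℂ) : HasDerivAt (deriv y) ((s ^ 3 + μ) * y s) s

namespace IsSolution

variable {μ : ℂ} {y z : ℂ → ℂ}

theorem of_hasDerivAt {y' : ℂ → ℂ} (h : ∀ s, HasDerivAt y (y' s) s)
    (h' : ∀ s, HasDerivAt y' ((s ^ 3 + μ) * y s) s) : IsSolution μ y := by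
  obtain rfl : deriv y = y' := deriv_eq h
  exact ⟨fun s => (h s).differentiableAt, h'⟩

theorem hasDerivAt (hy : IsSolution μ y) (s : ℂ) : HasDerivAt y (deriv y s) s :=
  (hy.differentiable s).hasDerivAt

theorem linearCombination (hy : IsSolution μ y) (hz : IsSolution μ z) (a b : ℂ) :
    IsSolution μ fun s => a * y s + b * z s :=
  of_hasDerivAt (fun s => ((hy.hasDerivAt s).const_mul a).add ((hz.hasDerivAt s).const_mul b))
    fun s => (((hy.hasDerivAt_deriv s).const_mul a).add
      ((hz.hasDerivAt_deriv s).const_mul b)).congr_deriv (by ring)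

theorem deriv_linearCombination (hy : IsSolution μ y) (hz : IsSolution μ z) (a b s : ℂ) :
    deriv (fun s => a * y s + b * z s) s = a * deriv y s + b * deriv z s :=
  (((hy.hasDerivAt s).const_mul a).add ((hz.hasDerivAt s).const_mul b)).deriv

theorem wronskian_eq (hy : IsSolution μ y) (hz : IsSolution μ z) (s t : ℂ) :
    y s * deriv z s - deriv y s * z s = y t * deriv z t - deriv y t * z t := by
  have h (x : ℂ) : HasDerivAt (fun s => y s * deriv z s - deriv y s * z s) 0 x :=
    (((hy.hasDerivAt x).mul (hz.hasDerivAt_deriv x)).sub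
      ((hy.hasDerivAt_deriv x).mul (hz.hasDerivAt x))).congr_deriv (by ring)
  exact is_const_of_deriv_eq_zero (fun x => (h x).differentiableAt) (fun x => (h x).deriv) s t

end IsSolution

/-- A family of coefficient sequences is uniformly entire on `S` if the associated power series
converge on all of `ℂ`, with Cauchy estimates uniform in the parameter `i ∈ S`. -/
def UniformlyEntire {ι : Type*} (S : Set ι) (c : ι → ℕ → ℂ) : Prop :=
  ∀ ρ : ℝ, 0 ≤ ρ → ∃ M, ∀ i ∈ S, ∀ n, ‖c i n‖ * ρ ^ n ≤ M

/-- The coefficients of the derivative of `∑ cₙ sⁿ`. -/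
def derivCoeff (c : ℕ → ℂ) (n : ℕ) : ℂ := (n + 1) * c (n + 1)

namespace UniformlyEntire

variable {ι : Type*} {S : Set ι} {c : ι → ℕ → ℂ}

theorem mono {T : Set ι} (hc : UniformlyEntire S c) (hT : T ⊆ S) : UniformlyEntire T c :=
  fun ρ hρ => (hc ρ hρ).imp fun _ hM i hi => hM i (hT hi)

theorem exists_norm_le (hc : UniformlyEntire S c) {r : ℝ} (hr : 0 ≤ r) :
    ∃ M, ∀ i ∈ S, ∀ s : ℂ, ‖s‖ ≤ r → ∀ n, ‖c i n * s ^ n‖ ≤ M * (1 / 2) ^ n := by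
  obtain ⟨M, hM⟩ := hc (2 * r) (by positivity)
  refine ⟨M, fun i hi s hs n => ?_⟩
  calc ‖c i n * s ^ n‖ = ‖c i n‖ * ‖s‖ ^ n := by rw [norm_mul, norm_pow]
    _ ≤ ‖c i n‖ * r ^ n := by gcongr
    _ = ‖c i n‖ * (2 * r) ^ n * (1 / 2) ^ n := by rw [mul_assoc, ← mul_pow]; ring_nf
    _ ≤ M * (1 / 2) ^ n := by gcongr; exact hM i hi n

theorem derivCoeff (hc : UniformlyEntire S c) :
    UniformlyEntire S fun i => derivCoeff (c i) := by
  intro ρ hρ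
  obtain ⟨M, hM⟩ := hc (2 * (ρ + 1)) (by positivity)
  refine ⟨M, fun i hi n => ?_⟩
  have hn : (n + 1 : ℝ) ≤ 2 ^ (n + 1) := by exact_mod_cast (Nat.lt_two_pow_self (n := n + 1)).le
  have hpow : ρ ^ n ≤ (ρ + 1) ^ (n + 1) := calc
    ρ ^ n ≤ (ρ + 1) ^ n := by gcongr; linarith
    _ ≤ (ρ + 1) ^ (n + 1) := pow_le_pow_right₀ (by linarith) n.le_succ
  calc ‖CubicOscillator.derivCoeff (c i) n‖ * ρ ^ n
      = (n + 1) * ‖c i (n + 1)‖ * ρ ^ n := by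
        rw [CubicOscillator.derivCoeff, norm_mul]
        norm_cast
    _ ≤ 2 ^ (n + 1) * ‖c i (n + 1)‖ * (ρ + 1) ^ (n + 1) := by gcongr
    _ = ‖c i (n + 1)‖ * (2 * (ρ + 1)) ^ (n + 1) := by rw [mul_pow]; ring
    _ ≤ M := hM i hi (n + 1)

theorem summable (hc : UniformlyEntire S c) {i : ι} (hi : i ∈ S) (s : ℂ) :
    Summable fun n => c i n * s ^ n := by
  obtain ⟨M, hM⟩ := hc.exists_norm_le (norm_nonneg s)
  exact (summable_geometric_two.mul_left M).of_norm_bounded (hM i hi s le_rfl)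

theorem hasDerivAt_tsum (hc : UniformlyEntire S c) {i : ι} (hi : i ∈ S) (s : ℂ) :
    HasDerivAt (fun s => ∑' n, c i n * s ^ n)
      (∑' n, CubicOscillator.derivCoeff (c i) n * s ^ n) s := by
  obtain ⟨M, hM⟩ := hc.exists_norm_le (r := ‖s‖ + 1) (by positivity)
  have hs : s ∈ Metric.ball (0 : ℂ) (‖s‖ + 1) := by simp
  have hbound : ∀ n, ∀ w ∈ Metric.ball (0 : ℂ) (‖s‖ + 1), ‖c i n * w ^ n‖ ≤ M * (1 / 2) ^ n :=
    fun n w hw => hM i hi w (mem_ball_zero_iff.1 hw).le n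
  have hterm : ∀ n : ℕ, DifferentiableOn ℂ (fun w => c i n * w ^ n)
      (Metric.ball (0 : ℂ) (‖s‖ + 1)) := fun n => by fun_prop
  have hsum : Summable fun n : ℕ => M * (1 / 2) ^ n := summable_geometric_two.mul_left M
  have hderiv := (differentiableOn_tsum_of_summable_norm hsum hterm Metric.isOpen_ball
    hbound).hasDerivAt (Metric.isOpen_ball.mem_nhds hs)
  have hseries := hasSum_deriv_of_summable_norm hsum hterm Metric.isOpen_ball hbound hs
  refine hderiv.congr_deriv ?_
  rw [← hseries.tsum_eq, hseries.summable.tsum_eq_zero_add]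
  simp [CubicOscillator.derivCoeff, mul_assoc, mul_left_comm]

theorem continuousOn_tsum [TopologicalSpace ι] (hc : UniformlyEntire S c)
    (hcont : ∀ n, Continuous fun i => c i n) (s : ℂ) :
    ContinuousOn (fun i => ∑' n, c i n * s ^ n) S := by
  obtain ⟨M, hM⟩ := hc.exists_norm_le (norm_nonneg s)
  exact _root_.continuousOn_tsum (fun n => ((hcont n).mul_const _).continuousOn)
    (summable_geometric_two.mul_left M) fun n i hi => hM i hi s le_rfl n

end UniformlyEntire

/-- The Taylor coefficients at `0` of the solution of `y'' = (s³ + μ) y` with `y 0 = a₀` and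
`y' 0 = a₁`. -/
noncomputable def taylorCoeff (a₀ a₁ μ : ℂ) : ℕ → ℂ
  | 0 => a₀
  | 1 => a₁
  | n + 2 => (μ * taylorCoeff a₀ a₁ μ n + if 3 ≤ n then taylorCoeff a₀ a₁ μ (n - 3) else 0) /
      ((n + 1) * (n + 2))

theorem derivCoeff_derivCoeff_taylorCoeff (a₀ a₁ μ : ℂ) (n : ℕ) :
    derivCoeff (derivCoeff (taylorCoeff a₀ a₁ μ)) n = μ * taylorCoeff a₀ a₁ μ n +
      if 3 ≤ n then taylorCoeff a₀ a₁ μ (n - 3) else 0 := by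
  have h1 : (n + 1 : ℂ) ≠ 0 := by exact_mod_cast n.succ_ne_zero
  have h2 : (n + 2 : ℂ) ≠ 0 := by exact_mod_cast (n + 1).succ_ne_zero
  rw [derivCoeff, derivCoeff, taylorCoeff]
  push_cast
  rw [show (n + 1 + 1 : ℂ) = n + 2 by ring]
  field_simp

theorem continuous_taylorCoeff (a₀ a₁ : ℂ) (n : ℕ) :
    Continuous fun μ => taylorCoeff a₀ a₁ μ n := by
  induction n using Nat.strong_induction_on with
  | _ n ih =>
    match n with
    | 0 => simpa only [taylorCoeff] using continuous_const
    | 1 => simpa only [taylorCoeff] using continuous_const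
    | n + 2 =>
      have hn := ih n (by omega)
      simp only [taylorCoeff]
      split_ifs
      · have hn3 := ih (n - 3) (by omega)
        fun_prop
      · fun_prop

theorem div_mul_le_exp {L : ℝ} (hL : 0 ≤ L) (n : ℕ) :
    L / ((n + 1) * (n + 2)) ≤ Real.exp (L * (1 / (n + 1) - 1 / (n + 3))) := by
  have htelescope : 1 / ((n + 1) * (n + 2) : ℝ) ≤ 1 / (n + 1) - 1 / (n + 3) := by
    rw [div_sub_div _ _ (by positivity) (by positivity),
      div_le_div_iff₀ (by positivity) (by positivity)]
    nlinarith [n.cast_nonneg (α := ℝ)]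
  calc L / ((n + 1) * (n + 2)) = L * (1 / ((n + 1) * (n + 2))) := by ring
    _ ≤ L * (1 / (n + 1) - 1 / (n + 3)) := by gcongr
    _ ≤ _ := by linarith [Real.add_one_le_exp (L * (1 / (n + 1 : ℝ) - 1 / (n + 3)))]

-- The induction hypothesis is `u n ≤ A exp (L (1 - 1 / (n + 1)))`.
theorem le_mul_exp_of_recursion {u : ℕ → ℝ} {A L : ℝ} (hA : 0 ≤ A) (hL : 0 ≤ L)
    (h0 : u 0 ≤ A) (h1 : u 1 ≤ A)
    (hrec : ∀ n U, (∀ k ≤ n, u k ≤ U) → (n + 1) * (n + 2) * u (n + 2) ≤ L * U) (n : ℕ) :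
    u n ≤ A * Real.exp L := by
  suffices h : ∀ n : ℕ, u n ≤ A * Real.exp (L * (1 - 1 / (n + 1))) by
    refine (h n).trans ?_
    gcongr
    have : (0 : ℝ) ≤ 1 / (n + 1) := by positivity
    nlinarith
  intro n
  induction n using Nat.strong_induction_on with
  | _ n ih =>
    match n with
    | 0 => simpa using h0
    | 1 =>
      refine h1.trans (le_mul_of_one_le_right hA (Real.one_le_exp ?_))
      norm_num [hL]
    | n + 2 =>
      set E := Real.exp (L * (1 - 1 / (n + 1))) with hE
      have hbound : (n + 1) * (n + 2) * u (n + 2) ≤ L * (A * E) := by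
        refine hrec n _ fun k hk => (ih k (by omega)).trans ?_
        rw [hE]
        gcongr
      calc u (n + 2) ≤ L * (A * E) / ((n + 1) * (n + 2)) := by
            rw [le_div_iff₀ (by positivity)]; linarith
        _ = A * E * (L / ((n + 1) * (n + 2))) := by ring
        _ ≤ A * E * Real.exp (L * (1 / (n + 1) - 1 / (n + 3))) := by
            gcongr
            exact div_mul_le_exp hL n
        _ = A * Real.exp (L * (1 - 1 / ((n + 2 : ℕ) + 1))) := by
            rw [hE, mul_assoc, ← Real.exp_add]
            push_cast
            ring_nf

theorem uniformlyEntire_taylorCoeff (a₀ a₁ : ℂ) (B : ℝ) :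
    UniformlyEntire (Metric.ball 0 B) (taylorCoeff a₀ a₁) := by
  intro r hr
  refine ⟨(‖a₀‖ + ‖a₁‖ * r) * Real.exp (|B| * r ^ 2 + r ^ 5), fun μ hμ => ?_⟩
  have hμB : ‖μ‖ ≤ |B| := (mem_ball_zero_iff.1 hμ).le.trans (le_abs_self B)
  set c := taylorCoeff a₀ a₁ μ
  refine le_mul_exp_of_recursion (u := fun n => ‖c n‖ * r ^ n) (by positivity) (by positivity)
    (by simpa [c, taylorCoeff] using mul_nonneg (norm_nonneg a₁) hr) (by simp [c, taylorCoeff]) ?_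
  intro n U hU
  have hU0 : 0 ≤ U := le_trans (by positivity) (hU n le_rfl)
  have hshift : ‖if 3 ≤ n then c (n - 3) else 0‖ * r ^ (n + 2) ≤ U * r ^ 5 := by
    split_ifs with h
    · calc ‖c (n - 3)‖ * r ^ (n + 2) = ‖c (n - 3)‖ * r ^ (n - 3) * r ^ 5 := by
            rw [mul_assoc, ← pow_add]; congr 2; omega
        _ ≤ U * r ^ 5 := by gcongr; exact hU _ (by omega)
    · rw [norm_zero, zero_mul]; positivity
  have hrec := congrArg norm (derivCoeff_derivCoeff_taylorCoeff a₀ a₁ μ n)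
  calc (n + 1) * (n + 2) * (‖c (n + 2)‖ * r ^ (n + 2))
      = ‖derivCoeff (derivCoeff c) n‖ * r ^ (n + 2) := by
        simp only [derivCoeff, norm_mul]
        norm_cast
        push_cast
        ring
    _ ≤ (‖μ‖ * ‖c n‖ + ‖if 3 ≤ n then c (n - 3) else 0‖) * r ^ (n + 2) := by
        rw [hrec, ← norm_mul]
        gcongr
        exact norm_add_le _ _
    _ ≤ |B| * (‖c n‖ * r ^ n) * r ^ 2 + U * r ^ 5 := by
        rw [add_mul]
        refine add_le_add (le_trans (le_of_eq (by ring))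
          (by gcongr : ‖μ‖ * (‖c n‖ * r ^ n) * r ^ 2 ≤ _)) hshift
    _ ≤ |B| * U * r ^ 2 + U * r ^ 5 := by gcongr; exact hU n le_rfl
    _ = (|B| * r ^ 2 + r ^ 5) * U := by ring

/-- The solution of `y'' = (s³ + μ) y` with `y 0 = a₀` and `y' 0 = a₁`. -/
noncomputable def cauchySolution (a₀ a₁ μ s : ℂ) : ℂ := ∑' n, taylorCoeff a₀ a₁ μ n * s ^ n

theorem uniformlyEntire_taylorCoeff_singleton (a₀ a₁ μ : ℂ) :
    UniformlyEntire {μ} (taylorCoeff a₀ a₁) :=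
  (uniformlyEntire_taylorCoeff a₀ a₁ (‖μ‖ + 1)).mono (by simp)

theorem hasDerivAt_cauchySolution (a₀ a₁ μ s : ℂ) :
    HasDerivAt (cauchySolution a₀ a₁ μ) (∑' n, derivCoeff (taylorCoeff a₀ a₁ μ) n * s ^ n) s :=
  (uniformlyEntire_taylorCoeff_singleton a₀ a₁ μ).hasDerivAt_tsum rfl s

theorem isSolution_cauchySolution (a₀ a₁ μ : ℂ) : IsSolution μ (cauchySolution a₀ a₁ μ) := by
  have hc := uniformlyEntire_taylorCoeff_singleton a₀ a₁ μ
  refine .of_hasDerivAt (hasDerivAt_cauchySolution a₀ a₁ μ) fun s =>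
    (hc.derivCoeff.hasDerivAt_tsum rfl s).congr_deriv ?_
  have hsum : HasSum (fun n => taylorCoeff a₀ a₁ μ n * s ^ n) (cauchySolution a₀ a₁ μ s) :=
    (hc.summable rfl s).hasSum
  have hshift : HasSum (fun n => (if 3 ≤ n then taylorCoeff a₀ a₁ μ (n - 3) else 0) * s ^ n)
      (s ^ 3 * cauchySolution a₀ a₁ μ s) := by
    rw [← hasSum_nat_add_iff' 3]
    simpa [Finset.sum_range_succ, pow_add, mul_assoc, mul_comm, mul_left_comm] using
      hsum.mul_left (s ^ 3)
  have htotal := (hsum.mul_left μ).add hshift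
  simp only [derivCoeff_derivCoeff_taylorCoeff, add_mul, mul_assoc]
  rw [htotal.tsum_eq]
  ring

theorem cauchySolution_zero (a₀ a₁ μ : ℂ) : cauchySolution a₀ a₁ μ 0 = a₀ := by
  rw [cauchySolution, tsum_eq_single 0 fun n hn => by simp [hn]]
  simp [taylorCoeff]

theorem deriv_cauchySolution_zero (a₀ a₁ μ : ℂ) : deriv (cauchySolution a₀ a₁ μ) 0 = a₁ := by
  rw [(hasDerivAt_cauchySolution a₀ a₁ μ 0).deriv, tsum_eq_single 0 fun n hn => by simp [hn]]
  simp [derivCoeff, taylorCoeff]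

theorem continuous_of_continuousOn_ball {f : ℂ → ℂ}
    (h : ∀ B : ℝ, ContinuousOn f (Metric.ball 0 B)) : Continuous f :=
  continuous_iff_continuousAt.2 fun μ =>
    (h (‖μ‖ + 1)).continuousAt (Metric.isOpen_ball.mem_nhds (by simp))

theorem continuous_cauchySolution (a₀ a₁ s : ℂ) :
    Continuous fun μ => cauchySolution a₀ a₁ μ s :=
  continuous_of_continuousOn_ball fun B =>
    (uniformlyEntire_taylorCoeff a₀ a₁ B).continuousOn_tsum (continuous_taylorCoeff a₀ a₁) s

theorem continuous_deriv_cauchySolution (a₀ a₁ s : ℂ) :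
    Continuous fun μ => deriv (cauchySolution a₀ a₁ μ) s := by
  simp only [fun μ => (hasDerivAt_cauchySolution a₀ a₁ μ s).deriv]
  exact continuous_of_continuousOn_ball fun B =>
    (uniformlyEntire_taylorCoeff a₀ a₁ B).derivCoeff.continuousOn_tsum
      (fun n => (continuous_taylorCoeff a₀ a₁ (n + 1)).const_mul _) s

/-! ### The Liouville–Green energy estimate -/

theorem inner_energy_bound {a β m k b₀ : ℂ} {κ : ℝ} (hm : 0 ≤ m.re) (hk : ‖k‖ ≤ κ) :
    -(6 * κ * (‖a‖ ^ 2 + ‖β - b₀‖ ^ 2 + ‖b₀‖ ^ 2 / 6)) ≤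
      2 * inner ℝ a (m * a + k * (a + β)) + 2 * inner ℝ (β - b₀) (-(k * (a + β))) := by
  have hκ : 0 ≤ κ := (norm_nonneg k).trans hk
  set N := ‖a‖ + ‖β - b₀‖ + ‖b₀‖
  have hcoupling : ‖k * (a + β)‖ ≤ κ * N := by
    rw [norm_mul]
    gcongr
    calc ‖a + β‖ = ‖a + (β - b₀) + b₀‖ := by congr 1; ring
      _ ≤ N := norm_add₃_le
  have hgrow : 0 ≤ inner ℝ a (m * a) := by
    have : inner ℝ a (m * a) = m.re * ‖a‖ ^ 2 := by
      rw [Complex.inner, ← normSq_eq_norm_sq, mul_assoc, mul_conj, re_mul_ofReal]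
    rw [this]
    positivity
  have ha := (abs_real_inner_le_norm a (k * (a + β))).trans
    (mul_le_mul_of_nonneg_left hcoupling (norm_nonneg a))
  have hβ := (abs_real_inner_le_norm (β - b₀) (k * (a + β))).trans
    (mul_le_mul_of_nonneg_left hcoupling (norm_nonneg (β - b₀)))
  have hquad : (‖a‖ + ‖β - b₀‖) * N * 2 ≤ (‖a‖ ^ 2 + ‖β - b₀‖ ^ 2 + ‖b₀‖ ^ 2 / 6) * 6 := by
    nlinarith [sq_nonneg (‖a‖ - ‖β - b₀‖), sq_nonneg (‖a‖ + ‖β - b₀‖ - ‖b₀‖)]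
  rw [inner_add_right, inner_neg_right]
  nlinarith [neg_abs_le (inner ℝ a (k * (a + β))), le_abs_self (inner ℝ (β - b₀) (k * (a + β)))]

-- `(‖a‖² + ‖β - b₀‖² + ‖b₀‖² / 6) exp (6 K)` is nondecreasing in time.
theorem energy_le_mul_exp {t₀ t₁ : ℝ} (h : t₀ ≤ t₁) {a β m k : ℝ → ℂ} {κ K : ℝ → ℝ}
    (ha : ∀ t ∈ Set.Icc t₀ t₁, HasDerivAt a (m t * a t + k t * (a t + β t)) t)
    (hβ : ∀ t ∈ Set.Icc t₀ t₁, HasDerivAt β (-(k t * (a t + β t))) t)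
    (hm : ∀ t ∈ Set.Icc t₀ t₁, 0 ≤ (m t).re)
    (hk : ∀ t ∈ Set.Icc t₀ t₁, ‖k t‖ ≤ κ t)
    (hK : ∀ t ∈ Set.Icc t₀ t₁, HasDerivAt K (κ t) t) (b₀ : ℂ) :
    ‖a t₀‖ ^ 2 + ‖β t₀ - b₀‖ ^ 2 + ‖b₀‖ ^ 2 / 6 ≤
      (‖a t₁‖ ^ 2 + ‖β t₁ - b₀‖ ^ 2 + ‖b₀‖ ^ 2 / 6) * Real.exp (6 * (K t₁ - K t₀)) := by
  set E : ℝ → ℝ := fun t => ‖a t‖ ^ 2 + ‖β t - b₀‖ ^ 2 + ‖b₀‖ ^ 2 / 6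
  have hderiv (t) (ht : t ∈ Set.Icc t₀ t₁) :
      HasDerivAt (fun t => E t * Real.exp (6 * K t))
        ((2 * inner ℝ (a t) (m t * a t + k t * (a t + β t)) +
          2 * inner ℝ (β t - b₀) (-(k t * (a t + β t)))) * Real.exp (6 * K t) +
          E t * (Real.exp (6 * K t) * (6 * κ t))) t :=
    ((((ha t ht).norm_sq).add ((hβ t ht).sub_const b₀).norm_sq).add_const _).mul
      ((hK t ht).const_mul 6).exp
  have hmono : MonotoneOn (fun t => E t * Real.exp (6 * K t)) (Set.Icc t₀ t₁) := by
    refine monotoneOn_of_deriv_nonneg (convex_Icc _ _)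
      (fun t ht => (hderiv t ht).continuousAt.continuousWithinAt)
      (fun t ht => (hderiv t (interior_subset ht)).differentiableAt.differentiableWithinAt)
      fun t ht => ?_
    have ht' := interior_subset ht
    rw [(hderiv t ht').deriv]
    have := mul_le_mul_of_nonneg_right (inner_energy_bound (a := a t) (β := β t) (b₀ := b₀)
      (hm t ht') (hk t ht')) (Real.exp_pos (6 * K t)).le
    simp only [E]
    linarith
  have hends := hmono (Set.left_mem_Icc.2 h) (Set.right_mem_Icc.2 h) h
  rw [mul_sub, Real.exp_sub, ← mul_div_assoc, le_div_iff₀ (Real.exp_pos _)]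
  exact hends

/-- The coefficient of the growing wave in the Liouville–Green decomposition of the Cauchy data
`(y, y')`: `Φ` is the value of the decaying wave, `-(P + G)` its logarithmic derivative. -/
noncomputable def growingAmplitude (P G Φ y y' : ℂ) : ℂ := (y / Φ + (y' + G * y) / (P * Φ)) / 2

/-- The coefficient of the decaying wave in the Liouville–Green decomposition of `(y, y')`. -/
noncomputable def decayingAmplitude (P G Φ y y' : ℂ) : ℂ := (y / Φ - (y' + G * y) / (P * Φ)) / 2

/-- Squared distance of the Liouville–Green amplitudes of `(y, y')` from those of the pure decaying
wave `b₀ Φ`. -/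
noncomputable def deviation (P G Φ b₀ y y' : ℂ) : ℝ :=
  ‖growingAmplitude P G Φ y y'‖ ^ 2 + ‖decayingAmplitude P G Φ y y' - b₀‖ ^ 2

/-- `(P, G, Φ)` is a Liouville–Green frame at time `t` along a path with velocity `v`: in terms of
the position, `P' = 2 P G`, `G' = G₁` and `Φ' = -(P + G) Φ`. -/
structure IsWKBFrameAt (P G Φ : ℝ → ℂ) (G₁ v : ℂ) (t : ℝ) : Prop where
  hasDerivAt_momentum : HasDerivAt P (2 * P t * G t * v) t
  hasDerivAt_correction : HasDerivAt G (G₁ * v) t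
  hasDerivAt_wave : HasDerivAt Φ (-((P t + G t) * Φ t * v)) t
  momentum_ne_zero : P t ≠ 0
  wave_ne_zero : Φ t ≠ 0

theorem deviation_nonneg (P G Φ b₀ y y' : ℂ) : 0 ≤ deviation P G Φ b₀ y y' := by
  unfold deviation
  positivity

section Amplitudes

variable {μ v G₁ : ℂ} {y : ℂ → ℂ} {γ P G Φ : ℝ → ℂ} {t : ℝ}

theorem IsSolution.hasDerivAt_growingAmplitude (hy : IsSolution μ y) (hγ : HasDerivAt γ v t)
    (hF : IsWKBFrameAt P G Φ G₁ v t) :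
    HasDerivAt (fun t => growingAmplitude (P t) (G t) (Φ t) (y (γ t)) (deriv y (γ t)))
      (2 * (P t * v) * growingAmplitude (P t) (G t) (Φ t) (y (γ t)) (deriv y (γ t)) +
        (γ t ^ 3 + μ - P t ^ 2 + G₁ - G t ^ 2) / P t * v / 2 *
        (growingAmplitude (P t) (G t) (Φ t) (y (γ t)) (deriv y (γ t)) +
          decayingAmplitude (P t) (G t) (Φ t) (y (γ t)) (deriv y (γ t)))) t := by
  have hP := hF.momentum_ne_zero
  have hΦ := hF.wave_ne_zero
  have hyγ := (hy.hasDerivAt (γ t)).comp t hγ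
  have hy'γ := (hy.hasDerivAt_deriv (γ t)).comp t hγ
  refine (((hyγ.div hF.hasDerivAt_wave hΦ).add
    ((hy'γ.add (hF.hasDerivAt_correction.mul hyγ)).div
      (hF.hasDerivAt_momentum.mul hF.hasDerivAt_wave) (mul_ne_zero hP hΦ))).div_const
        2).congr_deriv ?_
  simp only [growingAmplitude, decayingAmplitude, Function.comp_apply, Pi.add_apply, Pi.mul_apply]
  field_simp
  ring

theorem IsSolution.hasDerivAt_decayingAmplitude (hy : IsSolution μ y) (hγ : HasDerivAt γ v t)
    (hF : IsWKBFrameAt P G Φ G₁ v t) :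
    HasDerivAt (fun t => decayingAmplitude (P t) (G t) (Φ t) (y (γ t)) (deriv y (γ t)))
      (-((γ t ^ 3 + μ - P t ^ 2 + G₁ - G t ^ 2) / P t * v / 2 *
        (growingAmplitude (P t) (G t) (Φ t) (y (γ t)) (deriv y (γ t)) +
          decayingAmplitude (P t) (G t) (Φ t) (y (γ t)) (deriv y (γ t))))) t := by
  have hP := hF.momentum_ne_zero
  have hΦ := hF.wave_ne_zero
  have hyγ := (hy.hasDerivAt (γ t)).comp t hγ
  have hy'γ := (hy.hasDerivAt_deriv (γ t)).comp t hγ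
  refine (((hyγ.div hF.hasDerivAt_wave hΦ).sub
    ((hy'γ.add (hF.hasDerivAt_correction.mul hyγ)).div
      (hF.hasDerivAt_momentum.mul hF.hasDerivAt_wave) (mul_ne_zero hP hΦ))).div_const
        2).congr_deriv ?_
  simp only [growingAmplitude, decayingAmplitude, Function.comp_apply, Pi.add_apply, Pi.mul_apply]
  field_simp
  ring

end Amplitudes

-- `γ³ + μ - P² + G' - G²` is the defect of `Φ` in the equation `y'' = (s³ + μ) y`.
theorem IsSolution.deviation_le_mul_exp {μ : ℂ} {y : ℂ → ℂ} (hy : IsSolution μ y) {t₀ t₁ X : ℝ}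
    (h : t₀ ≤ t₁) {γ v P G G₁ Φ : ℝ → ℂ} {κ K : ℝ → ℝ}
    (hγ : ∀ t ∈ Set.Icc t₀ t₁, HasDerivAt γ (v t) t)
    (hF : ∀ t ∈ Set.Icc t₀ t₁, IsWKBFrameAt P G Φ (G₁ t) (v t) t)
    (hgrow : ∀ t ∈ Set.Icc t₀ t₁, 0 ≤ (P t * v t).re)
    (hdefect : ∀ t ∈ Set.Icc t₀ t₁,
      ‖(γ t ^ 3 + μ - P t ^ 2 + G₁ t - G t ^ 2) / P t * v t‖ ≤ 2 * κ t)
    (hK : ∀ t ∈ Set.Icc t₀ t₁, HasDerivAt K (κ t) t) (hX : 6 * (K t₁ - K t₀) ≤ X) (b₀ : ℂ) :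
    deviation (P t₀) (G t₀) (Φ t₀) b₀ (y (γ t₀)) (deriv y (γ t₀)) + ‖b₀‖ ^ 2 / 6 ≤
      (deviation (P t₁) (G t₁) (Φ t₁) b₀ (y (γ t₁)) (deriv y (γ t₁)) + ‖b₀‖ ^ 2 / 6) *
        Real.exp X := by
  refine (energy_le_mul_exp h (fun t ht => hy.hasDerivAt_growingAmplitude (hγ t ht) (hF t ht))
    (fun t ht => hy.hasDerivAt_decayingAmplitude (hγ t ht) (hF t ht)) (fun t ht => ?_)
    (fun t ht => ?_) hK b₀).trans ?_
  · rw [← ofReal_ofNat, re_ofReal_mul]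
    have := hgrow t ht
    positivity
  · rw [norm_div, norm_ofNat]
    linarith [hdefect t ht]
  · exact mul_le_mul_of_nonneg_left (Real.exp_le_exp.2 hX)
      (add_nonneg (deviation_nonneg _ _ _ _ _ _) (by positivity))

/-! ### The Liouville–Green frame at infinity -/

/-- The momentum `s ^ (3 / 2)` of the Liouville–Green frame at infinity. -/
noncomputable def leadingMomentum (s : ℂ) : ℂ := s ^ ((3 / 2 : ℝ) : ℂ)

/-- The amplitude correction `p' / (2 p)` of the Liouville–Green frame at infinity, where `p` is
`leadingMomentum`. -/
noncomputable def leadingCorrection (s : ℂ) : ℂ := 3 / (4 * s)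

/-- The decaying Liouville–Green wave `s ^ (-3 / 4) exp (-(2 / 5) s ^ (5 / 2))`. It does not depend
on the spectral parameter, which only enters the phase at order `s ^ (-1 / 2)`. -/
noncomputable def leadingWave (s : ℂ) : ℂ :=
  s ^ ((-3 / 4 : ℝ) : ℂ) * exp (-(2 / 5 * s ^ ((5 / 2 : ℝ) : ℂ)))

section LeadingFrame

variable {s μ : ℂ}

theorem leadingMomentum_ne_zero (hs : s ∈ slitPlane) : leadingMomentum s ≠ 0 := by
  simp [leadingMomentum, cpow_eq_zero_iff, slitPlane_ne_zero hs]

theorem leadingWave_ne_zero (hs : s ∈ slitPlane) : leadingWave s ≠ 0 := by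
  simp [leadingWave, cpow_eq_zero_iff, slitPlane_ne_zero hs]

theorem leadingMomentum_sq (s : ℂ) : leadingMomentum s ^ 2 = s ^ 3 := by
  rw [leadingMomentum, ← cpow_nat_mul,
    show ((2 : ℕ) : ℂ) * ((3 / 2 : ℝ) : ℂ) = ((3 : ℕ) : ℂ) by push_cast; norm_num, cpow_natCast]

theorem norm_leadingMomentum (s : ℂ) : ‖leadingMomentum s‖ = ‖s‖ ^ (3 / 2 : ℝ) :=
  norm_cpow_real _ _

theorem leadingMomentum_mul_self (hs : s ∈ slitPlane) :
    leadingMomentum s * s = s ^ ((5 / 2 : ℝ) : ℂ) := by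
  rw [show ((5 / 2 : ℝ) : ℂ) = ((3 / 2 : ℝ) : ℂ) + 1 by push_cast; norm_num,
    cpow_add _ _ (slitPlane_ne_zero hs), cpow_one, leadingMomentum]

theorem hasDerivAt_leadingMomentum (hs : s ∈ slitPlane) :
    HasDerivAt leadingMomentum (2 * leadingMomentum s * leadingCorrection s) s := by
  have h0 := slitPlane_ne_zero hs
  refine ((hasDerivAt_id s).cpow_const (c := ((3 / 2 : ℝ) : ℂ)) hs).congr_deriv ?_
  simp only [id, leadingMomentum, leadingCorrection]
  rw [cpow_sub _ _ h0, cpow_one]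
  field_simp
  push_cast
  ring

theorem hasDerivAt_leadingCorrection (hs : s ∈ slitPlane) :
    HasDerivAt leadingCorrection (-3 / (4 * s ^ 2)) s := by
  have h0 := slitPlane_ne_zero hs
  refine ((hasDerivAt_const s (3 : ℂ)).div ((hasDerivAt_id s).const_mul 4)
    (by simpa using h0)).congr_deriv ?_
  simp only [id]
  field_simp
  ring

theorem hasDerivAt_leadingWave (hs : s ∈ slitPlane) :
    HasDerivAt leadingWave (-((leadingMomentum s + leadingCorrection s) * leadingWave s)) s := by
  have h0 := slitPlane_ne_zero hs
  have hpow := (hasDerivAt_id s).cpow_const (c := ((-3 / 4 : ℝ) : ℂ)) hs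
  have hexp :=
    (((hasDerivAt_id s).cpow_const (c := ((5 / 2 : ℝ) : ℂ)) hs).const_mul (2 / 5)).neg.cexp
  refine (hpow.mul hexp).congr_deriv ?_
  simp only [id, leadingCorrection, leadingWave, Pi.neg_apply]
  rw [cpow_sub _ _ h0, cpow_sub _ _ h0, cpow_one, ← leadingMomentum_mul_self hs]
  field_simp
  push_cast
  ring

theorem norm_leadingDefect_le (hs : s ∈ slitPlane) (h1 : 1 ≤ ‖s‖) :
    ‖(s ^ 3 + μ - leadingMomentum s ^ 2 + -3 / (4 * s ^ 2) - leadingCorrection s ^ 2) /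
      leadingMomentum s‖ ≤ (‖μ‖ + 2) * ‖s‖ ^ (-(3 / 2) : ℝ) := by
  have h0 := slitPlane_ne_zero hs
  have hdefect : s ^ 3 + μ - leadingMomentum s ^ 2 + -3 / (4 * s ^ 2) - leadingCorrection s ^ 2 =
      μ - 21 / 16 / s ^ 2 := by
    rw [leadingMomentum_sq, leadingCorrection]
    field_simp
    ring
  rw [hdefect, norm_div, norm_leadingMomentum, div_eq_mul_inv, Real.rpow_neg (norm_nonneg _)]
  gcongr
  refine (norm_sub_le _ _).trans ?_
  gcongr
  rw [norm_div, norm_pow, div_le_iff₀ (by positivity)]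
  norm_num
  linarith [one_le_pow₀ (n := 2) h1]

theorem isWKBFrameAt_leading {γ : ℝ → ℂ} {v : ℂ} {t : ℝ} (hγ : HasDerivAt γ v t)
    (hs : γ t ∈ slitPlane) :
    IsWKBFrameAt (fun t => leadingMomentum (γ t)) (fun t => leadingCorrection (γ t))
      (fun t => leadingWave (γ t)) (-3 / (4 * γ t ^ 2)) v t where
  hasDerivAt_momentum := (hasDerivAt_leadingMomentum hs).comp t hγ
  hasDerivAt_correction := (hasDerivAt_leadingCorrection hs).comp t hγ
  hasDerivAt_wave := ((hasDerivAt_leadingWave hs).comp t hγ).congr_deriv (by ring)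
  momentum_ne_zero := leadingMomentum_ne_zero hs
  wave_ne_zero := leadingWave_ne_zero hs

end LeadingFrame

/-- The deviation of the solution `y` from `b₀ * leadingWave` at the point `s`. -/
noncomputable def asymptoticDeviation (y : ℂ → ℂ) (s b₀ : ℂ) : ℝ :=
  deviation (leadingMomentum s) (leadingCorrection s) (leadingWave s) b₀ (y s) (deriv y s)

/-- The factor by which `asymptoticDeviation` can grow when moving inward to the circle of radius
`R`. -/
noncomputable def inwardGrowth (μ : ℂ) (R : ℝ) : ℝ :=
  Real.exp (6 * ((‖μ‖ + 2) * R ^ (-(1 / 2) : ℝ)))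

theorem asymptoticDeviation_nonneg (y : ℂ → ℂ) (s b₀ : ℂ) : 0 ≤ asymptoticDeviation y s b₀ :=
  deviation_nonneg _ _ _ _ _ _

section Path

variable {μ : ℂ} {y : ℂ → ℂ}

theorem IsSolution.asymptoticDeviation_le_mul_exp (hy : IsSolution μ y) {t₀ t₁ X : ℝ}
    (h : t₀ ≤ t₁) {γ v : ℝ → ℂ} {κ K : ℝ → ℝ} (hγ : ∀ t ∈ Set.Icc t₀ t₁, HasDerivAt γ (v t) t)
    (hslit : ∀ t ∈ Set.Icc t₀ t₁, γ t ∈ slitPlane) (hnorm : ∀ t ∈ Set.Icc t₀ t₁, 1 ≤ ‖γ t‖)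
    (hgrow : ∀ t ∈ Set.Icc t₀ t₁, 0 ≤ (leadingMomentum (γ t) * v t).re)
    (hκ : ∀ t ∈ Set.Icc t₀ t₁, (‖μ‖ + 2) * ‖γ t‖ ^ (-(3 / 2) : ℝ) * ‖v t‖ ≤ 2 * κ t)
    (hK : ∀ t ∈ Set.Icc t₀ t₁, HasDerivAt K (κ t) t) (hX : 6 * (K t₁ - K t₀) ≤ X) (b₀ : ℂ) :
    asymptoticDeviation y (γ t₀) b₀ + ‖b₀‖ ^ 2 / 6 ≤
      (asymptoticDeviation y (γ t₁) b₀ + ‖b₀‖ ^ 2 / 6) * Real.exp X := by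
  refine hy.deviation_le_mul_exp h hγ (fun t ht => isWKBFrameAt_leading (hγ t ht) (hslit t ht))
    hgrow (fun t ht => ?_) hK hX b₀
  rw [norm_mul]
  exact (mul_le_mul_of_nonneg_right (norm_leadingDefect_le (hslit t ht) (hnorm t ht))
    (norm_nonneg _)).trans (hκ t ht)

theorem IsSolution.asymptoticDeviation_radial_le (hy : IsSolution μ y) {R₀ R : ℝ} (h1 : 1 ≤ R₀)
    (h : R₀ ≤ R) (b₀ : ℂ) :
    asymptoticDeviation y R₀ b₀ + ‖b₀‖ ^ 2 / 6 ≤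
      (asymptoticDeviation y R b₀ + ‖b₀‖ ^ 2 / 6) * inwardGrowth μ R₀ := by
  have hpos (t) (ht : t ∈ Set.Icc R₀ R) : 0 < t := by linarith [ht.1]
  refine hy.asymptoticDeviation_le_mul_exp h (γ := fun t => (t : ℂ)) (v := fun _ => 1)
    (κ := fun t => (‖μ‖ + 2) / 2 * t ^ (-(3 / 2) : ℝ))
    (K := fun t => -((‖μ‖ + 2) * t ^ (-(1 / 2) : ℝ))) (fun t _ => ofRealCLM.hasDerivAt)
    (fun t ht => ofReal_mem_slitPlane.2 (hpos t ht)) (fun t ht => ?_) (fun t ht => ?_)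
    (fun t ht => ?_) (fun t ht => ?_) ?_ b₀
  · rw [Complex.norm_of_nonneg (hpos t ht).le]
    exact h1.trans ht.1
  · rw [leadingMomentum, ← ofReal_cpow (hpos t ht).le, mul_one, ofReal_re]
    exact Real.rpow_nonneg (hpos t ht).le _
  · rw [Complex.norm_of_nonneg (hpos t ht).le, norm_one]
    linarith
  · refine (((Real.hasDerivAt_rpow_const (p := (-(1 / 2) : ℝ))
      (Or.inl (hpos t ht).ne')).const_mul (‖μ‖ + 2)).neg).congr_deriv ?_
    rw [show (-(1 / 2) : ℝ) - 1 = -(3 / 2) by norm_num]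
    ring
  · have : 0 ≤ R ^ (-(1 / 2) : ℝ) := Real.rpow_nonneg (by linarith) _
    nlinarith [norm_nonneg μ]

end Path

/-- The unit complex number of argument `x`. -/
noncomputable def cis (x : ℝ) : ℂ := exp (x * I)

theorem cis_ne_zero (x : ℝ) : cis x ≠ 0 := exp_ne_zero _

theorem cis_zero : cis 0 = 1 := by simp [cis]

theorem cis_add (x y : ℝ) : cis (x + y) = cis x * cis y := by
  rw [cis, cis, cis, ← exp_add, ofReal_add, add_mul]

theorem norm_cis (x : ℝ) : ‖cis x‖ = 1 := norm_exp_ofReal_mul_I x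

section Polar

variable {r η : ℝ}

theorem ofReal_mul_cpow (hr : 0 < r) {z : ℂ} (hz : z ≠ 0) (c : ℝ) :
    (r * z) ^ (c : ℂ) = (r ^ c : ℝ) * z ^ (c : ℂ) := by
  rw [cpow_def_of_ne_zero (mul_ne_zero (ofReal_ne_zero.2 hr.ne') hz), log_ofReal_mul hr hz, add_mul,
    exp_add, ← cpow_def_of_ne_zero hz, Real.rpow_def_of_pos hr]
  push_cast
  rfl

theorem mul_cis_cpow (hr : 0 < r) (hη : η ∈ Set.Ioc (-Real.pi) Real.pi) (c : ℝ) :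
    (r * cis η) ^ (c : ℂ) = (r ^ c : ℝ) * cis (c * η) := by
  rw [ofReal_mul_cpow hr (cis_ne_zero η), cpow_def_of_ne_zero (cis_ne_zero η), cis, cis,
    log_exp (by simpa using hη.1) (by simpa using hη.2)]
  push_cast
  ring_nf

theorem mul_cis_mem_slitPlane (hr : 0 < r) (hη : η ∈ Set.Ioo (-(Real.pi / 2)) (Real.pi / 2)) :
    r * cis η ∈ slitPlane := by
  left
  rw [re_ofReal_mul, cis, exp_ofReal_mul_I_re]
  exact mul_pos hr (Real.cos_pos_of_mem_Ioo hη)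

theorem norm_mul_cis (hr : 0 ≤ r) : ‖r * cis η‖ = r := by
  rw [norm_mul, norm_cis, Complex.norm_of_nonneg hr, mul_one]

end Polar

theorem mul_sin_mul_nonneg {η c : ℝ} (hc : 0 ≤ c) (h : c * |η| ≤ Real.pi) :
    0 ≤ η * Real.sin (c * η) := by
  rcases le_total 0 η with hη | hη
  · rw [abs_of_nonneg hη] at h
    exact mul_nonneg hη (Real.sin_nonneg_of_nonneg_of_le_pi (by positivity) h)
  · rw [abs_of_nonpos hη] at h
    exact mul_nonneg_of_nonpos_of_nonpos hη
      (Real.sin_nonpos_of_nonpos_of_neg_pi_le (mul_nonpos_of_nonneg_of_nonpos hc hη) (by linarith))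

-- For `|arg s| ≤ 2π / 5` the real part of `s ^ (5 / 2)` decreases away from the real axis.
theorem re_leadingMomentum_mul_arc_nonneg {r η c : ℝ} (hr : 0 < r) (hc : 0 ≤ c)
    (h : c * |η| ≤ 2 * Real.pi / 5) :
    0 ≤ (leadingMomentum (r * cis (c * η)) * -(η * I * (r * cis (c * η)))).re := by
  have hpi := Real.pi_pos
  have harg := abs_le.1 (show |c * η| ≤ 2 * Real.pi / 5 by rwa [abs_mul, abs_of_nonneg hc])
  have hslit := mul_cis_mem_slitPlane hr (η := c * η) ⟨by linarith, by linarith⟩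
  have hphase : leadingMomentum (r * cis (c * η)) * -(η * I * (r * cis (c * η))) =
      ((-(η * r ^ (5 / 2 : ℝ)) : ℝ) : ℂ) * (I * cis (5 / 2 * (c * η))) := by
    rw [mul_neg, mul_left_comm, leadingMomentum_mul_self hslit,
      mul_cis_cpow hr ⟨by linarith, by linarith⟩]
    push_cast
    ring
  rw [hphase, re_ofReal_mul, I_mul_re, cis, exp_ofReal_mul_I_im, neg_mul_neg, mul_right_comm,
    ← mul_assoc (5 / 2)]
  exact mul_nonneg (mul_sin_mul_nonneg (by positivity) (by linarith)) (Real.rpow_nonneg hr.le _)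

theorem IsSolution.asymptoticDeviation_arc_le {μ : ℂ} {y : ℂ → ℂ} (hy : IsSolution μ y) {r η : ℝ}
    (h1 : 1 ≤ r) (hη : |η| ≤ Real.pi / 5) (b₀ : ℂ) :
    asymptoticDeviation y (r * cis η) b₀ + ‖b₀‖ ^ 2 / 6 ≤
      (asymptoticDeviation y r b₀ + ‖b₀‖ ^ 2 / 6) * inwardGrowth μ r := by
  have hr : 0 < r := by linarith
  set γ : ℝ → ℂ := fun t => r * cis ((1 - t) * η) with hγ
  have hangle {t : ℝ} (ht : t ∈ Set.Icc (0 : ℝ) 1) : (1 - t) * |η| ≤ Real.pi / 5 :=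
    (mul_le_of_le_one_left (abs_nonneg η) (by linarith [ht.1])).trans hη
  have hslit (t) (ht : t ∈ Set.Icc (0 : ℝ) 1) : γ t ∈ slitPlane :=
    mul_cis_mem_slitPlane hr <| abs_lt.1 <| by
      rw [abs_mul, abs_of_nonneg (by linarith [ht.2])]
      linarith [hangle ht, Real.pi_pos]
  have hnorm (t) : ‖γ t‖ = r := norm_mul_cis hr.le
  have hγ' (t) : HasDerivAt γ (-(η * I * γ t)) t := by
    have hlin : HasDerivAt (fun t : ℝ => (1 - t) * η) (-η) t := by
      simpa using ((hasDerivAt_id t).const_sub 1).mul_const η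
    refine ((hlin.ofReal_comp.mul_const I).cexp.const_mul (r : ℂ)).congr_deriv ?_
    simp only [hγ, cis]
    push_cast
    ring
  have henergy := hy.asymptoticDeviation_le_mul_exp zero_le_one (γ := γ)
    (κ := fun _ => (‖μ‖ + 2) / 2 * r ^ (-(1 / 2) : ℝ) * |η|)
    (K := fun t => t * ((‖μ‖ + 2) / 2 * r ^ (-(1 / 2) : ℝ) * |η|))
    (X := 6 * ((‖μ‖ + 2) * r ^ (-(1 / 2) : ℝ))) (fun t _ => hγ' t) hslit
    (fun t _ => (hnorm t).symm ▸ h1) (fun t ht => ?_) (fun t _ => ?_)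
    (fun t _ => hasDerivAt_mul_const _) ?_ b₀
  · simpa only [hγ, sub_zero, sub_self, mul_one, one_mul, zero_mul, ofReal_zero, cis_zero,
      inwardGrowth] using henergy
  · exact re_leadingMomentum_mul_arc_nonneg hr (by linarith [ht.2])
      (by linarith [hangle ht, Real.pi_pos])
  · rw [hnorm, norm_neg, norm_mul, norm_mul, hnorm, norm_I, mul_one, norm_real, Real.norm_eq_abs,
      show (-(1 / 2) : ℝ) = -(3 / 2) + 1 by norm_num, Real.rpow_add_one hr.ne']
    linarith
  · have : |η| ≤ 2 := by linarith [Real.pi_le_four]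
    have : 0 ≤ (‖μ‖ + 2) * r ^ (-(1 / 2) : ℝ) := by positivity
    nlinarith

/-! ### The subdominant solution -/

section Amplitudes

variable {P G Φ y y' z z' : ℂ}

theorem growingAmplitude_sub :
    growingAmplitude P G Φ (y - z) (y' - z') =
      growingAmplitude P G Φ y y' - growingAmplitude P G Φ z z' := by
  unfold growingAmplitude
  ring

theorem decayingAmplitude_sub :
    decayingAmplitude P G Φ (y - z) (y' - z') =
      decayingAmplitude P G Φ y y' - decayingAmplitude P G Φ z z' := by
  unfold decayingAmplitude
  ring

theorem growingAmplitude_wave (hP : P ≠ 0) (hΦ : Φ ≠ 0) :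
    growingAmplitude P G Φ Φ (-((P + G) * Φ)) = 0 := by
  unfold growingAmplitude
  field_simp
  ring

theorem decayingAmplitude_wave (hP : P ≠ 0) (hΦ : Φ ≠ 0) :
    decayingAmplitude P G Φ Φ (-((P + G) * Φ)) = 1 := by
  unfold decayingAmplitude
  field_simp
  ring

theorem eq_amplitudes_mul_wave (hP : P ≠ 0) (hΦ : Φ ≠ 0) :
    y = (growingAmplitude P G Φ y y' + decayingAmplitude P G Φ y y') * Φ := by
  unfold growingAmplitude decayingAmplitude
  field_simp
  ring

theorem deriv_eq_amplitudes_mul_wave (hP : P ≠ 0) (hΦ : Φ ≠ 0) :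
    y' = ((growingAmplitude P G Φ y y' - decayingAmplitude P G Φ y y') * P -
      G * (growingAmplitude P G Φ y y' + decayingAmplitude P G Φ y y')) * Φ := by
  unfold growingAmplitude decayingAmplitude
  field_simp
  ring

theorem deviation_wave (hP : P ≠ 0) (hΦ : Φ ≠ 0) :
    deviation P G Φ 1 Φ (-((P + G) * Φ)) = 0 := by
  rw [deviation, growingAmplitude_wave hP hΦ, decayingAmplitude_wave hP hΦ]
  simp

theorem deviation_sub_wave (hP : P ≠ 0) (hΦ : Φ ≠ 0) :
    deviation P G Φ 0 (y - Φ) (y' - -((P + G) * Φ)) = deviation P G Φ 1 y y' := by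
  rw [deviation, growingAmplitude_sub, decayingAmplitude_sub, growingAmplitude_wave hP hΦ,
    decayingAmplitude_wave hP hΦ, sub_zero, sub_zero, deviation]

theorem norm_growingAmplitude_le (b₀ : ℂ) :
    ‖growingAmplitude P G Φ y y'‖ ≤ √(deviation P G Φ b₀ y y') :=
  Real.le_sqrt_of_sq_le (le_add_of_nonneg_right (sq_nonneg _))

theorem norm_decayingAmplitude_sub_le (b₀ : ℂ) :
    ‖decayingAmplitude P G Φ y y' - b₀‖ ≤ √(deviation P G Φ b₀ y y') :=
  Real.le_sqrt_of_sq_le (le_add_of_nonneg_left (sq_nonneg _))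

end Amplitudes

section FundamentalSystem

variable {μ : ℂ} {y : ℂ → ℂ}

theorem wronskian_fundamental (μ s : ℂ) :
    cauchySolution 1 0 μ s * deriv (cauchySolution 0 1 μ) s -
      deriv (cauchySolution 1 0 μ) s * cauchySolution 0 1 μ s = 1 := by
  rw [(isSolution_cauchySolution 1 0 μ).wronskian_eq (isSolution_cauchySolution 0 1 μ) s 0]
  simp only [cauchySolution_zero, deriv_cauchySolution_zero]
  ring

theorem IsSolution.apply_zero_eq (hy : IsSolution μ y) (s : ℂ) :
    y 0 = y s * deriv (cauchySolution 0 1 μ) s - deriv y s * cauchySolution 0 1 μ s := by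
  rw [hy.wronskian_eq (isSolution_cauchySolution 0 1 μ) s 0]
  simp only [cauchySolution_zero, deriv_cauchySolution_zero]
  ring

theorem IsSolution.deriv_zero_eq (hy : IsSolution μ y) (s : ℂ) :
    deriv y 0 = -(y s * deriv (cauchySolution 1 0 μ) s - deriv y s * cauchySolution 1 0 μ s) := by
  rw [hy.wronskian_eq (isSolution_cauchySolution 1 0 μ) s 0]
  simp only [cauchySolution_zero, deriv_cauchySolution_zero]
  ring

theorem IsSolution.eq_linearCombination (hy : IsSolution μ y) :
    y = fun s => y 0 * cauchySolution 1 0 μ s + deriv y 0 * cauchySolution 0 1 μ s := by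
  funext s
  rw [hy.apply_zero_eq s, hy.deriv_zero_eq s]
  linear_combination -y s * wronskian_fundamental μ s

theorem cauchySolution_apply (a₀ a₁ μ s : ℂ) :
    cauchySolution a₀ a₁ μ s = a₀ * cauchySolution 1 0 μ s + a₁ * cauchySolution 0 1 μ s := by
  conv_lhs => rw [(isSolution_cauchySolution a₀ a₁ μ).eq_linearCombination]
  simp only [cauchySolution_zero, deriv_cauchySolution_zero]

theorem deriv_cauchySolution_apply (a₀ a₁ μ s : ℂ) :
    deriv (cauchySolution a₀ a₁ μ) s =
      a₀ * deriv (cauchySolution 1 0 μ) s + a₁ * deriv (cauchySolution 0 1 μ) s := by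
  rw [funext (cauchySolution_apply a₀ a₁ μ)]
  exact (isSolution_cauchySolution 1 0 μ).deriv_linearCombination
    (isSolution_cauchySolution 0 1 μ) a₀ a₁ s

end FundamentalSystem

/-- The Cauchy data at `0` of the solution which agrees to first order with `leadingWave` at the
real point `R`. -/
noncomputable def matchedData (μ : ℂ) (R : ℝ) : ℂ × ℂ :=
  (leadingWave R * deriv (cauchySolution 0 1 μ) R -
      -((leadingMomentum R + leadingCorrection R) * leadingWave R) * cauchySolution 0 1 μ R,
    -(leadingWave R * deriv (cauchySolution 1 0 μ) R -
      -((leadingMomentum R + leadingCorrection R) * leadingWave R) * cauchySolution 1 0 μ R))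

/-- The solution which agrees to first order with `leadingWave` at the real point `R`. -/
noncomputable def matchedSolution (μ : ℂ) (R : ℝ) : ℂ → ℂ :=
  cauchySolution (matchedData μ R).1 (matchedData μ R).2 μ

theorem isSolution_matchedSolution (μ : ℂ) (R : ℝ) : IsSolution μ (matchedSolution μ R) :=
  isSolution_cauchySolution _ _ μ

theorem matchedSolution_apply (μ : ℂ) (R : ℝ) : matchedSolution μ R R = leadingWave R := by
  rw [matchedSolution, cauchySolution_apply, matchedData]
  linear_combination leadingWave R * wronskian_fundamental μ R

theorem deriv_matchedSolution_apply (μ : ℂ) (R : ℝ) : deriv (matchedSolution μ R) R =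
    -((leadingMomentum R + leadingCorrection R) * leadingWave R) := by
  rw [matchedSolution, deriv_cauchySolution_apply, matchedData]
  linear_combination
    -((leadingMomentum R + leadingCorrection R) * leadingWave R) * wronskian_fundamental μ R

theorem asymptoticDeviation_matchedSolution_le (μ : ℂ) {R₀ R : ℝ} (h1 : 1 ≤ R₀) (h : R₀ ≤ R) :
    asymptoticDeviation (matchedSolution μ R) R₀ 1 ≤ (inwardGrowth μ R₀ - 1) / 6 := by
  have hR : (R : ℂ) ∈ slitPlane := ofReal_mem_slitPlane.2 (by linarith)
  have hmatch : asymptoticDeviation (matchedSolution μ R) R 1 = 0 := by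
    rw [asymptoticDeviation, matchedSolution_apply, deriv_matchedSolution_apply,
      deviation_wave (leadingMomentum_ne_zero hR) (leadingWave_ne_zero hR)]
  have := (isSolution_matchedSolution μ R).asymptoticDeviation_radial_le h1 h 1
  rw [hmatch, norm_one] at this
  linarith

theorem asymptoticDeviation_matchedSolution_sub_le (μ : ℂ) {R R' : ℝ} (h1 : 1 ≤ R) (h : R ≤ R') :
    asymptoticDeviation
        (fun s => 1 * matchedSolution μ R' s + -1 * matchedSolution μ R s) (1 : ℝ) 0 ≤
      (inwardGrowth μ R - 1) / 6 * inwardGrowth μ 1 := by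
  have hsol := isSolution_matchedSolution μ
  have hR : (R : ℂ) ∈ slitPlane := ofReal_mem_slitPlane.2 (by linarith)
  have hstart : asymptoticDeviation
      (fun s => 1 * matchedSolution μ R' s + -1 * matchedSolution μ R s) R 0 =
        asymptoticDeviation (matchedSolution μ R') R 1 := by
    rw [asymptoticDeviation, (hsol R').deriv_linearCombination (hsol R), matchedSolution_apply μ R,
      deriv_matchedSolution_apply μ R, one_mul, one_mul, neg_one_mul, neg_one_mul, ← sub_eq_add_neg,
      ← sub_eq_add_neg, deviation_sub_wave (leadingMomentum_ne_zero hR) (leadingWave_ne_zero hR),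
      asymptoticDeviation]
  have htransport := ((hsol R').linearCombination (hsol R) 1 (-1)).asymptoticDeviation_radial_le
    le_rfl h1 0
  rw [hstart, norm_zero, zero_pow two_ne_zero, zero_div, add_zero, add_zero] at htransport
  exact htransport.trans (mul_le_mul_of_nonneg_right (asymptoticDeviation_matchedSolution_le μ h1 h)
    (Real.exp_pos _).le)

/-- A constant controlling the Cauchy data of solutions at `0` by their Liouville–Green amplitudes
at `1`. -/
noncomputable def cauchyDataBound (μ : ℂ) : ℝ :=
  4 * (‖cauchySolution 0 1 μ 1‖ + ‖deriv (cauchySolution 0 1 μ) 1‖ +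
    ‖cauchySolution 1 0 μ 1‖ + ‖deriv (cauchySolution 1 0 μ) 1‖)

theorem norm_leadingWave_one_le : ‖leadingWave 1‖ ≤ 1 := by
  simpa [leadingWave, norm_exp] using (by norm_num : (0 : ℝ) ≤ 2 / 5)

section AtOne

variable (y y' : ℂ)

theorem norm_le_deviation_one : ‖y‖ ≤
    4 * √(deviation (leadingMomentum 1) (leadingCorrection 1) (leadingWave 1) 0 y y') := by
  have h1 : (1 : ℂ) ∈ slitPlane := one_mem_slitPlane
  have hα := norm_growingAmplitude_le (P := leadingMomentum 1) (G := leadingCorrection 1)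
    (Φ := leadingWave 1) (y := y) (y' := y') 0
  have hβ := norm_decayingAmplitude_sub_le (P := leadingMomentum 1) (G := leadingCorrection 1)
    (Φ := leadingWave 1) (y := y) (y' := y') 0
  rw [sub_zero] at hβ
  conv_lhs => rw [eq_amplitudes_mul_wave (y := y) (y' := y') (G := leadingCorrection 1)
    (leadingMomentum_ne_zero h1) (leadingWave_ne_zero h1), norm_mul]
  refine (mul_le_of_le_one_right (norm_nonneg _) norm_leadingWave_one_le).trans ?_
  refine (norm_add_le _ _).trans ?_
  linarith [Real.sqrt_nonneg
    (deviation (leadingMomentum 1) (leadingCorrection 1) (leadingWave 1) 0 y y')]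

theorem norm_deriv_le_deviation_one : ‖y'‖ ≤
    4 * √(deviation (leadingMomentum 1) (leadingCorrection 1) (leadingWave 1) 0 y y') := by
  have h1 : (1 : ℂ) ∈ slitPlane := one_mem_slitPlane
  have hα := norm_growingAmplitude_le (P := leadingMomentum 1) (G := leadingCorrection 1)
    (Φ := leadingWave 1) (y := y) (y' := y') 0
  have hβ := norm_decayingAmplitude_sub_le (P := leadingMomentum 1) (G := leadingCorrection 1)
    (Φ := leadingWave 1) (y := y) (y' := y') 0
  have hp : leadingMomentum 1 = 1 := one_cpow _
  have hg : ‖leadingCorrection 1‖ = 3 / 4 := by norm_num [leadingCorrection]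
  rw [sub_zero] at hβ
  conv_lhs => rw [deriv_eq_amplitudes_mul_wave (y := y) (y' := y') (G := leadingCorrection 1)
    (leadingMomentum_ne_zero h1) (leadingWave_ne_zero h1), norm_mul]
  refine (mul_le_of_le_one_right (norm_nonneg _) norm_leadingWave_one_le).trans ?_
  set α := growingAmplitude (leadingMomentum 1) (leadingCorrection 1) (leadingWave 1) y y'
  set β := decayingAmplitude (leadingMomentum 1) (leadingCorrection 1) (leadingWave 1) y y'
  calc ‖(α - β) * leadingMomentum 1 - leadingCorrection 1 * (α + β)‖
      ≤ ‖α - β‖ + 3 / 4 * ‖α + β‖ := by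
        simpa only [hp, mul_one, norm_mul, hg] using
          norm_sub_le ((α - β) * leadingMomentum 1) (leadingCorrection 1 * (α + β))
    _ ≤ _ := by linarith [norm_sub_le α β, norm_add_le α β, norm_nonneg α]

end AtOne

theorem IsSolution.norm_cauchyData_le {μ : ℂ} {y : ℂ → ℂ} (hy : IsSolution μ y) :
    ‖(y 0, deriv y 0)‖ ≤ cauchyDataBound μ * √(asymptoticDeviation y (1 : ℝ) 0) := by
  rw [asymptoticDeviation, ofReal_one, cauchyDataBound]
  have hvalue := norm_le_deviation_one (y 1) (deriv y 1)
  have hslope := norm_deriv_le_deviation_one (y 1) (deriv y 1)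
  set d := √(deviation (leadingMomentum 1) (leadingCorrection 1) (leadingWave 1) 0 (y 1)
    (deriv y 1))
  have hpair (u v : ℂ) : ‖y 1 * u - deriv y 1 * v‖ ≤ 4 * (‖u‖ + ‖v‖) * d := calc
    _ ≤ ‖y 1‖ * ‖u‖ + ‖deriv y 1‖ * ‖v‖ := by
      simpa only [norm_mul] using norm_sub_le (y 1 * u) (deriv y 1 * v)
    _ ≤ 4 * d * ‖u‖ + 4 * d * ‖v‖ := by gcongr
    _ = _ := by ring
  refine max_le ?_ ?_
  · rw [hy.apply_zero_eq 1]
    refine (hpair _ _).trans (mul_le_mul_of_nonneg_right ?_ (Real.sqrt_nonneg _))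
    linarith [norm_nonneg (cauchySolution 1 0 μ 1), norm_nonneg (deriv (cauchySolution 1 0 μ) 1)]
  · rw [hy.deriv_zero_eq 1, norm_neg]
    refine (hpair _ _).trans (mul_le_mul_of_nonneg_right ?_ (Real.sqrt_nonneg _))
    linarith [norm_nonneg (cauchySolution 0 1 μ 1), norm_nonneg (deriv (cauchySolution 0 1 μ) 1)]

/-- Rate at which `matchedData μ R` converges as `R → ∞`. -/
noncomputable def matchingError (μ : ℂ) (R : ℝ) : ℝ :=
  cauchyDataBound μ * √((inwardGrowth μ R - 1) / 6 * inwardGrowth μ 1)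

theorem norm_matchedData_sub_le (μ : ℂ) {R R' : ℝ} (h1 : 1 ≤ R) (h : R ≤ R') :
    ‖matchedData μ R' - matchedData μ R‖ ≤ matchingError μ R := by
  have hsol := isSolution_matchedSolution μ
  have hnorm := ((hsol R').linearCombination (hsol R) 1 (-1)).norm_cauchyData_le
  rw [(hsol R').deriv_linearCombination (hsol R)] at hnorm
  simp only [matchedSolution, cauchySolution_zero, deriv_cauchySolution_zero, one_mul, neg_one_mul,
    ← sub_eq_add_neg] at hnorm
  refine hnorm.trans (mul_le_mul_of_nonneg_left (Real.sqrt_le_sqrt ?_)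
    (by unfold cauchyDataBound; positivity))
  simpa only [matchedSolution, one_mul, neg_one_mul, ← sub_eq_add_neg] using
    asymptoticDeviation_matchedSolution_sub_le μ h1 h

theorem tendsto_inwardGrowth (μ : ℂ) : Tendsto (inwardGrowth μ) atTop (𝓝 1) := by
  unfold inwardGrowth
  simpa using (((tendsto_rpow_neg_atTop (y := (1 / 2 : ℝ)) (by norm_num)).const_mul
    (‖μ‖ + 2)).const_mul 6).rexp

theorem tendsto_matchingError (μ : ℂ) : Tendsto (matchingError μ) atTop (𝓝 0) := by
  unfold matchingError
  simpa using ((((tendsto_inwardGrowth μ).sub_const 1).div_const 6).mul_const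
    (inwardGrowth μ 1)).sqrt.const_mul (cauchyDataBound μ)

theorem continuous_matchingError (R : ℝ) : Continuous fun μ => matchingError μ R := by
  have := continuous_cauchySolution 0 1 1
  have := continuous_deriv_cauchySolution 0 1 1
  have := continuous_cauchySolution 1 0 1
  have := continuous_deriv_cauchySolution 1 0 1
  unfold matchingError cauchyDataBound inwardGrowth
  fun_prop

theorem continuous_matchedData (R : ℝ) : Continuous fun μ => matchedData μ R := by
  have := continuous_cauchySolution 0 1 R
  have := continuous_deriv_cauchySolution 0 1 R
  have := continuous_cauchySolution 1 0 R
  have := continuous_deriv_cauchySolution 1 0 R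
  unfold matchedData
  fun_prop

theorem exists_continuous_limit {X E : Type*} [TopologicalSpace X] [NormedAddCommGroup E]
    [CompleteSpace E] {F : X → ℝ → E} {e : X → ℝ → ℝ} (hF : ∀ R, Continuous fun x => F x R)
    (he : ∀ R, Continuous fun x => e x R) (he₀ : ∀ x, Tendsto (e x) atTop (𝓝 0))
    (h : ∀ x R R', 1 ≤ R → R ≤ R' → ‖F x R' - F x R‖ ≤ e x R) :
    ∃ A : X → E, Continuous A ∧ ∀ x, Tendsto (F x) atTop (𝓝 (A x)) := by
  have hlim (x : X) : ∃ a, Tendsto (F x) atTop (𝓝 a) := by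
    have hmax : Tendsto (fun R : ℝ => max 1 R) atTop atTop :=
      tendsto_atTop_mono (le_max_right 1) tendsto_id
    have hcauchy : CauchySeq fun R => F x (max 1 R) :=
      cauchySeq_of_le_tendsto_0' (fun R => e x (max 1 R)) (fun R R' hR => by
        rw [dist_comm, dist_eq_norm]
        exact h x _ _ (le_max_left _ _) (max_le_max_left 1 hR)) ((he₀ x).comp hmax)
    obtain ⟨a, ha⟩ := cauchySeq_tendsto_of_complete hcauchy
    refine ⟨a, ha.congr' ?_⟩
    filter_upwards [eventually_ge_atTop 1] with R hR
    rw [max_eq_right hR]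
  choose A hA using hlim
  refine ⟨A, continuous_of_locally_uniform_approx_of_continuousAt fun x u hu => ?_, hA⟩
  obtain ⟨ε, hε, hu⟩ := Metric.mem_uniformity_dist.1 hu
  obtain ⟨R, hRε, hR⟩ := (((he₀ x).eventually_lt_const hε).and (eventually_ge_atTop 1)).exists
  refine ⟨{z | e z R < ε}, (he R).continuousAt.eventually_lt_const hRε, fun z => F z R,
    (hF R).continuousAt, fun z hz => hu ?_⟩
  rw [dist_eq_norm]
  refine lt_of_le_of_lt (le_of_tendsto ((hA z).sub_const (F z R)).norm ?_) hz
  filter_upwards [eventually_ge_atTop R] with R' hR'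
  exact h z R R' hR hR'

theorem exists_matchedData_limit :
    ∃ A : ℂ → ℂ × ℂ, Continuous A ∧ ∀ μ, Tendsto (matchedData μ) atTop (𝓝 (A μ)) :=
  exists_continuous_limit continuous_matchedData continuous_matchingError tendsto_matchingError
    fun μ _ _ => norm_matchedData_sub_le μ

/-- The solution of `y'' = (s³ + μ) y` asymptotic to `leadingWave` on the positive real axis,
obtained as the limit of `matchedSolution μ R` as `R → ∞`. -/
noncomputable def subdominantSolution (μ : ℂ) : ℂ → ℂ :=
  cauchySolution (exists_matchedData_limit.choose μ).1 (exists_matchedData_limit.choose μ).2 μ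

theorem isSolution_subdominantSolution (μ : ℂ) : IsSolution μ (subdominantSolution μ) :=
  isSolution_cauchySolution _ _ μ

theorem continuous_subdominantSolution_zero : Continuous fun μ => subdominantSolution μ 0 := by
  simp only [subdominantSolution, cauchySolution_zero]
  exact exists_matchedData_limit.choose_spec.1.fst

theorem asymptoticDeviation_subdominantSolution_le (μ : ℂ) {R : ℝ} (hR : 1 ≤ R) :
    asymptoticDeviation (subdominantSolution μ) R 1 ≤ (inwardGrowth μ R - 1) / 6 := by
  have hcont : Continuous fun a : ℂ × ℂ => asymptoticDeviation (cauchySolution a.1 a.2 μ) R 1 := by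
    have hvalue : Continuous fun a : ℂ × ℂ => cauchySolution a.1 a.2 μ R := by
      simp only [fun a : ℂ × ℂ => cauchySolution_apply a.1 a.2 μ R]
      fun_prop
    have hslope : Continuous fun a : ℂ × ℂ => deriv (cauchySolution a.1 a.2 μ) R := by
      simp only [fun a : ℂ × ℂ => deriv_cauchySolution_apply a.1 a.2 μ R]
      fun_prop
    unfold asymptoticDeviation deviation growingAmplitude decayingAmplitude
    fun_prop
  refine le_of_tendsto ((hcont.tendsto _).comp (exists_matchedData_limit.choose_spec.2 μ)) ?_
  filter_upwards [eventually_ge_atTop R] with R' hR'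
  exact asymptoticDeviation_matchedSolution_le μ hR hR'

/-! ### Recessive solutions on rays and the connection formula -/

/-- A solution which is asymptotic to `leadingWave` on the positive real axis. -/
structure IsRecessive (μ : ℂ) (y : ℂ → ℂ) : Prop extends IsSolution μ y where
  tendsto_deviation : Tendsto (fun r : ℝ => asymptoticDeviation y r 1) atTop (𝓝 0)

theorem isRecessive_subdominantSolution (μ : ℂ) : IsRecessive μ (subdominantSolution μ) where
  toIsSolution := isSolution_subdominantSolution μ
  tendsto_deviation := by
    refine squeeze_zero' (Eventually.of_forall fun _ => asymptoticDeviation_nonneg _ _ _)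
      ((eventually_ge_atTop 1).mono fun _ => asymptoticDeviation_subdominantSolution_le μ) ?_
    simpa using ((tendsto_inwardGrowth μ).sub_const 1).div_const 6

section Ray

variable {μ : ℂ} {y : ℂ → ℂ} {η r : ℝ}

theorem mul_cis_mem_slitPlane_of_abs_le (hr : 0 < r) (hη : |η| ≤ Real.pi / 5) :
    r * cis η ∈ slitPlane :=
  mul_cis_mem_slitPlane hr (abs_lt.1 (hη.trans_lt (by linarith [Real.pi_pos])))

theorem mul_cis_cpow_of_abs_le (hr : 0 < r) (hη : |η| ≤ Real.pi / 5) (c : ℝ) :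
    (r * cis η) ^ (c : ℂ) = (r ^ c : ℝ) * cis (c * η) :=
  mul_cis_cpow hr ((abs_lt.1 (hη.trans_lt (by linarith [Real.pi_pos]))).imp_right le_of_lt) c

theorem IsRecessive.tendsto_deviation_ray (hy : IsRecessive μ y) (hη : |η| ≤ Real.pi / 5) :
    Tendsto (fun r : ℝ => asymptoticDeviation y (r * cis η) 1) atTop (𝓝 0) := by
  have hbound : Tendsto (fun r : ℝ => (asymptoticDeviation y r 1 + ‖(1 : ℂ)‖ ^ 2 / 6) *
      inwardGrowth μ r - ‖(1 : ℂ)‖ ^ 2 / 6) atTop (𝓝 0) := by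
    convert ((hy.tendsto_deviation.add_const (‖(1 : ℂ)‖ ^ 2 / 6)).mul
      (tendsto_inwardGrowth μ)).sub_const (‖(1 : ℂ)‖ ^ 2 / 6) using 2
    ring
  refine squeeze_zero' (Eventually.of_forall fun _ => asymptoticDeviation_nonneg _ _ _) ?_ hbound
  filter_upwards [eventually_ge_atTop 1] with r hr
  exact le_sub_iff_add_le.2 (hy.asymptoticDeviation_arc_le hr hη 1)

/-- The value of `y` at `s` in units of `leadingWave`; it is the sum of the two amplitudes. -/
noncomputable def relativeValue (y : ℂ → ℂ) (s : ℂ) : ℂ := y s / leadingWave s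

/-- The corrected slope of `y` at `s` in units of `leadingMomentum * leadingWave`; it is the
difference of the two amplitudes. -/
noncomputable def relativeSlope (y : ℂ → ℂ) (s : ℂ) : ℂ :=
  (deriv y s + leadingCorrection s * y s) / (leadingMomentum s * leadingWave s)

theorem eq_relativeValue_mul (y : ℂ → ℂ) {s : ℂ} (hs : s ∈ slitPlane) :
    y s = relativeValue y s * leadingWave s :=
  (div_mul_cancel₀ _ (leadingWave_ne_zero hs)).symm

theorem deriv_eq_relativeSlope_mul (y : ℂ → ℂ) {s : ℂ} (hs : s ∈ slitPlane) :
    deriv y s = (relativeSlope y s * leadingMomentum s - leadingCorrection s * relativeValue y s) *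
      leadingWave s := by
  have := leadingWave_ne_zero hs
  have := leadingMomentum_ne_zero hs
  unfold relativeValue relativeSlope
  field_simp
  ring

theorem IsRecessive.tendsto_amplitudes_ray (hy : IsRecessive μ y) (hη : |η| ≤ Real.pi / 5) :
    Tendsto (fun r : ℝ => (relativeValue y (r * cis η) + relativeSlope y (r * cis η)) / 2)
      atTop (𝓝 0) ∧
    Tendsto (fun r : ℝ => (relativeValue y (r * cis η) - relativeSlope y (r * cis η)) / 2)
      atTop (𝓝 1) := by
  have hsqrt := (hy.tendsto_deviation_ray hη).sqrt
  rw [Real.sqrt_zero] at hsqrt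
  exact ⟨squeeze_zero_norm (fun _ => norm_growingAmplitude_le 1) hsqrt,
    tendsto_iff_norm_sub_tendsto_zero.2 (squeeze_zero (fun _ => norm_nonneg _)
      (fun _ => norm_decayingAmplitude_sub_le 1) hsqrt)⟩

theorem IsRecessive.tendsto_relativeValue (hy : IsRecessive μ y) (hη : |η| ≤ Real.pi / 5) :
    Tendsto (fun r : ℝ => relativeValue y (r * cis η)) atTop (𝓝 1) := by
  have h := (hy.tendsto_amplitudes_ray hη).1.add (hy.tendsto_amplitudes_ray hη).2
  rw [zero_add] at h
  exact h.congr fun r => by ring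

theorem IsRecessive.tendsto_relativeSlope (hy : IsRecessive μ y) (hη : |η| ≤ Real.pi / 5) :
    Tendsto (fun r : ℝ => relativeSlope y (r * cis η)) atTop (𝓝 (-1)) := by
  have h := (hy.tendsto_amplitudes_ray hη).1.sub (hy.tendsto_amplitudes_ray hη).2
  rw [zero_sub] at h
  exact h.congr fun r => by ring

theorem norm_leadingWave_ray_le (hr : 0 < r) (hη : |η| ≤ Real.pi / 5) :
    ‖leadingWave (r * cis η)‖ ≤ r ^ (-3 / 4 : ℝ) := by
  have hcos : 0 ≤ Real.cos (5 / 2 * η) :=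
    Real.cos_nonneg_of_mem_Icc ⟨by linarith [(abs_le.1 hη).1], by linarith [(abs_le.1 hη).2]⟩
  have hphase : 2 / 5 * (((r ^ (5 / 2 : ℝ) : ℝ) : ℂ) * cis (5 / 2 * η)) =
      ((2 / 5 * r ^ (5 / 2 : ℝ) : ℝ) : ℂ) * cis (5 / 2 * η) := by
    push_cast
    ring
  rw [leadingWave, mul_cis_cpow_of_abs_le hr hη, mul_cis_cpow_of_abs_le hr hη, norm_mul,
    norm_mul_cis (Real.rpow_nonneg hr.le _), norm_exp, hphase, neg_re, re_ofReal_mul, cis,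
    exp_ofReal_mul_I_re]
  refine mul_le_of_le_one_right (Real.rpow_nonneg hr.le _) (Real.exp_le_one_iff.2 ?_)
  exact neg_nonpos.2 (by positivity)

end Ray

section Connection

variable {η r : ℝ}

theorem cis_pi : cis Real.pi = -1 := exp_pi_mul_I

theorem cis_neg (x : ℝ) : cis (-x) = (cis x)⁻¹ := by
  rw [cis, cis, ← exp_neg, ofReal_neg, neg_mul]

theorem cis_pow (x : ℝ) (n : ℕ) : cis x ^ n = cis (n * x) := by
  rw [cis, cis, ← exp_nat_mul, ofReal_mul, ofReal_natCast, mul_assoc]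

theorem cis_five_mul (hη : |η| = Real.pi / 5) : cis (5 * η) = -1 := by
  rcases eq_or_eq_neg_of_abs_eq hη with rfl | rfl
  · rw [show 5 * (Real.pi / 5) = Real.pi by ring, cis_pi]
  · rw [show 5 * -(Real.pi / 5) = -Real.pi by ring, cis_neg, cis_pi]
    norm_num

theorem cis_neg_two_mul_mul_cis (η : ℝ) : cis (-2 * η) * (r * cis η) = r * cis (-η) := by
  rw [mul_left_comm, ← cis_add]
  ring_nf

theorem leadingMomentum_ray (hr : 0 < r) (hη : |η| ≤ Real.pi / 5) :
    leadingMomentum (r * cis η) = (r ^ (3 / 2 : ℝ) : ℝ) * cis (3 / 2 * η) :=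
  mul_cis_cpow_of_abs_le hr hη _

theorem leadingMomentum_reflect (hr : 0 < r) (hη : |η| = Real.pi / 5) :
    cis (-2 * η) * leadingMomentum (r * cis (-η)) = -leadingMomentum (r * cis η) := by
  have hangle : -2 * η + 3 / 2 * -η = -(5 * η) + 3 / 2 * η := by ring
  rw [leadingMomentum_ray hr hη.le, leadingMomentum_ray hr (by rw [abs_neg, hη]), mul_left_comm,
    ← cis_add, hangle, cis_add, cis_neg, cis_five_mul hη]
  ring

theorem leadingCorrection_reflect (r η : ℝ) :
    cis (-2 * η) * leadingCorrection (r * cis (-η)) = leadingCorrection (r * cis η) := by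
  have hrot := cis_ne_zero (-2 * η)
  rw [← cis_neg_two_mul_mul_cis, leadingCorrection, leadingCorrection]
  generalize cis (-2 * η) = ω at hrot ⊢
  field_simp

theorem leadingWave_reflect (hr : 0 < r) (hη : |η| = Real.pi / 5) :
    leadingWave (r * cis η) * leadingWave (r * cis (-η)) * leadingMomentum (r * cis η) =
      cis (3 / 2 * η) := by
  have hη' : |-η| ≤ Real.pi / 5 := by rw [abs_neg, hη]
  have hpow :
      ((r ^ (-3 / 4 : ℝ) : ℝ) : ℂ) * (r ^ (-3 / 4 : ℝ) : ℝ) * (r ^ (3 / 2 : ℝ) : ℝ) = 1 := by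
    rw [← ofReal_mul, ← ofReal_mul, ← Real.rpow_add hr, ← Real.rpow_add hr]
    norm_num
  have hcis : cis (-3 / 4 * η) * cis (-3 / 4 * -η) = 1 := by
    rw [← cis_add, ← cis_zero]
    ring_nf
  have hphase : cis (5 / 2 * -η) = -cis (5 / 2 * η) := by
    rw [show 5 / 2 * -η = -(5 * η) + 5 / 2 * η by ring, cis_add, cis_neg, cis_five_mul hη]
    ring
  have hexp (z : ℂ) : exp (-(2 / 5 * z)) * exp (-(2 / 5 * -z)) = 1 := by
    rw [← exp_add, ← exp_zero]
    ring_nf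
  rw [leadingMomentum_ray hr hη.le]
  simp only [leadingWave, mul_cis_cpow_of_abs_le hr hη.le, mul_cis_cpow_of_abs_le hr hη', hphase,
    mul_neg (_ : ℂ) (cis _)]
  specialize hexp ((r ^ (5 / 2 : ℝ) : ℝ) * cis (5 / 2 * η))
  linear_combination
    cis (3 / 2 * η) * (hpow + (r ^ (-3 / 4 : ℝ) : ℝ) * (r ^ (-3 / 4 : ℝ) : ℝ) *
      (r ^ (3 / 2 : ℝ) : ℝ) * (hcis + cis (-3 / 4 * η) * cis (-3 / 4 * -η) * hexp))

theorem cis_neg_two_mul_pow_five (hη : |η| = Real.pi / 5) : cis (-2 * η) ^ 5 = 1 := by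
  rw [cis_pow, show ((5 : ℕ) : ℝ) * (-2 * η) = -(5 * η) + -(5 * η) by push_cast; ring, cis_add,
    cis_neg, cis_five_mul hη]
  norm_num

theorem IsSolution.rotate {μ ω : ℂ} {y : ℂ → ℂ} (hy : IsSolution μ y) (hω : ω ^ 5 = 1) :
    IsSolution (ω ^ 2 * μ) fun s => y (ω * s) := by
  have hmul (s : ℂ) : HasDerivAt (fun s => ω * s) ω s := hasDerivAt_const_mul ω
  refine IsSolution.of_hasDerivAt (y' := fun s => deriv y (ω * s) * ω)
    (fun s => (hy.hasDerivAt (ω * s)).comp s (hmul s)) fun s => ?_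
  refine (((hy.hasDerivAt_deriv (ω * s)).comp s (hmul s)).mul_const ω).congr_deriv ?_
  linear_combination s ^ 3 * y (ω * s) * hω

theorem IsRecessive.wronskian_reflect {μ : ℂ} {f g : ℂ → ℂ}
    (hf : IsRecessive (cis (-2 * η) ^ 2 * μ) f) (hg : IsRecessive μ g) (hη : |η| = Real.pi / 5)
    (s : ℂ) :
    f s * deriv (fun s => g (cis (-2 * η) * s)) s - deriv f s * g (cis (-2 * η) * s) =
      2 * cis (3 / 2 * η) := by
  have hη' : |-η| ≤ Real.pi / 5 := by rw [abs_neg, hη]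
  have hlim : Tendsto (fun r : ℝ => cis (3 / 2 * η) *
      (-(relativeValue f (r * cis η) * relativeSlope g (r * cis (-η))) -
        relativeSlope f (r * cis η) * relativeValue g (r * cis (-η))))
      atTop (𝓝 (2 * cis (3 / 2 * η))) := by
    convert (((hf.tendsto_relativeValue hη.le).mul (hg.tendsto_relativeSlope hη')).neg.sub
      ((hf.tendsto_relativeSlope hη.le).mul (hg.tendsto_relativeValue hη'))).const_mul
        (cis (3 / 2 * η)) using 2
    ring
  refine tendsto_nhds_unique tendsto_const_nhds (hlim.congr' ?_)
  filter_upwards [eventually_gt_atTop 0] with r hr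
  have hs := mul_cis_mem_slitPlane_of_abs_le hr hη.le
  have ht := mul_cis_mem_slitPlane_of_abs_le hr hη'
  rw [hf.wronskian_eq (hg.rotate (cis_neg_two_mul_pow_five hη)) s (r * cis η),
    deriv_comp_mul_left, smul_eq_mul, cis_neg_two_mul_mul_cis, eq_relativeValue_mul f hs,
    deriv_eq_relativeSlope_mul f hs,
    eq_relativeValue_mul g ht, deriv_eq_relativeSlope_mul g ht]
  have hmomentum := leadingMomentum_reflect hr hη
  have hcorrection := leadingCorrection_reflect r η
  have hwave := leadingWave_reflect hr hη
  set s := (r : ℂ) * cis η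
  set t := (r : ℂ) * cis (-η)
  linear_combination
    (relativeValue f s * relativeSlope g t + relativeSlope f s * relativeValue g t) * hwave -
      relativeValue f s * leadingWave s * leadingWave t *
        (relativeSlope g t * hmomentum - relativeValue g t * hcorrection)

end Connection

/-! ### The quantization condition -/

section Conjugation

variable {μ : ℂ} {y : ℂ → ℂ}

theorem IsSolution.conj (hy : IsSolution μ y) : IsSolution (conj μ) (conj ∘ y ∘ conj) := by
  refine IsSolution.of_hasDerivAt (y' := conj ∘ deriv y ∘ conj)
    (fun s => hasDerivAt_conj_conj_iff.2 ?_) fun s => hasDerivAt_conj_conj_iff.2 ?_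
  · simpa using hy.hasDerivAt (starRingEnd ℂ s)
  · simpa using hy.hasDerivAt_deriv (starRingEnd ℂ s)

theorem deviation_conj (P G Φ b₀ y y' : ℂ) :
    deviation (conj P) (conj G) (conj Φ) (conj b₀) (conj y) (conj y') =
      deviation P G Φ b₀ y y' := by
  have hα : growingAmplitude (conj P) (conj G) (conj Φ) (conj y) (conj y') =
      conj (growingAmplitude P G Φ y y') := by
    simp only [growingAmplitude, map_div₀, map_add, map_mul, conj_ofNat]
  have hβ : decayingAmplitude (conj P) (conj G) (conj Φ) (conj y) (conj y') =
      conj (decayingAmplitude P G Φ y y') := by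
    simp only [decayingAmplitude, map_div₀, map_add, map_sub, map_mul, conj_ofNat]
  rw [deviation, hα, hβ, ← map_sub, norm_conj, norm_conj, deviation]

theorem asymptoticDeviation_conj (y : ℂ → ℂ) {r : ℝ} (hr : 0 ≤ r) :
    asymptoticDeviation (conj ∘ y ∘ conj) r 1 = asymptoticDeviation y r 1 := by
  have hpow (c : ℝ) : conj ((r : ℂ) ^ (c : ℂ)) = (r : ℂ) ^ (c : ℂ) := by
    rw [← ofReal_cpow hr, conj_ofReal]
  rw [asymptoticDeviation, asymptoticDeviation, ← deviation_conj, deriv_conj_conj]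
  simp only [Function.comp_apply, conj_conj, conj_ofReal, leadingMomentum, leadingCorrection,
    leadingWave, map_mul, map_div₀, map_one, map_neg, hpow, ← exp_conj, conj_ofNat]

theorem IsRecessive.conj (hy : IsRecessive μ y) : IsRecessive (conj μ) (conj ∘ y ∘ conj) where
  toIsSolution := hy.toIsSolution.conj
  tendsto_deviation := hy.tendsto_deviation.congr' <| by
    filter_upwards [eventually_ge_atTop 0] with r hr
    rw [asymptoticDeviation_conj y hr]

theorem cis_conj (x : ℝ) : conj (cis x) = cis (-x) := by
  rw [cis, cis, ← exp_conj, map_mul, conj_I, conj_ofReal, ofReal_neg, mul_neg, neg_mul]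

end Conjugation

section Decay

variable {μ : ℂ} {y : ℂ → ℂ} {η : ℝ}

theorem IsRecessive.eventually_ne_zero (hy : IsRecessive μ y) (hη : |η| ≤ Real.pi / 5) :
    ∀ᶠ r : ℝ in atTop, y (r * cis η) ≠ 0 := by
  filter_upwards [(hy.tendsto_relativeValue hη).eventually_ne one_ne_zero] with r hr h0
  exact hr (by rw [relativeValue, h0, zero_div])

theorem IsRecessive.eventually_norm_le (hy : IsRecessive μ y) (hη : |η| ≤ Real.pi / 5) :
    ∀ᶠ r : ℝ in atTop, ‖y (r * cis η)‖ ≤ 2 * r ^ (-3 / 4 : ℝ) := by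
  filter_upwards [(hy.tendsto_relativeValue hη).norm.eventually_le_const (u := 2) (by simp),
    eventually_gt_atTop 0] with r hratio hr
  rw [eq_relativeValue_mul y (mul_cis_mem_slitPlane_of_abs_le hr hη), norm_mul]
  exact mul_le_mul hratio (norm_leadingWave_ray_le hr hη) (norm_nonneg _) zero_le_two

theorem IsRecessive.tendsto_zero (hy : IsRecessive μ y) :
    Tendsto (fun r : ℝ => y r) atTop (𝓝 0) := by
  have hlim : Tendsto (fun r : ℝ => 2 * r ^ (-3 / 4 : ℝ)) atTop (𝓝 0) := by
    simpa [neg_div] using (tendsto_rpow_neg_atTop (y := (3 / 4 : ℝ)) (by norm_num)).const_mul 2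
  refine squeeze_zero_norm' ?_ hlim
  simpa only [cis_zero, mul_one] using hy.eventually_norm_le (η := 0) (by rw [abs_zero]; positivity)

end Decay

section NonvanishingAtZero

variable {lam : ℝ} {y : ℂ → ℂ}

theorem IsSolution.monotoneOn_inner_deriv (hy : IsSolution lam y) (hlam : 0 ≤ lam) :
    MonotoneOn (fun x : ℝ => inner ℝ (y x) (deriv y x)) (Set.Ici 0) := by
  have hderiv (x : ℝ) : HasDerivAt (fun x : ℝ => inner ℝ (y x) (deriv y x))
      ((x ^ 3 + lam) * ‖y x‖ ^ 2 + ‖deriv y x‖ ^ 2) x := by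
    refine ((hy.hasDerivAt x).comp_ofReal.inner ℝ
      (hy.hasDerivAt_deriv x).comp_ofReal).congr_deriv ?_
    rw [show ((x : ℂ) ^ 3 + lam) * y x = (x ^ 3 + lam : ℝ) • y x by rw [real_smul]; push_cast; ring,
      real_inner_smul_right, real_inner_self_eq_norm_sq, real_inner_self_eq_norm_sq]
  refine monotoneOn_of_hasDerivWithinAt_nonneg (convex_Ici 0)
    (fun x _ => (hderiv x).continuousAt.continuousWithinAt)
    (fun x _ => (hderiv x).hasDerivWithinAt) fun x hx => ?_
  have : 0 ≤ x := interior_subset hx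
  positivity

theorem IsSolution.monotoneOn_norm_sq (hy : IsSolution lam y) (hlam : 0 ≤ lam) (h0 : y 0 = 0) :
    MonotoneOn (fun x : ℝ => ‖y x‖ ^ 2) (Set.Ici 0) := by
  have hderiv (x : ℝ) := (hy.hasDerivAt x).comp_ofReal.norm_sq
  refine monotoneOn_of_hasDerivWithinAt_nonneg (convex_Ici 0)
    (fun x _ => (hderiv x).continuousAt.continuousWithinAt)
    (fun x _ => (hderiv x).hasDerivWithinAt) fun x hx => ?_
  have hx : 0 ≤ x := interior_subset hx
  have := hy.monotoneOn_inner_deriv hlam Set.self_mem_Ici hx hx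
  simp only [ofReal_zero, h0, inner_zero_left] at this
  positivity

theorem IsRecessive.apply_zero_ne_zero (hy : IsRecessive lam y) (hlam : 0 ≤ lam) : y 0 ≠ 0 := by
  intro h0
  have hvanish (r : ℝ) (hr : 0 ≤ r) : y r = 0 := by
    have hle : ‖y r‖ ^ 2 ≤ ‖(0 : ℂ)‖ ^ 2 := by
      refine ge_of_tendsto (hy.tendsto_zero.norm.pow 2) ?_
      filter_upwards [eventually_ge_atTop r] with x hx
      exact hy.monotoneOn_norm_sq hlam h0 hr (hr.trans hx) hx
    simpa using hle
  obtain ⟨r, hne, hr⟩ := ((hy.eventually_ne_zero (η := 0) (by rw [abs_zero]; positivity)).and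
    (eventually_ge_atTop 0)).exists
  rw [cis_zero, mul_one] at hne
  exact hne (hvanish r hr)

end NonvanishingAtZero

theorem IsSolution.isEigenvalueICO {lam : ℂ} {y : ℂ → ℂ} (hy : IsSolution lam y)
    (hne : ∃ x : ℝ, y (I * x) ≠ 0) (hint : Integrable fun x : ℝ => ‖y (I * x)‖ ^ 2) :
    IsEigenvalueICO lam := by
  have hcomp {F : ℂ → ℂ} {F' : ℂ} {x : ℝ} (hF : HasDerivAt F F' (I * x)) :
      HasDerivAt (fun x : ℝ => F (I * x)) (F' * I) x :=
    (hF.comp (x : ℂ) (hasDerivAt_const_mul I)).comp_ofReal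
  have hderiv : deriv (fun x : ℝ => y (I * x)) = fun x : ℝ => deriv y (I * x) * I :=
    deriv_eq fun x => hcomp (hy.hasDerivAt _)
  have hderiv₂ (x : ℝ) := ((hcomp (hy.hasDerivAt_deriv (I * x))).mul_const I).deriv
  have hsmooth : ContDiff ℝ 2 fun x : ℝ => y (I * x) :=
    (hy.differentiable.contDiff.restrict_scalars ℝ).comp (contDiff_const.mul ofRealCLM.contDiff)
  obtain ⟨x, hx⟩ := hne
  refine ⟨fun x => y (I * x), fun h => hx (congrFun h x), hsmooth, hint, fun x => ?_⟩
  rw [hderiv, hderiv₂]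
  linear_combination (-lam * y (I * x) - x ^ 3 * y (I * x) * (I ^ 3 - I)) * I_sq

/-- The solution of `y'' = (s³ + λ) y` which is recessive in the direction `exp (2πi / 5)`. -/
noncomputable def rotatedSolution (lam : ℝ) (s : ℂ) : ℂ :=
  subdominantSolution (cis (4 * Real.pi / 5) * lam) (cis (-2 * (Real.pi / 5)) * s)

/-- The real function of `λ` whose zeros are eigenvalues: it measures how far `rotatedSolution λ`
is from having, up to a constant phase, a real value at `0`. -/
noncomputable def quantizationFunction (lam : ℝ) : ℝ :=
  (cis (-(3 * Real.pi / 10)) * subdominantSolution (cis (4 * Real.pi / 5) * lam) 0).im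

theorem continuous_quantizationFunction : Continuous quantizationFunction :=
  continuous_im.comp <| continuous_const.mul <|
    continuous_subdominantSolution_zero.comp (continuous_const.mul continuous_ofReal)

section Quantization

variable {lam : ℝ}

theorem abs_pi_div_five : |Real.pi / 5| = Real.pi / 5 := abs_of_pos (by positivity)

theorem cis_sq_mul_spectralParameter (lam : ℝ) :
    cis (-2 * (Real.pi / 5)) ^ 2 * (cis (4 * Real.pi / 5) * lam) = lam := by
  rw [cis_pow, ← mul_assoc, ← cis_add,
    show ((2 : ℕ) : ℝ) * (-2 * (Real.pi / 5)) + 4 * Real.pi / 5 = 0 by push_cast; ring, cis_zero,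
    one_mul]

theorem cis_sq_mul_conj_spectralParameter (lam : ℝ) :
    cis (-2 * -(Real.pi / 5)) ^ 2 * conj (cis (4 * Real.pi / 5) * lam) = lam := by
  rw [mul_neg, ← cis_conj, ← map_pow, ← map_mul, cis_sq_mul_spectralParameter, conj_ofReal]

theorem isSolution_rotatedSolution (lam : ℝ) : IsSolution lam (rotatedSolution lam) := by
  have h := (isSolution_subdominantSolution (cis (4 * Real.pi / 5) * lam)).rotate
    (cis_neg_two_mul_pow_five abs_pi_div_five)
  rwa [cis_sq_mul_spectralParameter] at h

theorem isSolution_conj_rotatedSolution (lam : ℝ) :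
    IsSolution lam (conj ∘ rotatedSolution lam ∘ conj) := by
  simpa only [conj_ofReal] using (isSolution_rotatedSolution lam).conj

theorem IsRecessive.wronskian_rotatedSolution {f : ℂ → ℂ} (hf : IsRecessive lam f) (s : ℂ) :
    f s * deriv (rotatedSolution lam) s - deriv f s * rotatedSolution lam s =
      2 * cis (3 * Real.pi / 10) := by
  have h := IsRecessive.wronskian_reflect (by rwa [cis_sq_mul_spectralParameter])
    (isRecessive_subdominantSolution (cis (4 * Real.pi / 5) * lam)) abs_pi_div_five s
  rwa [show 3 / 2 * (Real.pi / 5) = 3 * Real.pi / 10 by ring] at h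

theorem IsRecessive.wronskian_conj_rotatedSolution {f : ℂ → ℂ} (hf : IsRecessive lam f) (s : ℂ) :
    f s * deriv (conj ∘ rotatedSolution lam ∘ conj) s -
      deriv f s * (conj ∘ rotatedSolution lam ∘ conj) s = 2 * cis (-(3 * Real.pi / 10)) := by
  have h := IsRecessive.wronskian_reflect (by rwa [cis_sq_mul_conj_spectralParameter])
    (isRecessive_subdominantSolution (cis (4 * Real.pi / 5) * lam)).conj
    (by rw [abs_neg, abs_pi_div_five]) s
  have hreflect (s : ℂ) : (conj ∘ subdominantSolution (cis (4 * Real.pi / 5) * lam) ∘ conj)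
      (cis (-2 * -(Real.pi / 5)) * s) = (conj ∘ rotatedSolution lam ∘ conj) s := by
    simp only [Function.comp_apply, rotatedSolution, map_mul, cis_conj, neg_mul, mul_neg, neg_neg]
  simp only [hreflect] at h
  rwa [show 3 / 2 * -(Real.pi / 5) = -(3 * Real.pi / 10) by ring] at h

theorem rotatedSolution_I_mul (lam x : ℝ) : rotatedSolution lam (I * x) =
    subdominantSolution (cis (4 * Real.pi / 5) * lam) (x * cis (Real.pi / 10)) := by
  have hI : I = cis (Real.pi / 2) := by
    rw [cis, ofReal_div, ofReal_ofNat, exp_pi_div_two_mul_I]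
  rw [rotatedSolution, hI, ← mul_assoc, ← cis_add, mul_comm]
  ring_nf

-- At a zero of `quantizationFunction` the recessive solutions in the two directions
-- `exp (±2πi / 5)` are proportional, because the recessive solution on the real axis does not
-- vanish at `0`.
theorem rotatedSolution_eq_phase_mul (hlam : 0 ≤ lam) (hq : quantizationFunction lam = 0) (s : ℂ) :
    cis (-(3 * Real.pi / 10)) * rotatedSolution lam s =
      cis (3 * Real.pi / 10) * conj (rotatedSolution lam (conj s)) := by
  obtain ⟨f, hf⟩ : ∃ f, IsRecessive lam f := ⟨_, isRecessive_subdominantSolution lam⟩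
  set h := rotatedSolution lam
  set k := conj ∘ h ∘ conj
  have hident (s : ℂ) : f s * (h 0 * deriv k 0 - deriv h 0 * k 0) =
      2 * (cis (-(3 * Real.pi / 10)) * h s - cis (3 * Real.pi / 10) * k s) := by
    rw [← (isSolution_rotatedSolution lam).wronskian_eq (isSolution_conj_rotatedSolution lam) s 0]
    linear_combination h s * hf.wronskian_conj_rotatedSolution s -
      k s * hf.wronskian_rotatedSolution s
  have hreal : cis (-(3 * Real.pi / 10)) * h 0 = cis (3 * Real.pi / 10) * k 0 := by
    have := conj_eq_iff_im.2 hq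
    rw [map_mul, cis_conj, neg_neg] at this
    simpa only [h, k, Function.comp_apply, rotatedSolution, map_zero, mul_zero] using this.symm
  have hproportional : h 0 * deriv k 0 - deriv h 0 * k 0 = 0 := by
    have h0 := hident 0
    rw [hreal, sub_self, mul_zero] at h0
    exact (mul_eq_zero.1 h0).resolve_left (hf.apply_zero_ne_zero hlam)
  have hs := hident s
  rw [hproportional, mul_zero] at hs
  exact sub_eq_zero.1 ((mul_eq_zero.1 hs.symm).resolve_left two_ne_zero)

theorem norm_rotatedSolution_conj (hlam : 0 ≤ lam) (hq : quantizationFunction lam = 0) (s : ℂ) :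
    ‖rotatedSolution lam (conj s)‖ = ‖rotatedSolution lam s‖ := by
  have h := congrArg norm (rotatedSolution_eq_phase_mul hlam hq s)
  rw [norm_mul, norm_mul, norm_cis, norm_cis, one_mul, one_mul, norm_conj] at h
  exact h.symm

theorem rotatedSolution_isBigO (lam : ℝ) :
    (fun x : ℝ => ‖rotatedSolution lam (I * x)‖ ^ 2) =O[atTop] fun x => x ^ (-3 / 2 : ℝ) := by
  refine Asymptotics.IsBigO.of_bound 4 ?_
  filter_upwards [(isRecessive_subdominantSolution (cis (4 * Real.pi / 5) * lam)).eventually_norm_le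
    (η := Real.pi / 10) (by rw [abs_of_pos (by positivity)]; linarith [Real.pi_pos]),
    eventually_ge_atTop 0] with x hx h0
  rw [rotatedSolution_I_mul, Real.norm_of_nonneg (sq_nonneg _),
    Real.norm_of_nonneg (Real.rpow_nonneg h0 _)]
  calc _ ≤ (2 * x ^ (-3 / 4 : ℝ)) ^ 2 := pow_le_pow_left₀ (norm_nonneg _) hx 2
    _ = 4 * x ^ (-3 / 2 : ℝ) := by
      rw [mul_pow, ← Real.rpow_mul_natCast h0]
      norm_num

theorem isEigenvalueICO_of_quantizationFunction_eq_zero (hlam : 0 ≤ lam)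
    (hq : quantizationFunction lam = 0) : IsEigenvalueICO lam := by
  have hcont : Continuous fun x : ℝ => ‖rotatedSolution lam (I * x)‖ ^ 2 := by
    have := (isSolution_rotatedSolution lam).differentiable.continuous
    fun_prop
  have heven (x : ℝ) : ‖rotatedSolution lam (I * x)‖ = ‖rotatedSolution lam (I * (-x : ℝ))‖ := by
    rw [← norm_rotatedSolution_conj hlam hq, map_mul, conj_I, conj_ofReal, ofReal_neg, mul_neg,
      neg_mul]
  refine (isSolution_rotatedSolution lam).isEigenvalueICO ?_ ?_
  · simp only [rotatedSolution_I_mul]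
    exact ((isRecessive_subdominantSolution _).eventually_ne_zero
      (by rw [abs_of_pos (by positivity)]; linarith [Real.pi_pos])).exists
  · refine hcont.locallyIntegrable.integrable_of_isBigO_atTop_of_norm_isNegInvariant
      (Eventually.of_forall fun x => ?_) (rotatedSolution_isBigO lam)
      (integrableAtFilter_rpow_atTop_iff.2 (by norm_num))
    simp only [Function.comp_apply, heven x]

end Quantization

/-! ### The action integral -/

/-- The square root with nonnegative real and imaginary parts. It is continuous on `ℂ`, but
squares to `z` only for `0 ≤ z.im`. -/
noncomputable def upperSqrt (z : ℂ) : ℂ :=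
  ⟨√((‖z‖ + z.re) / 2), √((‖z‖ - z.re) / 2)⟩

section UpperSqrt

variable {z : ℂ}

theorem re_upperSqrt_nonneg (z : ℂ) : 0 ≤ (upperSqrt z).re := Real.sqrt_nonneg _

theorem continuous_upperSqrt : Continuous upperSqrt := by
  have h : upperSqrt = fun z : ℂ => (√((‖z‖ + z.re) / 2) : ℂ) + √((‖z‖ - z.re) / 2) * I :=
    funext fun z => mk_eq_add_mul_I _ _
  rw [h]
  fun_prop

theorem upperSqrt_sq (hz : 0 ≤ z.im) : upperSqrt z ^ 2 = z := by
  have hre := abs_le.1 (abs_re_le_norm z)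
  have hadd := Real.sq_sqrt (show 0 ≤ (‖z‖ + z.re) / 2 by linarith)
  have hsub := Real.sq_sqrt (show 0 ≤ (‖z‖ - z.re) / 2 by linarith)
  have him : √((‖z‖ + z.re) / 2) * √((‖z‖ - z.re) / 2) = z.im / 2 := by
    rw [← Real.sqrt_mul (by linarith), Real.sqrt_eq_iff_mul_self_eq (by nlinarith) (by linarith)]
    have := Complex.sq_norm z
    rw [normSq_apply] at this
    linarith
  apply Complex.ext
  · simp only [upperSqrt, pow_two, mul_re]
    linarith
  · simp only [upperSqrt, pow_two, mul_im]
    linarith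

theorem upperSqrt_ofReal (x : ℝ) : upperSqrt x = √x + √(-x) * I := by
  rw [upperSqrt, mk_eq_add_mul_I, norm_real, Real.norm_eq_abs, ofReal_re]
  rcases le_total 0 x with hx | hx
  · rw [abs_of_nonneg hx, Real.sqrt_eq_zero_of_nonpos (neg_nonpos.2 hx), add_self_div_two,
      sub_self, zero_div, Real.sqrt_zero]
  · rw [abs_of_nonpos hx, Real.sqrt_eq_zero_of_nonpos hx, neg_add_cancel, zero_div,
      Real.sqrt_zero, show (-x - x) / 2 = -x by ring]

theorem norm_upperSqrt_sq (hz : 0 ≤ z.im) : ‖upperSqrt z‖ ^ 2 = ‖z‖ := by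
  rw [← norm_pow, upperSqrt_sq hz]

theorem ne_zero_of_im_pos (hz : 0 < z.im) : z ≠ 0 := by
  rintro rfl
  simp at hz

theorem upperSqrt_ne_zero (hz : 0 < z.im) : upperSqrt z ≠ 0 := fun h =>
  ne_zero_of_im_pos hz (by rw [← upperSqrt_sq hz.le, h, zero_pow two_ne_zero])

theorem hasDerivAt_upperSqrt (hz : 0 < z.im) : HasDerivAt upperSqrt (1 / (2 * upperSqrt z)) z := by
  have hsq : HasDerivAt (fun w : ℂ => w ^ 2) (2 * upperSqrt z) (upperSqrt z) := by
    simpa using hasDerivAt_pow 2 (upperSqrt z)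
  have him : ∀ᶠ w in 𝓝 z, 0 < w.im := continuous_im.continuousAt.eventually (lt_mem_nhds hz)
  rw [one_div]
  exact hsq.of_local_left_inverse continuous_upperSqrt.continuousAt
    (mul_ne_zero two_ne_zero (upperSqrt_ne_zero hz)) (him.mono fun w hw => upperSqrt_sq hw.le)

end UpperSqrt

/-- The action integral `∫₀ᴿ √(t³ + μ) dt`, the WKB phase of `y'' = (t³ + μ) y`. -/
noncomputable def action (μ : ℂ) (R : ℝ) : ℂ := ∫ t in (0 : ℝ)..R, upperSqrt (t ^ 3 + μ)

section Action

variable {μ : ℂ}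

theorem im_cube_add (μ : ℂ) (t : ℝ) : ((t : ℂ) ^ 3 + μ).im = μ.im := by
  rw [← ofReal_pow, add_im, ofReal_im, zero_add]

theorem cube_add_ne_zero (hμ : 0 < μ.im) (t : ℝ) : (t : ℂ) ^ 3 + μ ≠ 0 :=
  ne_zero_of_im_pos (by rwa [im_cube_add])

theorem upperSqrt_cube_add_ne_zero (hμ : 0 < μ.im) (t : ℝ) : upperSqrt (t ^ 3 + μ) ≠ 0 :=
  upperSqrt_ne_zero (by rwa [im_cube_add])

theorem hasDerivAt_upperSqrt_cube_add (hμ : 0 < μ.im) (t : ℝ) :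
    HasDerivAt upperSqrt (1 / (2 * upperSqrt (t ^ 3 + μ))) (t ^ 3 + μ) :=
  hasDerivAt_upperSqrt (by rwa [im_cube_add])

theorem continuous_upperSqrt_cube_add (μ : ℂ) : Continuous fun t : ℝ => upperSqrt (t ^ 3 + μ) :=
  continuous_upperSqrt.comp (by fun_prop)

theorem continuous_inv_upperSqrt_cube_add (hμ : 0 < μ.im) :
    Continuous fun t : ℝ => 1 / (2 * upperSqrt (t ^ 3 + μ)) :=
  continuous_const.div (continuous_const.mul (continuous_upperSqrt_cube_add μ))
    fun t => mul_ne_zero two_ne_zero (upperSqrt_cube_add_ne_zero hμ t)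

theorem hasDerivAt_action_right (μ : ℂ) (R : ℝ) :
    HasDerivAt (action μ) (upperSqrt (R ^ 3 + μ)) R :=
  (continuous_upperSqrt_cube_add μ).integral_hasStrictDerivAt 0 R |>.hasDerivAt

theorem continuous_action (R : ℝ) : Continuous fun μ => action μ R :=
  intervalIntegral.continuous_parametric_intervalIntegral_of_continuous'
    (f := fun (μ : ℂ) (t : ℝ) => upperSqrt (t ^ 3 + μ))
    (continuous_upperSqrt.comp (by fun_prop)) 0 R

theorem norm_inv_upperSqrt_cube_add_le (hμ : 0 < μ.im) {w : ℂ} (hw : μ.im / 2 < w.im) (t : ℝ) :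
    ‖1 / (2 * upperSqrt (t ^ 3 + w))‖ ≤ 1 / (2 * √(μ.im / 2)) := by
  have him := im_cube_add w t
  have hsqrt : √(μ.im / 2) ≤ ‖upperSqrt (t ^ 3 + w)‖ := by
    refine Real.sqrt_le_iff.2 ⟨norm_nonneg _, ?_⟩
    rw [norm_upperSqrt_sq (by linarith)]
    linarith [im_le_norm ((t : ℂ) ^ 3 + w)]
  rw [norm_div, norm_mul, norm_one, Complex.norm_ofNat]
  gcongr

theorem hasDerivAt_action_left (hμ : 0 < μ.im) (R : ℝ) :
    HasDerivAt (fun μ => action μ R) (∫ t in (0 : ℝ)..R, 1 / (2 * upperSqrt (t ^ 3 + μ))) μ := by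
  have hnear : {w : ℂ | μ.im / 2 < w.im} ∈ 𝓝 μ :=
    continuous_im.continuousAt.eventually (lt_mem_nhds (half_lt_self hμ))
  refine (intervalIntegral.hasDerivAt_integral_of_dominated_loc_of_deriv_le (𝕜 := ℂ)
    (F := fun w t => upperSqrt (t ^ 3 + w)) (F' := fun w t => 1 / (2 * upperSqrt (t ^ 3 + w)))
    (bound := fun _ => 1 / (2 * √(μ.im / 2))) hnear
    (.of_forall fun w => (continuous_upperSqrt_cube_add w).aestronglyMeasurable)
    ((continuous_upperSqrt_cube_add μ).intervalIntegrable _ _)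
    (continuous_inv_upperSqrt_cube_add hμ).aestronglyMeasurable
    (.of_forall fun t _ w hw => norm_inv_upperSqrt_cube_add_le hμ hw t)
    intervalIntegrable_const (.of_forall fun t _ w hw => ?_)).2
  have hw0 : 0 < w.im := (half_pos hμ).trans hw
  exact ((hasDerivAt_upperSqrt_cube_add hw0 t).comp w
    ((hasDerivAt_id w).const_add ((t : ℂ) ^ 3))).congr_deriv (mul_one _)

-- Euler's relation for the homogeneity of degree `5 / 6` in `(R³, μ)`, by integrating
-- `d/dt (t √(t³ + μ))`.
theorem action_eq (hμ : 0 < μ.im) (R : ℝ) :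
    5 / 2 * action μ R = R * upperSqrt (R ^ 3 + μ) +
      3 * μ * ∫ t in (0 : ℝ)..R, 1 / (2 * upperSqrt (t ^ 3 + μ)) := by
  have hcont := (continuous_upperSqrt_cube_add μ).const_mul (5 / 2)
  have hcont_inv := (continuous_inv_upperSqrt_cube_add hμ).const_mul (3 * μ)
  have hderiv (t : ℝ) : HasDerivAt (fun t : ℝ => (t : ℂ) * upperSqrt (t ^ 3 + μ))
      (5 / 2 * upperSqrt (t ^ 3 + μ) - 3 * μ * (1 / (2 * upperSqrt (t ^ 3 + μ)))) t := by
    have hcube : HasDerivAt (fun t : ℂ => t ^ 3 + μ) (3 * (t : ℂ) ^ 2) t := by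
      simpa using (hasDerivAt_pow 3 (t : ℂ)).add_const μ
    refine ((hasDerivAt_id (t : ℂ)).mul
      ((hasDerivAt_upperSqrt_cube_add hμ t).comp (t : ℂ) hcube)).comp_ofReal.congr_deriv ?_
    have hne := upperSqrt_cube_add_ne_zero hμ t
    have hsq := upperSqrt_sq (z := (t : ℂ) ^ 3 + μ) (by rw [im_cube_add]; exact hμ.le)
    simp only [Function.comp, id]
    generalize upperSqrt ((t : ℂ) ^ 3 + μ) = w at *
    field_simp
    linear_combination (-3) * hsq
  have hint := intervalIntegral.integral_eq_sub_of_hasDerivAt (fun t _ => hderiv t)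
    ((hcont.sub hcont_inv).intervalIntegrable 0 R)
  rw [intervalIntegral.integral_sub (hcont.intervalIntegrable _ _)
    (hcont_inv.intervalIntegrable _ _), intervalIntegral.integral_const_mul,
    intervalIntegral.integral_const_mul, ofReal_zero, zero_mul, sub_zero] at hint
  rw [action]
  linear_combination hint

end Action

/-- The renormalized action at `μ = lam e^{iθ}`, rotated so that, by homogeneity, its limit as
`R → ∞` does not depend on `θ`. -/
noncomputable def rotatedAction (lam R θ : ℝ) : ℂ :=
  cis (-(5 / 6) * θ) * (action (lam * cis θ) R - (2 / 5 * R ^ (5 / 2 : ℝ) : ℝ))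

section RotatedAction

variable {lam R θ : ℝ}

theorem cis_im (x : ℝ) : (cis x).im = Real.sin x := exp_ofReal_mul_I_im x

theorem hasDerivAt_cis_mul (a x : ℝ) :
    HasDerivAt (fun θ : ℝ => cis (a * θ)) (a * I * cis (a * x)) x := by
  have h : HasDerivAt (fun t : ℝ => (a * t : ℝ)) a x := by
    simpa using (hasDerivAt_id x).const_mul a
  exact (h.ofReal_comp.mul_const I).cexp.congr_deriv (by rw [cis]; ring)

theorem continuous_cis : Continuous cis := by
  unfold cis
  fun_prop

theorem im_mul_cis_pos (hlam : 0 < lam) (hθ : θ ∈ Set.Ioo 0 Real.pi) :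
    0 < ((lam : ℂ) * cis θ).im := by
  rw [im_ofReal_mul, cis_im]
  exact mul_pos hlam (Real.sin_pos_of_pos_of_lt_pi hθ.1 hθ.2)

theorem hasDerivAt_rotatedAction (hlam : 0 < lam) (hR : 0 < R) (hθ : θ ∈ Set.Ioo 0 Real.pi) :
    HasDerivAt (rotatedAction lam R) (-(I / 3) * cis (-(5 / 6) * θ) *
      (R * (upperSqrt (R ^ 3 + lam * cis θ) - (R ^ (3 / 2 : ℝ) : ℝ)))) θ := by
  have him := im_mul_cis_pos hlam hθ
  have hμ : HasDerivAt (fun θ : ℝ => (lam : ℂ) * cis θ) (lam * (I * cis θ)) θ := by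
    simpa using (hasDerivAt_cis_mul 1 θ).const_mul (lam : ℂ)
  refine ((hasDerivAt_cis_mul (-(5 / 6)) θ).mul ((HasDerivAt.scomp θ
    (hasDerivAt_action_left him R) hμ).sub_const _)).congr_deriv ?_
  have hpow : R ^ (5 / 2 : ℝ) = R * R ^ (3 / 2 : ℝ) := by
    rw [mul_comm, ← Real.rpow_add_one hR.ne']
    norm_num
  have hid := action_eq him R
  simp only [Function.comp, smul_eq_mul, hpow]
  push_cast
  linear_combination (-(1 / 3) * I * cis (-(5 / 6) * θ)) * hid

theorem norm_upperSqrt_cube_add_sub_le (hR : 0 < R) {μ : ℂ} (hμ : 0 ≤ μ.im) :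
    ‖upperSqrt (R ^ 3 + μ) - (R ^ (3 / 2 : ℝ) : ℝ)‖ ≤ ‖μ‖ / R ^ (3 / 2 : ℝ) := by
  have hre := re_upperSqrt_nonneg ((R : ℂ) ^ 3 + μ)
  have hsq := upperSqrt_sq (z := (R : ℂ) ^ 3 + μ) (by rwa [im_cube_add])
  have hR_sq : ((R ^ (3 / 2 : ℝ) : ℝ) : ℂ) ^ 2 = R ^ 3 := by
    rw [← ofReal_pow, ← ofReal_pow, ← Real.rpow_mul_natCast hR.le, ← Real.rpow_natCast]
    norm_num
  rw [le_div_iff₀ (Real.rpow_pos_of_pos hR _)]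
  set w := upperSqrt ((R : ℂ) ^ 3 + μ)
  set q := R ^ (3 / 2 : ℝ)
  have hfactor : μ = (w - q) * (w + q) := by linear_combination -hsq + hR_sq
  have hq : q ≤ ‖w + q‖ := calc
    q ≤ (w + q).re := by rw [add_re, ofReal_re]; linarith
    _ ≤ _ := re_le_norm _
  rw [hfactor, norm_mul]
  gcongr

theorem norm_deriv_rotatedAction_le (hlam : 0 < lam) (hR : 0 < R) (hθ : θ ∈ Set.Ioo 0 Real.pi) :
    ‖-(I / 3) * cis (-(5 / 6) * θ) *
      (R * (upperSqrt (R ^ 3 + lam * cis θ) - (R ^ (3 / 2 : ℝ) : ℝ)))‖ ≤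
      lam * R ^ (-(1 / 2) : ℝ) / 3 := by
  have hdiff := norm_upperSqrt_cube_add_sub_le hR (im_mul_cis_pos hlam hθ).le
  rw [norm_mul_cis hlam.le] at hdiff
  have hpow : R ^ (-(1 / 2) : ℝ) = R / R ^ (3 / 2 : ℝ) := by
    rw [← Real.rpow_one_sub' hR.le (by norm_num)]
    norm_num
  rw [norm_mul, norm_mul, norm_cis, norm_neg, norm_div, norm_I, Complex.norm_ofNat, norm_mul,
    Complex.norm_of_nonneg hR.le, hpow]
  calc 1 / 3 * 1 * (R * ‖upperSqrt (R ^ 3 + lam * cis θ) - (R ^ (3 / 2 : ℝ) : ℝ)‖)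
      ≤ 1 / 3 * 1 * (R * (lam / R ^ (3 / 2 : ℝ))) := by gcongr
    _ = lam * (R / R ^ (3 / 2 : ℝ)) / 3 := by ring

theorem norm_rotatedAction_sub_le (hlam : 0 < lam) (hR : 0 < R) {θ₁ θ₂ : ℝ}
    (h₁ : θ₁ ∈ Set.Icc 0 Real.pi) (h₂ : θ₂ ∈ Set.Icc 0 Real.pi) :
    ‖rotatedAction lam R θ₁ - rotatedAction lam R θ₂‖ ≤ lam * R ^ (-(1 / 2) : ℝ) / 3 * 4 := by
  have hC : 0 ≤ lam * R ^ (-(1 / 2) : ℝ) / 3 := by positivity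
  have hcont : Continuous (rotatedAction lam R) :=
    (continuous_cis.comp (by fun_prop)).mul
      (((continuous_action R).comp (continuous_const.mul continuous_cis)).sub continuous_const)
  have hlip := ((convex_Ioo 0 Real.pi).lipschitzOnWith_of_nnnorm_hasDerivWithin_le
    (fun θ hθ => (hasDerivAt_rotatedAction hlam hR hθ).hasDerivWithinAt)
    (C := ⟨_, hC⟩) fun θ hθ => norm_deriv_rotatedAction_le hlam hR hθ).closure hcont.continuousOn
  rw [closure_Ioo Real.pi_ne_zero.symm] at hlip
  have hdist := hlip.dist_le_mul θ₁ h₁ θ₂ h₂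
  rw [dist_eq_norm, Real.dist_eq] at hdist
  refine hdist.trans (mul_le_mul_of_nonneg_left ?_ hC)
  exact abs_le.2 ⟨by linarith [h₁.1, h₂.2, Real.pi_le_four],
    by linarith [h₁.2, h₂.1, Real.pi_le_four]⟩

theorem rotatedAction_zero_im (hlam : 0 ≤ lam) (hR : 0 ≤ R) : (rotatedAction lam R 0).im = 0 := by
  have hreal : ∀ t ∈ Set.uIcc 0 R, upperSqrt ((t : ℂ) ^ 3 + lam) = (√(t ^ 3 + lam) : ℝ) := by
    intro t ht
    rw [Set.uIcc_of_le hR] at ht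
    have hnonneg : 0 ≤ t ^ 3 + lam := add_nonneg (pow_nonneg ht.1 3) hlam
    rw [← ofReal_pow, ← ofReal_add, upperSqrt_ofReal,
      Real.sqrt_eq_zero_of_nonpos (neg_nonpos.2 hnonneg), ofReal_zero, zero_mul, add_zero]
  rw [rotatedAction, mul_zero, cis_zero, one_mul, mul_one, action,
    intervalIntegral.integral_congr hreal, intervalIntegral.integral_ofReal, ← ofReal_sub,
    ofReal_im]

theorem integral_sqrt_sub_cube (hlam : 0 < lam) (hR : lam ^ (1 / 3 : ℝ) ≤ R) :
    ∫ t in (0 : ℝ)..R, √(lam - t ^ 3) = lam ^ (5 / 6 : ℝ) * Kconst / 2 := by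
  set c := lam ^ (1 / 3 : ℝ) with hc
  have hc3 : c ^ 3 = lam := by
    rw [hc, ← Real.rpow_mul_natCast hlam.le]
    norm_num
  have hcont : Continuous fun t : ℝ => √(lam - t ^ 3) := by fun_prop
  have htail : ∫ t in c..R, √(lam - t ^ 3) = 0 := by
    refine intervalIntegral.integral_zero_ae (.of_forall fun t ht => ?_)
    rw [Set.uIoc_of_le hR] at ht
    have : c ^ 3 ≤ t ^ 3 := pow_le_pow_left₀ (by positivity) ht.1.le 3
    exact Real.sqrt_eq_zero_of_nonpos (by linarith)
  have hscale (u : ℝ) : √(lam - (c * u) ^ 3) = √lam * √(1 - u ^ 3) := by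
    rw [← Real.sqrt_mul hlam.le, mul_pow, hc3, mul_sub, mul_one]
  have hpow : lam ^ (5 / 6 : ℝ) = c * √lam := by
    rw [hc, Real.sqrt_eq_rpow, ← Real.rpow_add hlam]
    norm_num
  have hsubst := intervalIntegral.smul_integral_comp_mul_left (a := 0) (b := 1)
    (fun t : ℝ => √(lam - t ^ 3)) c
  simp only [hscale, mul_zero, mul_one, intervalIntegral.integral_const_mul, smul_eq_mul] at hsubst
  rw [← intervalIntegral.integral_add_adjacent_intervals (hcont.intervalIntegrable 0 c)
    (hcont.intervalIntegrable c R), htail, ← hsubst, hpow, Kconst]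
  ring

theorem rotatedAction_pi_im (hlam : 0 < lam) (hR : lam ^ (1 / 3 : ℝ) ≤ R) :
    (cis (5 / 6 * Real.pi) * rotatedAction lam R Real.pi).im = lam ^ (5 / 6 : ℝ) * Kconst / 2 := by
  have him := imCLM.intervalIntegral_comp_comm
    ((continuous_upperSqrt_cube_add ((lam : ℂ) * -1)).intervalIntegrable (μ := volume) 0 R)
  simp only [imCLM_apply] at him
  rw [rotatedAction, ← mul_assoc, ← cis_add, neg_mul, add_neg_cancel, cis_zero, one_mul, sub_im,
    ofReal_im, sub_zero, cis_pi, action, ← him, ← integral_sqrt_sub_cube hlam hR]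
  refine intervalIntegral.integral_congr fun t _ => ?_
  simp only [show (t : ℂ) ^ 3 + (lam : ℂ) * -1 = ((t ^ 3 - lam : ℝ) : ℂ) by push_cast; ring]
  rw [upperSqrt_ofReal]
  simp

-- The value at `θ = 0` is real, and at `θ = π` the imaginary part of the unrotated action is the
-- integral over the classically allowed region; near-constancy in `θ` forces both to match.
theorem norm_rotatedAction_sub_const_le (hlam : 0 < lam) (hR : lam ^ (1 / 3 : ℝ) ≤ R)
    (hθ : θ ∈ Set.Icc 0 Real.pi) :
    ‖rotatedAction lam R θ - (Kconst * lam ^ (5 / 6 : ℝ) : ℝ)‖ ≤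
      3 * (lam * R ^ (-(1 / 2) : ℝ) / 3 * 4) := by
  have hR0 : 0 < R := (Real.rpow_pos_of_pos hlam _).trans_le hR
  have h0 : (0 : ℝ) ∈ Set.Icc 0 Real.pi := Set.left_mem_Icc.2 Real.pi_nonneg
  have hθ0 := norm_rotatedAction_sub_le hlam hR0 hθ h0
  have h0π := norm_rotatedAction_sub_le hlam hR0 h0 (Set.right_mem_Icc.2 Real.pi_nonneg)
  set B := lam * R ^ (-(1 / 2) : ℝ) / 3 * 4
  set L := Kconst * lam ^ (5 / 6 : ℝ)
  obtain ⟨x, hx⟩ : ∃ x : ℝ, rotatedAction lam R 0 = x :=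
    ⟨_, Complex.ext rfl (rotatedAction_zero_im hlam.le hR0.le)⟩
  have him : (cis (5 / 6 * Real.pi) * (rotatedAction lam R 0 - rotatedAction lam R Real.pi)).im =
      x / 2 - L / 2 := by
    rw [mul_sub, sub_im, rotatedAction_pi_im hlam hR, hx, mul_comm, im_ofReal_mul, cis_im,
      show 5 / 6 * Real.pi = Real.pi - Real.pi / 6 by ring, Real.sin_pi_sub, Real.sin_pi_div_six]
    ring
  have hxL : |x / 2 - L / 2| ≤ B := by
    rw [← him]
    refine (abs_im_le_norm _).trans ?_
    rwa [norm_mul, norm_cis, one_mul]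
  have hxL' : ‖((x : ℂ) - L)‖ ≤ 2 * B := by
    rw [← ofReal_sub, norm_real, Real.norm_eq_abs, abs_le]
    rw [abs_le] at hxL
    constructor <;> linarith [hxL.1, hxL.2]
  calc ‖rotatedAction lam R θ - L‖
      = ‖(rotatedAction lam R θ - rotatedAction lam R 0) + (x - L)‖ := by rw [hx]; ring_nf
    _ ≤ B + 2 * B := (norm_add_le _ _).trans (add_le_add hθ0 hxL')
    _ = 3 * B := by ring

theorem tendsto_rotatedAction (hlam : 0 < lam) (hθ : θ ∈ Set.Icc 0 Real.pi) :
    Tendsto (fun R => rotatedAction lam R θ) atTop (𝓝 (Kconst * lam ^ (5 / 6 : ℝ) : ℝ)) := by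
  rw [tendsto_iff_norm_sub_tendsto_zero]
  have hlim : Tendsto (fun R : ℝ => 3 * (lam * R ^ (-(1 / 2) : ℝ) / 3 * 4)) atTop (𝓝 0) := by
    simpa using ((((tendsto_rpow_neg_atTop (y := 1 / 2) (by norm_num)).const_mul lam).div_const
      3).mul_const 4).const_mul 3
  exact squeeze_zero' (.of_forall fun _ => norm_nonneg _)
    ((eventually_ge_atTop _).mono fun R hR => norm_rotatedAction_sub_const_le hlam hR hθ) hlim

theorem tendsto_action_sub (hlam : 0 < lam) (hθ : θ ∈ Set.Icc 0 Real.pi) :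
    Tendsto (fun R : ℝ => action (lam * cis θ) R - (2 / 5 * R ^ (5 / 2 : ℝ) : ℝ)) atTop
      (𝓝 (cis (5 / 6 * θ) * (Kconst * lam ^ (5 / 6 : ℝ) : ℝ))) := by
  refine ((tendsto_rotatedAction hlam hθ).const_mul (cis (5 / 6 * θ))).congr fun R => ?_
  rw [rotatedAction, ← mul_assoc, ← cis_add, neg_mul, add_neg_cancel, cis_zero, one_mul]

end RotatedAction

/-! ### The Liouville–Green frame on the positive real axis -/

/-- The momentum `√(s³ + μ)`. Unlike `leadingMomentum` it is uniformly accurate in `μ`, down to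
`s = 0`. -/
noncomputable def axisMomentum (μ : ℂ) (s : ℝ) : ℂ := upperSqrt (s ^ 3 + μ)

/-- The amplitude correction `P' / (2 P)` of the Liouville–Green frame with momentum
`P = axisMomentum μ`. -/
noncomputable def axisCorrection (μ : ℂ) (s : ℝ) : ℂ := 3 * s ^ 2 / (4 * (s ^ 3 + μ))

/-- The decaying Liouville–Green wave with momentum `axisMomentum μ`, normalized at the origin. -/
noncomputable def axisWave (μ : ℂ) (s : ℝ) : ℂ :=
  ((s : ℂ) ^ 3 + μ) ^ ((-1 / 4 : ℝ) : ℂ) * exp (-action μ s)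

section AxisFrame

variable {μ : ℂ}

theorem axisMomentum_sq (hμ : 0 < μ.im) (s : ℝ) : axisMomentum μ s ^ 2 = s ^ 3 + μ :=
  upperSqrt_sq (by rw [im_cube_add]; exact hμ.le)

theorem axisMomentum_ne_zero (hμ : 0 < μ.im) (s : ℝ) : axisMomentum μ s ≠ 0 :=
  upperSqrt_cube_add_ne_zero hμ s

theorem axisWave_ne_zero (hμ : 0 < μ.im) (s : ℝ) : axisWave μ s ≠ 0 := by
  simp [axisWave, cpow_eq_zero_iff, cube_add_ne_zero hμ s]

theorem hasDerivAt_cube_add (μ : ℂ) (s : ℝ) :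
    HasDerivAt (fun s : ℝ => (s : ℂ) ^ 3 + μ) (3 * (s : ℂ) ^ 2) s := by
  simpa using ((hasDerivAt_pow 3 (s : ℂ)).comp_ofReal).add_const μ

theorem hasDerivAt_axisMomentum (hμ : 0 < μ.im) (s : ℝ) :
    HasDerivAt (axisMomentum μ) (2 * axisMomentum μ s * axisCorrection μ s) s := by
  refine (HasDerivAt.scomp s (hasDerivAt_upperSqrt_cube_add hμ s)
    (hasDerivAt_cube_add μ s)).congr_deriv ?_
  have hcube := cube_add_ne_zero hμ s
  have hne := axisMomentum_ne_zero hμ s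
  have hsq := axisMomentum_sq hμ s
  rw [← axisMomentum, smul_eq_mul, axisCorrection]
  field_simp
  linear_combination (-4 * (s : ℂ) ^ 2) * hsq

theorem hasDerivAt_axisCorrection (hμ : 0 < μ.im) (s : ℝ) :
    HasDerivAt (axisCorrection μ)
      (3 * s / (2 * (s ^ 3 + μ)) - 9 * s ^ 4 / (4 * (s ^ 3 + μ) ^ 2)) s := by
  have hcube := cube_add_ne_zero hμ s
  have hsq : HasDerivAt (fun s : ℝ => (3 : ℂ) * (s : ℂ) ^ 2) (3 * (2 * (s : ℂ)) : ℂ) s := by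
    simpa using ((hasDerivAt_pow 2 (s : ℂ)).comp_ofReal).const_mul 3
  refine (hsq.div ((hasDerivAt_cube_add μ s).const_mul 4)
    (mul_ne_zero (by norm_num : (4 : ℂ) ≠ 0) hcube)).congr_deriv ?_
  field_simp
  ring

theorem hasDerivAt_axisWave (hμ : 0 < μ.im) (s : ℝ) :
    HasDerivAt (axisWave μ) (-((axisMomentum μ s + axisCorrection μ s) * axisWave μ s)) s := by
  have hcube := cube_add_ne_zero hμ s
  have hslit : (s : ℂ) ^ 3 + μ ∈ slitPlane := .inr (by rw [im_cube_add]; exact hμ.ne')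
  have hpow := HasDerivAt.scomp s
    ((hasDerivAt_id ((s : ℂ) ^ 3 + μ)).cpow_const (c := ((-1 / 4 : ℝ) : ℂ)) hslit)
    (hasDerivAt_cube_add μ s)
  refine (hpow.mul (hasDerivAt_action_right μ s).neg.cexp).congr_deriv ?_
  simp only [smul_eq_mul, Function.comp, id, axisWave, axisCorrection, axisMomentum, Pi.neg_apply]
  rw [cpow_sub _ _ hcube, cpow_one]
  field_simp
  push_cast
  ring

theorem isWKBFrameAt_axis (hμ : 0 < μ.im) (s : ℝ) :
    IsWKBFrameAt (axisMomentum μ) (axisCorrection μ) (axisWave μ)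
      (3 * s / (2 * (s ^ 3 + μ)) - 9 * s ^ 4 / (4 * (s ^ 3 + μ) ^ 2)) 1 s where
  hasDerivAt_momentum := by simpa only [mul_one] using hasDerivAt_axisMomentum hμ s
  hasDerivAt_correction := by simpa only [mul_one] using hasDerivAt_axisCorrection hμ s
  hasDerivAt_wave := by simpa only [mul_one] using hasDerivAt_axisWave hμ s
  momentum_ne_zero := axisMomentum_ne_zero hμ s
  wave_ne_zero := axisWave_ne_zero hμ s

end AxisFrame

section FrameComparison

variable {μ b₀ : ℂ} {y : ℂ → ℂ}

theorem tendsto_one_add_div_cube (μ : ℂ) :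
    Tendsto (fun s : ℝ => 1 + μ / (s : ℂ) ^ 3) atTop (𝓝 1) := by
  have h : Tendsto (fun s : ℝ => ((s ^ 3)⁻¹ : ℝ)) atTop (𝓝 0) :=
    (tendsto_pow_atTop three_ne_zero).inv_tendsto_atTop
  simpa [div_eq_mul_inv] using (h.ofReal.const_mul μ).const_add 1

theorem cube_add_eq_mul (μ : ℂ) {s : ℝ} (hs : 0 < s) :
    (s : ℂ) ^ 3 + μ = (s ^ 3 : ℝ) * (1 + μ / (s : ℂ) ^ 3) := by
  have := ofReal_ne_zero.2 hs.ne'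
  push_cast
  field_simp

theorem leadingWave_div_axisWave (hμ : 0 < μ.im) {s : ℝ} (hs : 0 < s) :
    leadingWave s / axisWave μ s = ((1 + μ / (s : ℂ) ^ 3) ^ ((-1 / 4 : ℝ) : ℂ))⁻¹ *
      exp (action μ s - (2 / 5 * s ^ (5 / 2 : ℝ) : ℝ)) := by
  have hne : 1 + μ / (s : ℂ) ^ 3 ≠ 0 := by
    have := cube_add_ne_zero hμ s
    rw [cube_add_eq_mul μ hs] at this
    exact right_ne_zero_of_mul this
  have hpow : (((s ^ 3 : ℝ) ^ (-1 / 4 : ℝ) : ℝ) : ℂ) = (s : ℂ) ^ ((-3 / 4 : ℝ) : ℂ) := by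
    rw [← Real.rpow_natCast_mul hs.le, ← ofReal_cpow hs.le]
    norm_num
  have hs0 : (s : ℂ) ^ ((-3 / 4 : ℝ) : ℂ) ≠ 0 := by
    simp [cpow_eq_zero_iff, hs.ne']
  rw [leadingWave, axisWave, cube_add_eq_mul μ hs, ofReal_mul_cpow (pow_pos hs 3) hne, hpow,
    mul_assoc, mul_div_mul_left _ _ hs0, div_mul_eq_div_div, div_eq_inv_mul, mul_comm (_ / _),
    exp_sub, exp_neg, exp_neg, ofReal_mul, ofReal_cpow hs.le]
  push_cast
  field_simp

theorem tendsto_leadingWave_div_axisWave {lam θ : ℝ} (hlam : 0 < lam)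
    (hθ : θ ∈ Set.Ioo 0 Real.pi) :
    Tendsto (fun s : ℝ => leadingWave s / axisWave (lam * cis θ) s) atTop
      (𝓝 (exp (cis (5 / 6 * θ) * (Kconst * lam ^ (5 / 6 : ℝ) : ℝ)))) := by
  have hpow := (continuousAt_cpow_const (b := ((-1 / 4 : ℝ) : ℂ)) one_mem_slitPlane).tendsto.comp
    (tendsto_one_add_div_cube (lam * cis θ))
  have h := (hpow.inv₀ (by simp)).mul
    ((continuous_exp.tendsto _).comp (tendsto_action_sub hlam (Set.Ioo_subset_Icc_self hθ)))
  rw [one_cpow, inv_one, one_mul] at h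
  exact h.congr' ((eventually_gt_atTop 0).mono fun s hs =>
    (leadingWave_div_axisWave (im_mul_cis_pos hlam hθ) hs).symm)

theorem tendsto_inv_leadingMomentum :
    Tendsto (fun s : ℝ => (leadingMomentum s)⁻¹) atTop (𝓝 0) := by
  rw [tendsto_zero_iff_norm_tendsto_zero]
  refine (tendsto_rpow_atTop (show (0 : ℝ) < 3 / 2 by norm_num)).inv_tendsto_atTop.congr' ?_
  filter_upwards [eventually_ge_atTop 0] with s hs
  rw [norm_inv, norm_leadingMomentum, Complex.norm_of_nonneg hs, Pi.inv_apply]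

theorem tendsto_leadingMomentum_div_axisMomentum (hμ : 0 < μ.im) :
    Tendsto (fun s : ℝ => leadingMomentum s / axisMomentum μ s) atTop (𝓝 1) := by
  have hinv : Tendsto (fun s : ℝ => axisMomentum μ s / leadingMomentum s) atTop (𝓝 1) := by
    have hbound : Tendsto (fun s : ℝ => ‖μ‖ * (‖(leadingMomentum s)⁻¹‖ * ‖(leadingMomentum s)⁻¹‖))
        atTop (𝓝 0) := by
      have := tendsto_inv_leadingMomentum.norm
      simpa using (this.mul this).const_mul ‖μ‖
    rw [tendsto_iff_norm_sub_tendsto_zero]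
    refine squeeze_zero' (.of_forall fun _ => norm_nonneg _) ?_ hbound
    filter_upwards [eventually_gt_atTop 0] with s hs
    have hp := leadingMomentum_ne_zero (ofReal_mem_slitPlane.2 hs)
    have hdiff := norm_upperSqrt_cube_add_sub_le hs hμ.le
    rw [ofReal_cpow hs.le, ← leadingMomentum, ← axisMomentum] at hdiff
    rw [div_sub_one hp, norm_div, norm_inv, norm_leadingMomentum, Complex.norm_of_nonneg hs.le]
    calc _ ≤ ‖μ‖ / s ^ (3 / 2 : ℝ) / s ^ (3 / 2 : ℝ) := by gcongr
      _ = _ := by ring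
  simpa using hinv.inv₀ one_ne_zero

theorem tendsto_axisCorrection_sub (hμ : 0 < μ.im) :
    Tendsto (fun s : ℝ => axisCorrection μ s - leadingCorrection s) atTop (𝓝 0) := by
  have hinv : Tendsto (fun s : ℝ => ((s⁻¹ : ℝ) : ℂ)) atTop (𝓝 0) := by
    simpa using tendsto_inv_atTop_zero.ofReal
  have h := (((tendsto_one_add_div_cube μ).inv₀ one_ne_zero).sub_const 1).mul
    (hinv.const_mul (3 / 4))
  rw [mul_zero, mul_zero] at h
  refine h.congr' ?_
  filter_upwards [eventually_gt_atTop 0] with s hs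
  have hs0 := ofReal_ne_zero.2 hs.ne'
  have hcube := cube_add_ne_zero hμ s
  have hdiv : 1 + μ / (s : ℂ) ^ 3 = ((s : ℂ) ^ 3 + μ) / (s : ℂ) ^ 3 := by field_simp
  rw [axisCorrection, leadingCorrection, hdiv]
  push_cast
  field_simp

theorem IsRecessive.tendsto_div_axisWave (hy : IsRecessive μ y)
    (hb : Tendsto (fun s : ℝ => leadingWave s / axisWave μ s) atTop (𝓝 b₀)) :
    Tendsto (fun s : ℝ => y s / axisWave μ s) atTop (𝓝 b₀) := by
  have hvalue := hy.tendsto_relativeValue (η := 0) (by rw [abs_zero]; positivity)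
  simp only [cis_zero, mul_one] at hvalue
  have h := hvalue.mul hb
  rw [one_mul] at h
  refine h.congr' ?_
  filter_upwards [eventually_gt_atTop 0] with s hs
  rw [mul_div_assoc', ← eq_relativeValue_mul y (ofReal_mem_slitPlane.2 hs)]

theorem IsRecessive.tendsto_slope_div_axisWave (hy : IsRecessive μ y) (hμ : 0 < μ.im)
    (hb : Tendsto (fun s : ℝ => leadingWave s / axisWave μ s) atTop (𝓝 b₀)) :
    Tendsto (fun s : ℝ => (deriv y s + axisCorrection μ s * y s) /
      (axisMomentum μ s * axisWave μ s)) atTop (𝓝 (-b₀)) := by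
  have h0 : |(0 : ℝ)| ≤ Real.pi / 5 := by rw [abs_zero]; positivity
  have hvalue := hy.tendsto_relativeValue h0
  have hslope := hy.tendsto_relativeSlope h0
  simp only [cis_zero, mul_one] at hvalue hslope
  have hP := tendsto_leadingMomentum_div_axisMomentum hμ
  have hG := (tendsto_axisCorrection_sub hμ).mul (tendsto_inv_leadingMomentum.mul hP)
  have h := ((hslope.mul hP).add (hG.mul hvalue)).mul hb
  simp only [mul_one, mul_zero, add_zero, neg_mul, one_mul] at h
  refine h.congr' ?_
  filter_upwards [eventually_gt_atTop 0] with s hs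
  have hslit := ofReal_mem_slitPlane.2 hs
  have hp := leadingMomentum_ne_zero hslit
  have hP := axisMomentum_ne_zero hμ s
  have hΦ := axisWave_ne_zero hμ s
  rw [deriv_eq_relativeSlope_mul y hslit, eq_relativeValue_mul y hslit]
  generalize relativeSlope y s = S
  generalize relativeValue y s = V
  field_simp
  ring

theorem IsRecessive.tendsto_axisDeviation (hy : IsRecessive μ y) (hμ : 0 < μ.im)
    (hb : Tendsto (fun s : ℝ => leadingWave s / axisWave μ s) atTop (𝓝 b₀)) :
    Tendsto (fun s : ℝ => deviation (axisMomentum μ s) (axisCorrection μ s) (axisWave μ s) b₀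
      (y s) (deriv y s)) atTop (𝓝 0) := by
  have hvalue := hy.tendsto_div_axisWave hb
  have hslope := hy.tendsto_slope_div_axisWave hμ hb
  have h := (((hvalue.add hslope).div_const 2).norm.pow 2).add
    ((((hvalue.sub hslope).div_const 2).sub_const b₀).norm.pow 2)
  have hgrowing : (b₀ + -b₀) / 2 = 0 := by ring
  have hdecaying : (b₀ - -b₀) / 2 - b₀ = 0 := by ring
  rwa [hgrowing, hdecaying, norm_zero, zero_pow two_ne_zero, add_zero] at h

end FrameComparison

section UniformEstimate

variable {μ b₀ : ℂ} {y : ℂ → ℂ} {lam s : ℝ}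

theorem sqrt_le_norm_axisMomentum (hμ : 0 < μ.im) (hlam : 0 ≤ lam) (hs : 0 ≤ s)
    (hQ : (s ^ 3 + lam) / 4 ≤ ‖(s : ℂ) ^ 3 + μ‖) : √lam / 2 ≤ ‖axisMomentum μ s‖ := by
  refine abs_le_of_sq_le_sq' ?_ (norm_nonneg _) |>.2
  rw [div_pow, Real.sq_sqrt hlam, ← norm_pow, axisMomentum_sq hμ]
  linarith [pow_nonneg hs 3]

theorem norm_axisDefect_numerator_le (hlam : 0 < lam) (hs : 0 ≤ s)
    (hQ : (s ^ 3 + lam) / 4 ≤ ‖(s : ℂ) ^ 3 + μ‖) :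
    ‖3 * s / 2 / ((s : ℂ) ^ 3 + μ) - 45 * s ^ 4 / 16 / ((s : ℂ) ^ 3 + μ) ^ 2‖ ≤
      54 * (s / (s ^ 3 + lam)) := by
  set Q := (s : ℂ) ^ 3 + μ
  set D := s ^ 3 + lam
  have hD : 0 < D := by positivity
  have hQ0 : 0 < ‖Q‖ := by linarith
  have hcube : s ^ 3 ≤ D := le_add_of_nonneg_right hlam.le
  have hfirst : ‖3 * (s : ℂ) / 2 / Q‖ ≤ 6 * (s / D) := by
    rw [norm_div, norm_div, norm_mul, Complex.norm_of_nonneg hs, Complex.norm_ofNat,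
      Complex.norm_ofNat, mul_div_assoc', div_le_div_iff₀ hQ0 hD]
    nlinarith
  have hsecond : ‖45 * (s : ℂ) ^ 4 / 16 / Q ^ 2‖ ≤ 48 * (s / D) := by
    have hQ2 : s * (D / 4) ^ 2 ≤ s * ‖Q‖ ^ 2 := by gcongr
    have hD2 : s * (s ^ 3 * D) ≤ s * (D * D) := by gcongr
    have : 0 ≤ s * (D * D) := by positivity
    rw [norm_div, norm_div, norm_mul, norm_pow, norm_pow, Complex.norm_of_nonneg hs,
      Complex.norm_ofNat, Complex.norm_ofNat, mul_div_assoc', div_le_div_iff₀ (by positivity) hD]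
    nlinarith
  linarith [norm_sub_le (3 * (s : ℂ) / 2 / Q) (45 * (s : ℂ) ^ 4 / 16 / Q ^ 2)]

theorem norm_axisDefect_le (hμ : 0 < μ.im) (hlam : 1 ≤ lam) (hs : 0 ≤ s)
    (hQ : (s ^ 3 + lam) / 4 ≤ ‖(s : ℂ) ^ 3 + μ‖) :
    ‖(s ^ 3 + μ - axisMomentum μ s ^ 2 +
      (3 * s / (2 * (s ^ 3 + μ)) - 9 * s ^ 4 / (4 * (s ^ 3 + μ) ^ 2)) -
      axisCorrection μ s ^ 2) / axisMomentum μ s‖ ≤ 216 / √lam * (1 / (1 + s ^ 2)) := by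
  have hlam0 : 0 < lam := by linarith
  have hcube := cube_add_ne_zero hμ s
  have hnumerator : s ^ 3 + μ - axisMomentum μ s ^ 2 +
      (3 * s / (2 * (s ^ 3 + μ)) - 9 * s ^ 4 / (4 * (s ^ 3 + μ) ^ 2)) - axisCorrection μ s ^ 2 =
      3 * s / 2 / (s ^ 3 + μ) - 45 * s ^ 4 / 16 / (s ^ 3 + μ) ^ 2 := by
    rw [axisMomentum_sq hμ, axisCorrection]
    field_simp
    ring
  have hdecay : s / (s ^ 3 + lam) ≤ 2 * (1 / (1 + s ^ 2)) := by
    rw [mul_one_div, div_le_div_iff₀ (by positivity) (by positivity)]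
    nlinarith [sq_nonneg (s - 1)]
  rw [hnumerator, norm_div]
  calc _ ≤ 54 * (s / (s ^ 3 + lam)) / (√lam / 2) :=
        div_le_div₀ (by positivity) (norm_axisDefect_numerator_le hlam0 hs hQ) (by positivity)
          (sqrt_le_norm_axisMomentum hμ hlam0.le hs hQ)
    _ ≤ 54 * (2 * (1 / (1 + s ^ 2))) / (√lam / 2) := by gcongr
    _ = 216 / √lam * (1 / (1 + s ^ 2)) := by ring

theorem IsSolution.axisDeviation_zero_le (hy : IsSolution μ y) (hμ : 0 < μ.im) (hlam : 1 ≤ lam)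
    (hQ : ∀ s : ℝ, 0 ≤ s → (s ^ 3 + lam) / 4 ≤ ‖(s : ℂ) ^ 3 + μ‖) {R : ℝ} (hR : 0 ≤ R) (b₀ : ℂ) :
    deviation (axisMomentum μ 0) (axisCorrection μ 0) (axisWave μ 0) b₀ (y 0) (deriv y 0) +
      ‖b₀‖ ^ 2 / 6 ≤ (deviation (axisMomentum μ R) (axisCorrection μ R) (axisWave μ R) b₀
        (y R) (deriv y R) + ‖b₀‖ ^ 2 / 6) * Real.exp (1296 / √lam) := by
  have harctan : Real.arctan R ≤ 2 := by
    linarith [Real.arctan_lt_pi_div_two R, Real.pi_le_four]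
  have h := hy.deviation_le_mul_exp hR (X := 1296 / √lam) (γ := fun t => (t : ℂ))
    (v := fun _ => 1)
    (κ := fun t => 108 / √lam * (1 / (1 + t ^ 2))) (K := fun t => 108 / √lam * Real.arctan t)
    (fun t _ => ofRealCLM.hasDerivAt) (fun t _ => isWKBFrameAt_axis hμ t) (fun t _ => ?_)
    (fun t ht => ?_) (fun t _ => (Real.hasDerivAt_arctan t).const_mul _) ?_ b₀
  · simpa only [ofReal_zero] using h
  · rw [mul_one]
    exact re_upperSqrt_nonneg _
  · rw [mul_one]
    exact (norm_axisDefect_le hμ hlam ht.1 (hQ t ht.1)).trans_eq (by ring)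
  · calc 6 * (108 / √lam * Real.arctan R - 108 / √lam * Real.arctan 0)
        = 648 / √lam * Real.arctan R := by rw [Real.arctan_zero]; ring
      _ ≤ 648 / √lam * 2 := by gcongr
      _ = 1296 / √lam := by ring

theorem IsRecessive.norm_div_axisWave_zero_sub_le (hy : IsRecessive μ y) (hμ : 0 < μ.im)
    (hlam : 1 ≤ lam) (hQ : ∀ s : ℝ, 0 ≤ s → (s ^ 3 + lam) / 4 ≤ ‖(s : ℂ) ^ 3 + μ‖)
    (hb : Tendsto (fun s : ℝ => leadingWave s / axisWave μ s) atTop (𝓝 b₀)) :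
    ‖y 0 / axisWave μ 0 - b₀‖ ^ 2 ≤ ‖b₀‖ ^ 2 * ((Real.exp (1296 / √lam) - 1) / 3) := by
  have hlim := ((hy.tendsto_axisDeviation hμ hb).add_const (‖b₀‖ ^ 2 / 6)).mul_const
    (Real.exp (1296 / √lam))
  have hdev := ge_of_tendsto hlim ((eventually_ge_atTop 0).mono fun R hR =>
    hy.axisDeviation_zero_le hμ hlam hQ hR b₀)
  rw [deviation] at hdev
  set α := growingAmplitude (axisMomentum μ 0) (axisCorrection μ 0) (axisWave μ 0) (y 0) (deriv y 0)
    with hα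
  set β := decayingAmplitude (axisMomentum μ 0) (axisCorrection μ 0) (axisWave μ 0) (y 0)
    (deriv y 0) with hβ
  have hsum : y 0 / axisWave μ 0 - b₀ = α + (β - b₀) := by
    rw [hα, hβ, growingAmplitude, decayingAmplitude]
    ring
  rw [hsum]
  calc ‖α + (β - b₀)‖ ^ 2 ≤ (‖α‖ + ‖β - b₀‖) ^ 2 := by gcongr; exact norm_add_le _ _
    _ ≤ 2 * (‖α‖ ^ 2 + ‖β - b₀‖ ^ 2) := add_sq_le
    _ ≤ _ := by linarith

theorem neg_seven_eighths_le_cos_four_pi_div_five : -(7 / 8) ≤ Real.cos (4 * Real.pi / 5) := by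
  rw [show 4 * Real.pi / 5 = Real.pi - Real.pi / 5 by ring, Real.cos_pi_sub, Real.cos_pi_div_five]
  have : √5 ≤ 5 / 2 := Real.sqrt_le_iff.2 (by norm_num)
  linarith

theorem cube_add_div_four_le_norm (hlam : 0 ≤ lam) (hs : 0 ≤ s) :
    (s ^ 3 + lam) / 4 ≤ ‖(s : ℂ) ^ 3 + lam * cis (4 * Real.pi / 5)‖ := by
  refine abs_le_of_sq_le_sq' ?_ (norm_nonneg _) |>.2
  have hs3 : 0 ≤ s ^ 3 := pow_nonneg hs 3
  rw [← normSq_eq_norm_sq, normSq_apply, add_re, add_im, ← ofReal_pow, re_ofReal_mul,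
    im_ofReal_mul, ofReal_re, ofReal_im, cis_im, cis, exp_ofReal_mul_I_re]
  have hcos := mul_le_mul_of_nonneg_left neg_seven_eighths_le_cos_four_pi_div_five
    (mul_nonneg hs3 hlam)
  have hsq : (s ^ 3 + lam * Real.cos (4 * Real.pi / 5)) *
      (s ^ 3 + lam * Real.cos (4 * Real.pi / 5)) +
      (0 + lam * Real.sin (4 * Real.pi / 5)) * (0 + lam * Real.sin (4 * Real.pi / 5)) =
      (s ^ 3) ^ 2 + 2 * (s ^ 3 * lam * Real.cos (4 * Real.pi / 5)) + lam ^ 2 := by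
    linear_combination lam ^ 2 * Real.sin_sq_add_cos_sq (4 * Real.pi / 5)
  rw [hsq]
  nlinarith [sq_nonneg (s ^ 3 - lam)]

/-- The limit of `leadingWave / axisWave` at `+∞` for `μ = lam e^{4πi/5}`; it converts the
normalization of recessive solutions at infinity into one at the origin. -/
noncomputable def connectionFactor (lam : ℝ) : ℂ :=
  exp (cis (2 * Real.pi / 3) * (Kconst * lam ^ (5 / 6 : ℝ) : ℝ))

theorem axisWave_zero (hlam : 0 < lam) :
    axisWave (lam * cis (4 * Real.pi / 5)) 0 =
      ((lam ^ (1 / 4 : ℝ) : ℝ) * cis (Real.pi / 5))⁻¹ := by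
  have hpi := Real.pi_pos
  rw [axisWave, action, intervalIntegral.integral_same, neg_zero, exp_zero, mul_one, ofReal_zero,
    zero_pow three_ne_zero, zero_add, mul_cis_cpow hlam ⟨by linarith, by linarith⟩, mul_inv,
    ← ofReal_inv, ← Real.rpow_neg hlam.le, ← cis_neg]
  ring_nf

theorem norm_subdominantSolution_zero_mul_sub_le (hlam : 1 ≤ lam) :
    ‖subdominantSolution (cis (4 * Real.pi / 5) * lam) 0 *
        ((lam ^ (1 / 4 : ℝ) : ℝ) * cis (Real.pi / 5)) - connectionFactor lam‖ ^ 2 ≤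
      ‖connectionFactor lam‖ ^ 2 * ((Real.exp (1296 / √lam) - 1) / 3) := by
  have hlam0 : 0 < lam := by linarith
  have hθ : 4 * Real.pi / 5 ∈ Set.Ioo 0 Real.pi :=
    ⟨by positivity, by linarith [Real.pi_pos]⟩
  have hb := tendsto_leadingWave_div_axisWave hlam0 hθ
  rw [show 5 / 6 * (4 * Real.pi / 5) = 2 * Real.pi / 3 by ring, ← connectionFactor] at hb
  rw [mul_comm (cis _) (lam : ℂ), ← div_inv_eq_mul, ← axisWave_zero hlam0]
  exact (isRecessive_subdominantSolution _).norm_div_axisWave_zero_sub_le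
    (im_mul_cis_pos hlam0 hθ) hlam (fun s hs => cube_add_div_four_le_norm hlam0.le hs) hb

end UniformEstimate

/-! ### Zeros of the quantization function -/

section Asymptotics

variable {lam θ : ℝ}

theorem Kconst_pos : 0 < Kconst := by
  have hcont : Continuous fun t : ℝ => √(1 - t ^ 3) := by fun_prop
  refine mul_pos two_pos (intervalIntegral.intervalIntegral_pos_of_pos_on
    (hcont.intervalIntegrable 0 1) (fun t ht => Real.sqrt_pos.2 ?_) one_pos)
  exact sub_pos.2 (pow_lt_one₀ ht.1.le ht.2 three_ne_zero)

theorem connectionFactor_re (lam : ℝ) : (connectionFactor lam).re =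
    ‖connectionFactor lam‖ * Real.cos (√3 / 2 * (Kconst * lam ^ (5 / 6 : ℝ))) := by
  rw [connectionFactor, exp_re, norm_exp, im_mul_ofReal, cis_im,
    show 2 * Real.pi / 3 = Real.pi - Real.pi / 3 by ring, Real.sin_pi_sub, Real.sin_pi_div_three]

theorem mul_quantizationFunction (r lam : ℝ) : r * quantizationFunction lam =
    -(subdominantSolution (cis (4 * Real.pi / 5) * lam) 0 * (r * cis (Real.pi / 5))).re := by
  have hcis : cis (-(3 * Real.pi / 10)) = -I * cis (Real.pi / 5) := by
    rw [show -(3 * Real.pi / 10) = -(Real.pi / 2) + Real.pi / 5 by ring, cis_add, cis]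
    simp [neg_mul, exp_neg, exp_pi_div_two_mul_I]
  rw [quantizationFunction, hcis, ← im_ofReal_mul, ← neg_re, ← I_mul_im]
  congr 1
  ring

theorem exists_sq_mul_quantizationFunction_add_cos_le (hlam : 1 ≤ lam) : ∃ m : ℝ, 0 < m ∧
    (m * quantizationFunction lam + Real.cos (√3 / 2 * (Kconst * lam ^ (5 / 6 : ℝ)))) ^ 2 ≤
      (Real.exp (1296 / √lam) - 1) / 3 := by
  have hF : 0 < ‖connectionFactor lam‖ := norm_pos_iff.2 (exp_ne_zero _)
  refine ⟨lam ^ (1 / 4 : ℝ) / ‖connectionFactor lam‖, div_pos ?_ hF, ?_⟩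
  · exact Real.rpow_pos_of_pos (by linarith) _
  set w := subdominantSolution (cis (4 * Real.pi / 5) * lam) 0 *
    ((lam ^ (1 / 4 : ℝ) : ℝ) * cis (Real.pi / 5)) - connectionFactor lam with hw
  have herror : lam ^ (1 / 4 : ℝ) / ‖connectionFactor lam‖ * quantizationFunction lam +
      Real.cos (√3 / 2 * (Kconst * lam ^ (5 / 6 : ℝ))) = -w.re / ‖connectionFactor lam‖ := by
    rw [eq_div_iff hF.ne', hw, sub_re, connectionFactor_re, neg_sub', ← mul_quantizationFunction]
    field_simp
    ring
  rw [herror, div_pow, neg_sq, div_le_iff₀' (by positivity)]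
  calc w.re ^ 2 ≤ ‖w‖ ^ 2 := sq_le_sq' (neg_le_of_abs_le (abs_re_le_norm w)) (re_le_norm w)
    _ ≤ _ := norm_subdominantSolution_zero_mul_sub_le hlam

/-- The proportionality constant between the phase `θ` and `λ ^ (5/6)`. -/
noncomputable def phaseScale : ℝ := 2 / (√3 * Kconst)

/-- The Bohr–Sommerfeld energy of phase `θ`: the solution `λ` of `√3 / 2 * K * λ ^ (5/6) = θ`. -/
noncomputable def semiclassicalEnergy (θ : ℝ) : ℝ := (phaseScale * θ) ^ (6 / 5 : ℝ)

theorem phaseScale_pos : 0 < phaseScale := by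
  have := Kconst_pos
  unfold phaseScale
  positivity

theorem semiclassicalEnergy_nonneg (hθ : 0 ≤ θ) : 0 ≤ semiclassicalEnergy θ :=
  Real.rpow_nonneg (mul_nonneg phaseScale_pos.le hθ) _

theorem continuous_semiclassicalEnergy : Continuous semiclassicalEnergy :=
  (continuous_const.mul continuous_id).rpow_const fun _ => .inr (by norm_num)

theorem tendsto_semiclassicalEnergy_atTop : Tendsto semiclassicalEnergy atTop atTop :=
  (tendsto_rpow_atTop (by norm_num)).comp (tendsto_id.const_mul_atTop phaseScale_pos)

theorem phase_semiclassicalEnergy (hθ : 0 ≤ θ) :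
    √3 / 2 * (Kconst * semiclassicalEnergy θ ^ (5 / 6 : ℝ)) = θ := by
  have hK := Kconst_pos
  rw [semiclassicalEnergy, ← Real.rpow_mul (mul_nonneg phaseScale_pos.le hθ),
    show (6 / 5 : ℝ) * (5 / 6) = 1 by norm_num, Real.rpow_one, phaseScale]
  field_simp

theorem sqrt_semiclassicalEnergy (hθ : 0 ≤ θ) :
    √(semiclassicalEnergy θ) = (phaseScale * θ) ^ (3 / 5 : ℝ) := by
  rw [Real.sqrt_eq_rpow, semiclassicalEnergy,
    ← Real.rpow_mul (mul_nonneg phaseScale_pos.le hθ)]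
  norm_num

theorem exp_sub_one_div_three_le {x : ℝ} (h0 : 0 ≤ x) (h1 : x ≤ 1) :
    (Real.exp x - 1) / 3 ≤ 2 / 3 * x := by
  have h := Real.abs_exp_sub_one_le (x := x) (by rwa [abs_of_nonneg h0])
  rw [abs_of_nonneg h0] at h
  linarith [le_abs_self (Real.exp x - 1)]

theorem exists_sq_mul_quantizationFunction_semiclassicalEnergy_add_cos_le (hθ : 0 ≤ θ)
    (hlarge : 1296 ≤ (phaseScale * θ) ^ (3 / 5 : ℝ)) : ∃ m : ℝ, 0 < m ∧
    (m * quantizationFunction (semiclassicalEnergy θ) + Real.cos θ) ^ 2 ≤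
      864 / (phaseScale * θ) ^ (3 / 5 : ℝ) := by
  have hsqrt := sqrt_semiclassicalEnergy hθ
  have hE : 1 ≤ semiclassicalEnergy θ := Real.one_le_sqrt.1 (by linarith)
  obtain ⟨m, hm, h⟩ := exists_sq_mul_quantizationFunction_add_cos_le hE
  rw [phase_semiclassicalEnergy hθ, hsqrt] at h
  refine ⟨m, hm, h.trans ?_⟩
  calc _ ≤ 2 / 3 * (1296 / (phaseScale * θ) ^ (3 / 5 : ℝ)) :=
        exp_sub_one_div_three_le (by positivity) (div_le_one_of_le₀ hlarge (by positivity))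
    _ = _ := by ring

end Asymptotics

section SignChange

variable {f : ℝ → ℝ} {σ S m v x d : ℝ}

theorem mul_neg_of_abs_mul_add_lt (hm : 0 < m) (hσ : |σ| = 1) (h : |m * v + σ * S| < S) :
    σ * v < 0 := by
  have hσ2 : σ * σ = 1 := by rw [← abs_mul_abs_self, hσ, one_mul]
  rw [← one_mul |_|, ← hσ, ← abs_mul] at h
  have hprod : m * (σ * v) + S = σ * (m * v + σ * S) := by linear_combination -S * hσ2
  rw [← hprod] at h
  exact neg_of_mul_neg_right (by linarith [(abs_lt.1 h).2]) hm.le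

theorem exists_eq_zero_near_zero_of_cos (hf : Continuous f) (hx : Real.cos x = 0) (hd : 0 ≤ d)
    (h : ∀ θ, |θ - x| ≤ d → ∃ m : ℝ, 0 < m ∧ |m * f θ + Real.cos θ| < Real.sin d) :
    ∃ θ, |θ - x| ≤ d ∧ f θ = 0 := by
  have hsin : |Real.sin x| = 1 := by simp [Real.abs_sin_eq_sqrt_one_sub_cos_sq, hx]
  obtain ⟨m₁, hm₁, hleft⟩ := h (x - d) (by simp [abs_of_nonneg hd])
  obtain ⟨m₂, hm₂, hright⟩ := h (x + d) (by simp [abs_of_nonneg hd])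
  rw [Real.cos_sub, hx, zero_mul, zero_add] at hleft
  rw [Real.cos_add, hx, zero_mul, zero_sub, ← neg_mul] at hright
  have hneg := mul_neg_of_abs_mul_add_lt hm₁ hsin hleft
  have hpos := mul_neg_of_abs_mul_add_lt hm₂ (by rwa [abs_neg]) hright
  obtain ⟨θ, hθ, hzero⟩ := intermediate_value_Icc (by linarith : x - d ≤ x + d)
    (continuous_const.mul hf).continuousOn (f := fun θ => Real.sin x * f θ)
    ⟨hneg.le, by linarith⟩
  have hsin0 : Real.sin x ≠ 0 := fun h0 => by simp [h0] at hsin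
  exact ⟨θ, abs_le.2 ⟨by linarith [hθ.1], by linarith [hθ.2]⟩,
    (mul_eq_zero.1 hzero).resolve_left hsin0⟩

end SignChange

section Levels

variable {x θ : ℝ}

theorem half_le_sin (h0 : 0 ≤ x) (h1 : x ≤ 1) : x / 2 ≤ Real.sin x := by
  have hpi := Real.pi_gt_three
  have h := Real.mul_le_sin h0 (by linarith)
  have : 1 / 2 ≤ 2 / Real.pi := by
    rw [div_le_div_iff₀ two_pos Real.pi_pos]
    linarith [Real.pi_le_four]
  nlinarith

-- The squared error `O(x ^ (-3/5))` is eventually below the square `≍ x ^ (-1/2)` of the window.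
theorem eventually_div_rpow_lt_sq_sin : ∀ᶠ x : ℝ in atTop,
    864 / (phaseScale * (x / 2)) ^ (3 / 5 : ℝ) < Real.sin (x ^ (-(1 / 4) : ℝ)) ^ 2 := by
  have hA := phaseScale_pos
  have hgrow := tendsto_rpow_atTop (show (0 : ℝ) < 1 / 10 by norm_num)
  filter_upwards [hgrow.eventually_gt_atTop (3456 / (phaseScale / 2) ^ (3 / 5 : ℝ)),
    eventually_ge_atTop 1] with x hlarge h1
  have hx : 0 < x := by linarith
  have hd : 0 < x ^ (-(1 / 4) : ℝ) := Real.rpow_pos_of_pos hx _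
  calc 864 / (phaseScale * (x / 2)) ^ (3 / 5 : ℝ)
      = 3456 / (phaseScale / 2) ^ (3 / 5 : ℝ) * (x ^ (-(3 / 5) : ℝ) / 4) := by
        rw [show phaseScale * (x / 2) = phaseScale / 2 * x by ring,
          Real.mul_rpow (by positivity) hx.le, Real.rpow_neg hx.le]
        field_simp
        norm_num
    _ < x ^ (1 / 10 : ℝ) * (x ^ (-(3 / 5) : ℝ) / 4) := by gcongr
    _ = (x ^ (-(1 / 4) : ℝ) / 2) ^ 2 := by
        rw [div_pow, ← Real.rpow_mul_natCast hx.le, mul_div_assoc', ← Real.rpow_add hx]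
        norm_num
    _ ≤ Real.sin (x ^ (-(1 / 4) : ℝ)) ^ 2 := by
        gcongr
        exact half_le_sin hd.le (Real.rpow_le_one_of_one_le_of_nonpos h1 (by norm_num))

theorem half_le_of_abs_sub_le_rpow (hx : 2 ≤ x) (h : |θ - x| ≤ x ^ (-(1 / 4) : ℝ)) :
    x / 2 ≤ θ := by
  have := Real.rpow_le_one_of_one_le_of_nonpos (by linarith : 1 ≤ x)
    (by norm_num : (-(1 / 4) : ℝ) ≤ 0)
  linarith [(abs_le.1 h).1]

theorem eventually_exists_quantizationFunction_eq_zero : ∀ᶠ x : ℝ in atTop, Real.cos x = 0 →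
    ∃ θ, |θ - x| ≤ x ^ (-(1 / 4) : ℝ) ∧ quantizationFunction (semiclassicalEnergy θ) = 0 := by
  have hA := phaseScale_pos
  have hgrow : Tendsto (fun x : ℝ => (phaseScale * (x / 2)) ^ (3 / 5 : ℝ)) atTop atTop :=
    (tendsto_rpow_atTop (by norm_num)).comp
      ((tendsto_id.atTop_div_const two_pos).const_mul_atTop hA)
  filter_upwards [hgrow.eventually_ge_atTop 1296, eventually_div_rpow_lt_sq_sin,
    eventually_ge_atTop 2] with x hlarge hwindow hx hcos
  have hd0 : 0 ≤ x ^ (-(1 / 4) : ℝ) := Real.rpow_nonneg (by linarith) _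
  have hd1 : x ^ (-(1 / 4) : ℝ) ≤ 1 :=
    Real.rpow_le_one_of_one_le_of_nonpos (by linarith) (by norm_num)
  refine exists_eq_zero_near_zero_of_cos
    (continuous_quantizationFunction.comp continuous_semiclassicalEnergy) hcos hd0 fun θ hθ => ?_
  have hle := half_le_of_abs_sub_le_rpow hx hθ
  have hmono : (phaseScale * (x / 2)) ^ (3 / 5 : ℝ) ≤ (phaseScale * θ) ^ (3 / 5 : ℝ) := by gcongr
  obtain ⟨m, hm, h⟩ := exists_sq_mul_quantizationFunction_semiclassicalEnergy_add_cos_le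
    (by linarith) (hlarge.trans hmono)
  refine ⟨m, hm, abs_lt_of_sq_lt_sq ?_ (by linarith [half_le_sin hd0 hd1])⟩
  calc _ ≤ 864 / (phaseScale * θ) ^ (3 / 5 : ℝ) := h
    _ ≤ 864 / (phaseScale * (x / 2)) ^ (3 / 5 : ℝ) := by gcongr
    _ < _ := hwindow

theorem abs_rpow_sub_one_le {u : ℝ} (h0 : 0 < u) (h2 : u ≤ 2) :
    |u ^ (6 / 5 : ℝ) - 1| ≤ 3 * |u - 1| := by
  rcases le_total 1 u with h1 | h1
  · have hone : 1 ≤ u ^ (6 / 5 : ℝ) := Real.one_le_rpow h1 (by norm_num)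
    have hsq : u ^ (6 / 5 : ℝ) ≤ u ^ (2 : ℝ) :=
      Real.rpow_le_rpow_of_exponent_le h1 (by norm_num)
    rw [Real.rpow_two] at hsq
    rw [abs_of_nonneg (by linarith), abs_of_nonneg (by linarith)]
    nlinarith
  · have hone : u ^ (6 / 5 : ℝ) ≤ 1 := Real.rpow_le_one h0.le h1 (by norm_num)
    have hsq : u ^ (2 : ℝ) ≤ u ^ (6 / 5 : ℝ) :=
      Real.rpow_le_rpow_of_exponent_ge h0 h1 (by norm_num)
    rw [Real.rpow_two] at hsq
    rw [abs_of_nonpos (by linarith), abs_of_nonpos (by linarith)]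
    nlinarith

theorem abs_semiclassicalEnergy_sub_le (hx : 2 ≤ x) (h : |θ - x| ≤ x ^ (-(1 / 4) : ℝ)) :
    |semiclassicalEnergy θ - semiclassicalEnergy x| ≤
      3 * phaseScale ^ (6 / 5 : ℝ) * x ^ (-(1 / 20) : ℝ) := by
  have hA := phaseScale_pos
  have hx0 : 0 < x := by linarith
  have hhalf := half_le_of_abs_sub_le_rpow hx h
  have hd1 : x ^ (-(1 / 4) : ℝ) ≤ 1 :=
    Real.rpow_le_one_of_one_le_of_nonpos (by linarith) (by norm_num)
  obtain ⟨u, rfl⟩ : ∃ u, θ = x * u := ⟨θ / x, by field_simp⟩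
  have hu0 : 0 < u := by nlinarith
  have hu2 : u ≤ 2 := by nlinarith [(abs_le.1 h).2]
  have hu1 : |u - 1| ≤ x ^ (-(1 / 4) : ℝ) / x := by
    rwa [le_div_iff₀' hx0, ← abs_of_pos hx0, ← abs_mul, mul_sub_one, abs_of_pos hx0]
  have hdiff : semiclassicalEnergy (x * u) - semiclassicalEnergy x =
      phaseScale ^ (6 / 5 : ℝ) * x ^ (6 / 5 : ℝ) * (u ^ (6 / 5 : ℝ) - 1) := by
    rw [semiclassicalEnergy, semiclassicalEnergy, Real.mul_rpow hA.le (by positivity),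
      Real.mul_rpow hA.le hx0.le, Real.mul_rpow hx0.le hu0.le]
    ring
  rw [hdiff, abs_mul, abs_of_nonneg (by positivity)]
  calc _ ≤ phaseScale ^ (6 / 5 : ℝ) * x ^ (6 / 5 : ℝ) * (3 * (x ^ (-(1 / 4) : ℝ) / x)) := by
        gcongr
        exact (abs_rpow_sub_one_le hu0 hu2).trans (by gcongr)
    _ = 3 * phaseScale ^ (6 / 5 : ℝ) * (x ^ (6 / 5 : ℝ) * (x ^ (-(1 / 4) : ℝ) / x)) := by ring
    _ = _ := by
        rw [← Real.rpow_sub_one hx0.ne', ← Real.rpow_add hx0]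
        norm_num

theorem eventually_exists_eigenvalue_near : ∀ᶠ x : ℝ in atTop, Real.cos x = 0 →
    ∃ lam : ℂ, IsEigenvalueICO lam ∧ ‖lam - semiclassicalEnergy x‖ ≤
      3 * phaseScale ^ (6 / 5 : ℝ) * x ^ (-(1 / 20) : ℝ) := by
  filter_upwards [eventually_exists_quantizationFunction_eq_zero, eventually_ge_atTop 2] with
    x hzero hx hcos
  obtain ⟨θ, hθ, hq⟩ := hzero hcos
  have hhalf := half_le_of_abs_sub_le_rpow hx hθ
  refine ⟨semiclassicalEnergy θ, isEigenvalueICO_of_quantizationFunction_eq_zero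
    (semiclassicalEnergy_nonneg (by linarith)) hq, ?_⟩
  rw [← ofReal_sub, norm_real]
  exact abs_semiclassicalEnergy_sub_le hx hθ

/-- The `n`-th positive zero of the cosine, which is the phase of the `n`-th eigenvalue to leading
order. -/
noncomputable def levelPhase (n : ℕ) : ℝ := (2 * (n : ℝ) + 1) * Real.pi / 2

theorem cos_levelPhase (n : ℕ) : Real.cos (levelPhase n) = 0 :=
  Real.cos_eq_zero_iff.2 ⟨n, by rw [levelPhase]; push_cast; rfl⟩

theorem tendsto_levelPhase : Tendsto levelPhase atTop atTop :=
  tendsto_atTop_mono (fun n => by unfold levelPhase; nlinarith [Real.pi_gt_three])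
    tendsto_natCast_atTop_atTop

theorem semiclassicalEnergy_levelPhase (n : ℕ) : semiclassicalEnergy (levelPhase n) =
    ((2 * (n : ℝ) + 1) * Real.pi / (√3 * Kconst)) ^ ((6 : ℝ) / 5) := by
  rw [semiclassicalEnergy, phaseScale, levelPhase]
  ring_nf

theorem exists_eigenvalue_sequence : ∃ lamSeq : ℕ → ℂ,
    (∀ᶠ n in atTop, IsEigenvalueICO (lamSeq n)) ∧
    Tendsto (fun n => lamSeq n - semiclassicalEnergy (levelPhase n)) atTop (𝓝 0) := by
  obtain ⟨lamSeq, hlamSeq⟩ := skolem.1 ((tendsto_levelPhase.eventually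
    eventually_exists_eigenvalue_near).mono fun n h => h (cos_levelPhase n))
  have hbound := ((tendsto_rpow_neg_atTop (show (0 : ℝ) < 1 / 20 by norm_num)).comp
    tendsto_levelPhase).const_mul (3 * phaseScale ^ (6 / 5 : ℝ))
  rw [mul_zero] at hbound
  exact ⟨lamSeq, hlamSeq.mono fun _ h => h.1,
    squeeze_zero_norm' (hlamSeq.mono fun _ h => h.2) hbound⟩

end Levels

theorem infinite_of_tendsto_sub_of_tendsto_norm {E : Type*} [SeminormedAddCommGroup E] {s : Set E}
    {u v : ℕ → E} (hu : ∀ᶠ n in atTop, u n ∈ s) (huv : Tendsto (fun n => u n - v n) atTop (𝓝 0))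
    (hv : Tendsto (fun n => ‖v n‖) atTop atTop) : s.Infinite := by
  have hunorm : Tendsto (fun n => ‖u n‖) atTop atTop := by
    refine tendsto_atTop_mono (fun n => ?_) (hv.atTop_add huv.norm.neg)
    have := norm_sub_norm_le (v n) (u n)
    rw [norm_sub_rev] at this
    linarith
  intro hfin
  obtain ⟨M, hM⟩ := hfin.isBounded.exists_norm_le
  obtain ⟨n, hn, hlarge⟩ := (hu.and (hunorm.eventually_gt_atTop M)).exists
  exact (hM _ hn).not_gt hlarge

end CubicOscillator

/-- There are infinitely many eigenvalues, and they obey the semiclassical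
asymptotics `λₙ = ((2n+1)π/(√3 K))^{6/5} + o(1)`. -/
theorem eigenvalues_infinite_with_asymptotics :
    {lam : ℂ | IsEigenvalueICO lam}.Infinite ∧
    ∃ N : ℕ, ∃ lamSeq : ℕ → ℂ,
      (∀ n : ℕ, N ≤ n → IsEigenvalueICO (lamSeq n)) ∧
      Tendsto (fun n : ℕ =>
          lamSeq n -
            ((((2 * (n : ℝ) + 1) * Real.pi / (Real.sqrt 3 * Kconst)) ^ ((6 : ℝ) / 5) : ℝ) : ℂ))
        atTop (nhds 0) := by
  obtain ⟨lamSeq, heigenvalue, hlim⟩ := CubicOscillator.exists_eigenvalue_sequence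
  obtain ⟨N, hN⟩ := eventually_atTop.1 heigenvalue
  have hlevels : Tendsto (fun n => ‖(CubicOscillator.semiclassicalEnergy
      (CubicOscillator.levelPhase n) : ℂ)‖) atTop atTop := by
    simp only [Complex.norm_real]
    exact tendsto_norm_atTop_atTop.comp (CubicOscillator.tendsto_semiclassicalEnergy_atTop.comp
      CubicOscillator.tendsto_levelPhase)
  refine ⟨CubicOscillator.infinite_of_tendsto_sub_of_tendsto_norm heigenvalue hlim hlevels,
    N, lamSeq, hN, ?_⟩
  simpa only [CubicOscillator.semiclassicalEnergy_levelPhase] using hlim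
end

section
/- There exists a constant C > 0 such that for every smooth compactly supported function ψ : ℝ → ℂ one has ∫_ℝ |−ψ''(x) + i·x³·ψ(x)|² dx ≥ (1/2)·∫_ℝ |ψ''(x)|² dx + (1/2)·∫_ℝ |x³·ψ(x)|² dx − C·∫_ℝ |ψ(x)|² dx. -/
open MeasureTheory

/-!
Put `V x = x³`. Expanding the square, the cross term of `‖-ψ'' + iVψ‖²` is `-2 ∫ Im ⟪Vψ, ψ''⟫`.
One integration by parts turns it into `2 ∫ Im ⟪V'ψ, ψ'⟫`, because the other contribution
`V Im ⟪ψ', ψ'⟫` vanishes pointwise. So the cross term is at least `-‖V'ψ‖² - ‖ψ'‖²`. Here `‖ψ'‖²`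
is controlled by a small multiple of `‖ψ''‖²` plus a multiple of `‖ψ‖²`, again by integration by
parts, and `‖V'ψ‖²` in the same way by `‖Vψ‖²` and `‖ψ‖²`, since `V'` grows more slowly than `V`.
-/

section RCLike

variable {𝕜 E : Type*} [RCLike 𝕜] [NormedAddCommGroup E] [InnerProductSpace 𝕜 E]

theorem integrable_inner_of_memLp {α : Type*} [MeasurableSpace α] {μ : Measure α} {f g : α → E}
    (hf : MemLp f 2 μ) (hg : MemLp g 2 μ) : Integrable (fun x ↦ inner 𝕜 (f x) (g x)) μ :=
  (hf.norm.integrable_mul hg.norm).mono' (hf.1.inner hg.1) <|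
    .of_forall fun _ ↦ norm_inner_le_norm _ _

theorem integral_re_inner_hasDerivAt_eq_neg [NormedSpace ℝ E] {u v u' v' : ℝ → E}
    (hu : ∀ x, HasDerivAt u (u' x) x) (hv : ∀ x, HasDerivAt v (v' x) x)
    (huv' : Integrable fun x ↦ RCLike.re (inner 𝕜 (u x) (v' x)))
    (hu'v : Integrable fun x ↦ RCLike.re (inner 𝕜 (u' x) (v x)))
    (huv : Integrable fun x ↦ RCLike.re (inner 𝕜 (u x) (v x))) :
    ∫ x, RCLike.re (inner 𝕜 (u x) (v' x)) = -∫ x, RCLike.re (inner 𝕜 (u' x) (v x)) := by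
  have hderiv (x : ℝ) : HasDerivAt (fun x ↦ RCLike.re (inner 𝕜 (u x) (v x)))
      (RCLike.re (inner 𝕜 (u x) (v' x)) + RCLike.re (inner 𝕜 (u' x) (v x))) x := by
    rw [← map_add]
    exact RCLike.reCLM.hasFDerivAt.comp_hasDerivAt x ((hu x).inner 𝕜 (hv x))
  rw [eq_neg_iff_add_eq_zero, ← integral_add huv' hu'v]
  exact integral_eq_zero_of_hasDerivAt_of_integrable hderiv (huv'.add hu'v) huv

end RCLike

theorem mul_le_mul_sq_add_div_mul_sq (a b : ℝ) {ε : ℝ} (hε : 0 < ε) :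
    a * b ≤ ε * b ^ 2 + 1 / (4 * ε) * a ^ 2 := by
  have square : ε * b ^ 2 + 1 / (4 * ε) * a ^ 2 - a * b = (2 * ε * b - a) ^ 2 / (4 * ε) := by
    field_simp
    ring
  exact sub_nonneg.1 (square ▸ by positivity)

theorem integral_norm_deriv_sq_le (𝕜 : Type*) {E : Type*} [RCLike 𝕜] [NormedAddCommGroup E]
    [InnerProductSpace 𝕜 E] [NormedSpace ℝ E] {ψ : ℝ → E} (hψ : Differentiable ℝ ψ)
    (hψ' : Differentiable ℝ (deriv ψ)) (h₀ : MemLp ψ 2) (h₁ : MemLp (deriv ψ) 2)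
    (h₂ : MemLp (deriv (deriv ψ)) 2) {ε : ℝ} (hε : 0 < ε) :
    ∫ x, ‖deriv ψ x‖ ^ 2 ≤
      ε * (∫ x, ‖deriv (deriv ψ) x‖ ^ 2) + 1 / (4 * ε) * ∫ x, ‖ψ x‖ ^ 2 := by
  have i₀ := (h₀.integrable_norm_pow two_ne_zero).const_mul (1 / (4 * ε))
  have i₂ := (h₂.integrable_norm_pow two_ne_zero).const_mul ε
  have i₀₂ := (integrable_inner_of_memLp (𝕜 := 𝕜) h₀ h₂).re
  have by_parts := integral_re_inner_hasDerivAt_eq_neg (𝕜 := 𝕜)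
    (fun x ↦ (hψ x).hasDerivAt) (fun x ↦ (hψ' x).hasDerivAt) i₀₂
    (integrable_inner_of_memLp h₁ h₁).re (integrable_inner_of_memLp h₀ h₁).re
  have pointwise (x : ℝ) : -RCLike.re (inner 𝕜 (ψ x) (deriv (deriv ψ) x)) ≤
      ε * ‖deriv (deriv ψ) x‖ ^ 2 + 1 / (4 * ε) * ‖ψ x‖ ^ 2 :=
    calc _ ≤ ‖ψ x‖ * ‖deriv (deriv ψ) x‖ :=
          (neg_le_abs _).trans ((RCLike.abs_re_le_norm _).trans (norm_inner_le_norm _ _))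
      _ ≤ _ := mul_le_mul_sq_add_div_mul_sq _ _ hε
  calc ∫ x, ‖deriv ψ x‖ ^ 2
      = ∫ x, -RCLike.re (inner 𝕜 (ψ x) (deriv (deriv ψ) x)) := by
        simp only [integral_neg, by_parts, neg_neg, inner_self_eq_norm_sq]
    _ ≤ ∫ x, (ε * ‖deriv (deriv ψ) x‖ ^ 2 + 1 / (4 * ε) * ‖ψ x‖ ^ 2) :=
        integral_mono i₀₂.neg (i₂.add i₀) pointwise
    _ = _ := by rw [integral_add i₂ i₀, integral_const_mul, integral_const_mul]

section Smul

variable {E : Type*} [NormedAddCommGroup E] [NormedSpace ℝ E]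

theorem norm_smul_sq_le_of_sq_le {v w a b : ℝ} (h : w ^ 2 ≤ a * v ^ 2 + b) (y : E) :
    ‖w • y‖ ^ 2 ≤ a * ‖v • y‖ ^ 2 + b * ‖y‖ ^ 2 := by
  simp only [norm_smul, mul_pow, Real.norm_eq_abs, sq_abs, ← mul_assoc, ← add_mul]
  gcongr

variable {α : Type*} [MeasurableSpace α] {μ : Measure α} {V W : α → ℝ} {ψ : α → E} {a b : ℝ}

theorem memLp_two_smul_of_sq_le (hW : AEStronglyMeasurable W μ)
    (hWV : ∀ x, W x ^ 2 ≤ a * V x ^ 2 + b) (hψ : MemLp ψ 2 μ)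
    (hVψ : MemLp (fun x ↦ V x • ψ x) 2 μ) : MemLp (fun x ↦ W x • ψ x) 2 μ := by
  have hWψ : AEStronglyMeasurable (fun x ↦ W x • ψ x) μ := hW.smul hψ.1
  refine (memLp_two_iff_integrable_sq_norm hWψ).2 <|
    (((hVψ.integrable_norm_pow two_ne_zero).const_mul a).fun_add
      ((hψ.integrable_norm_pow two_ne_zero).const_mul b)).mono' (hWψ.norm.pow 2) <|
        .of_forall fun x ↦ ?_
  simpa only [norm_pow, norm_norm] using norm_smul_sq_le_of_sq_le (hWV x) (ψ x)

theorem integral_norm_smul_sq_le_of_sq_le (hW : AEStronglyMeasurable W μ)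
    (hWV : ∀ x, W x ^ 2 ≤ a * V x ^ 2 + b) (hψ : MemLp ψ 2 μ)
    (hVψ : MemLp (fun x ↦ V x • ψ x) 2 μ) :
    ∫ x, ‖W x • ψ x‖ ^ 2 ∂μ ≤ a * (∫ x, ‖V x • ψ x‖ ^ 2 ∂μ) + b * ∫ x, ‖ψ x‖ ^ 2 ∂μ := by
  have iψ := (hψ.integrable_norm_pow two_ne_zero).const_mul b
  have iVψ := (hVψ.integrable_norm_pow two_ne_zero).const_mul a
  have iWψ := (memLp_two_smul_of_sq_le hW hWV hψ hVψ).integrable_norm_pow two_ne_zero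
  rw [← integral_const_mul, ← integral_const_mul, ← integral_add iVψ iψ]
  exact integral_mono iWψ (iVψ.add iψ) fun x ↦ norm_smul_sq_le_of_sq_le (hWV x) (ψ x)

end Smul

section Complex

variable {E : Type*} [NormedAddCommGroup E] [InnerProductSpace ℂ E]

theorem re_inner_I_smul_left (u v : E) : (inner ℂ (Complex.I • u) v).re = (inner ℂ u v).im := by
  simp

theorem norm_neg_add_I_smul_sq (u v : E) :
    ‖-u + Complex.I • v‖ ^ 2 = ‖u‖ ^ 2 + ‖v‖ ^ 2 - 2 * (inner ℂ v u).im := by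
  rw [neg_add_eq_sub, norm_sub_sq (𝕜 := ℂ), RCLike.re_eq_complex_re, re_inner_I_smul_left,
    norm_smul, Complex.norm_I]
  ring

theorem neg_norm_sq_sub_norm_sq_le_im_inner (u v : E) :
    -‖u‖ ^ 2 - ‖v‖ ^ 2 ≤ 2 * (inner ℂ u v).im := by
  linarith [neg_le_of_abs_le ((Complex.abs_im_le_norm _).trans (norm_inner_le_norm (𝕜 := ℂ) u v)),
    two_mul_le_add_sq ‖u‖ ‖v‖]

theorem neg_integral_sub_integral_le_integral_im_inner {α : Type*} [MeasurableSpace α]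
    {μ : Measure α} {f g : α → E} (hf : MemLp f 2 μ) (hg : MemLp g 2 μ) :
    -(∫ x, ‖f x‖ ^ 2 ∂μ) - ∫ x, ‖g x‖ ^ 2 ∂μ ≤ 2 * ∫ x, (inner ℂ (f x) (g x)).im ∂μ := by
  have iF := (hf.integrable_norm_pow two_ne_zero).fun_neg
  have iG := hg.integrable_norm_pow two_ne_zero
  rw [← integral_neg, ← integral_sub iF iG, ← integral_const_mul]
  exact integral_mono (iF.sub iG) ((integrable_inner_of_memLp (𝕜 := ℂ) hf hg).im.const_mul 2)
    fun x ↦ neg_norm_sq_sub_norm_sq_le_im_inner (f x) (g x)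

variable {V : ℝ → ℝ} {ψ : ℝ → E}

theorem integral_im_inner_smul_deriv_deriv (hV : Differentiable ℝ V)
    (hψ : Differentiable ℝ ψ) (hψ' : Differentiable ℝ (deriv ψ))
    (h₁ : MemLp (deriv ψ) 2) (h₂ : MemLp (deriv (deriv ψ)) 2)
    (hVψ : MemLp (fun x ↦ V x • ψ x) 2) (hV'ψ : MemLp (fun x ↦ deriv V x • ψ x) 2) :
    ∫ x, (inner ℂ (V x • ψ x) (deriv (deriv ψ) x)).im =
      -∫ x, (inner ℂ (deriv V x • ψ x) (deriv ψ x)).im := by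
  have hderiv (x : ℝ) : HasDerivAt (fun x ↦ Complex.I • V x • ψ x)
      (Complex.I • (V x • deriv ψ x + deriv V x • ψ x)) x :=
    ((hV x).hasDerivAt.smul (hψ x).hasDerivAt).const_smul Complex.I
  have cancel (x : ℝ) : (inner ℂ (V x • deriv ψ x + deriv V x • ψ x) (deriv ψ x)).im =
      (inner ℂ (deriv V x • ψ x) (deriv ψ x)).im := by
    have real : (inner ℂ (V x • deriv ψ x) (deriv ψ x)).im = 0 := by
      rw [inner_smul_left_eq_smul, Complex.smul_im, ← RCLike.im_eq_complex_im, inner_self_im,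
        smul_zero]
    rw [inner_add_left, Complex.add_im, real, zero_add]
  have by_parts := integral_re_inner_hasDerivAt_eq_neg (𝕜 := ℂ) hderiv
    (fun x ↦ (hψ' x).hasDerivAt)
  simp only [RCLike.re_eq_complex_re, re_inner_I_smul_left, cancel] at by_parts
  exact by_parts (integrable_inner_of_memLp (𝕜 := ℂ) hVψ h₂).im
    (integrable_inner_of_memLp (𝕜 := ℂ) hV'ψ h₁).im (integrable_inner_of_memLp (𝕜 := ℂ) hVψ h₁).im

theorem integral_norm_neg_deriv_deriv_add_I_smul_sq (hV : Differentiable ℝ V)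
    (hψ : Differentiable ℝ ψ) (hψ' : Differentiable ℝ (deriv ψ))
    (h₁ : MemLp (deriv ψ) 2) (h₂ : MemLp (deriv (deriv ψ)) 2)
    (hVψ : MemLp (fun x ↦ V x • ψ x) 2) (hV'ψ : MemLp (fun x ↦ deriv V x • ψ x) 2) :
    ∫ x, ‖-deriv (deriv ψ) x + Complex.I • V x • ψ x‖ ^ 2 =
      (∫ x, ‖deriv (deriv ψ) x‖ ^ 2) + (∫ x, ‖V x • ψ x‖ ^ 2) +
        2 * ∫ x, (inner ℂ (deriv V x • ψ x) (deriv ψ x)).im := by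
  have i₂ := h₂.integrable_norm_pow two_ne_zero
  have iVψ := hVψ.integrable_norm_pow two_ne_zero
  have i_cross : Integrable fun x ↦ 2 * (inner ℂ (V x • ψ x) (deriv (deriv ψ) x)).im :=
    (integrable_inner_of_memLp (𝕜 := ℂ) hVψ h₂).im.const_mul 2
  simp only [norm_neg_add_I_smul_sq]
  rw [integral_sub (i₂.fun_add iVψ) i_cross, integral_add i₂ iVψ, integral_const_mul,
    integral_im_inner_smul_deriv_deriv hV hψ hψ' h₁ h₂ hVψ hV'ψ]
  ring

theorem norm_inequality_general {ε K : ℝ} (hε : 0 < ε) (hV : Differentiable ℝ V)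
    (hV' : ∀ x, deriv V x ^ 2 ≤ ε * V x ^ 2 + K)
    (hψ : Differentiable ℝ ψ) (hψ' : Differentiable ℝ (deriv ψ))
    (h₀ : MemLp ψ 2) (h₁ : MemLp (deriv ψ) 2) (h₂ : MemLp (deriv (deriv ψ)) 2)
    (hVψ : MemLp (fun x ↦ V x • ψ x) 2) :
    (∫ x, ‖-deriv (deriv ψ) x + Complex.I • V x • ψ x‖ ^ 2) ≥
      (1 - ε) * (∫ x, ‖deriv (deriv ψ) x‖ ^ 2) + (1 - ε) * (∫ x, ‖V x • ψ x‖ ^ 2) -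
        (K + 1 / (4 * ε)) * ∫ x, ‖ψ x‖ ^ 2 := by
  have hV'_meas := aestronglyMeasurable_deriv V volume
  have hV'ψ := memLp_two_smul_of_sq_le hV'_meas hV' h₀ hVψ
  have expansion := integral_norm_neg_deriv_deriv_add_I_smul_sq hV hψ hψ' h₁ h₂ hVψ hV'ψ
  have cross_term := neg_integral_sub_integral_le_integral_im_inner hV'ψ h₁
  have potential := integral_norm_smul_sq_le_of_sq_le hV'_meas hV' h₀ hVψ
  have kinetic := integral_norm_deriv_sq_le ℂ hψ hψ' h₀ h₁ h₂ hε
  linarith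

end Complex

theorem deriv_cube_sq_le (x : ℝ) :
    deriv (fun x : ℝ ↦ x ^ 3) x ^ 2 ≤ 1 / 2 * (x ^ 3) ^ 2 + 432 := by
  have factored : 0 ≤ (x ^ 2 - 12) ^ 2 * (x ^ 2 + 6) := by positivity
  rw [deriv_pow_field]
  linear_combination factored / 2

/-- The quadratic estimate `‖(p² + i x³)ψ‖² ≥ ½‖p²ψ‖² + ½‖x³ψ‖² - C‖ψ‖²`
for smooth compactly supported `ψ`. -/
theorem norm_inequality :
    ∃ C > (0 : ℝ), ∀ ψ : ℝ → ℂ, ContDiff ℝ (⊤ : ℕ∞) ψ → HasCompactSupport ψ →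
      (∫ x : ℝ, ‖-(deriv (deriv ψ) x) + Complex.I * (x : ℂ) ^ 3 * ψ x‖ ^ 2) ≥
        (1 / 2) * (∫ x : ℝ, ‖deriv (deriv ψ) x‖ ^ 2) +
        (1 / 2) * (∫ x : ℝ, ‖(x : ℂ) ^ 3 * ψ x‖ ^ 2) -
        C * ∫ x : ℝ, ‖ψ x‖ ^ 2 := by
  refine ⟨432 + 1 / (4 * (1 / 2)), by norm_num, fun ψ hψ hc ↦ ?_⟩
  obtain ⟨d₀, hψ'⟩ := contDiff_infty_iff_deriv.1 hψ
  obtain ⟨d₁, hψ''⟩ := contDiff_infty_iff_deriv.1 hψ'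
  have h := norm_inequality_general one_half_pos (by fun_prop) deriv_cube_sq_le d₀ d₁
    (hψ.continuous.memLp_of_hasCompactSupport hc)
    (hψ'.continuous.memLp_of_hasCompactSupport hc.deriv)
    (hψ''.continuous.memLp_of_hasCompactSupport hc.deriv.deriv)
    (Continuous.memLp_of_hasCompactSupport (by fun_prop) hc.smul_left)
  simpa only [Complex.real_smul, smul_eq_mul, Complex.ofReal_pow, ← mul_assoc, sub_half] using h
end
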